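/- arXiv:1910.04834 — 6 statements merged into one kernel-verified Lean document; each statement's English description precedes it below -/
import Mathlib

section
/- Let n ≥ 1 be an integer and p ∈ (1,∞), and set s = n/p. Then there exists a constant C = C(n,p) such that for every smooth compactly supported function f : ℝⁿ → ℝ and every q ∈ [p,∞), one has ‖f‖_{L^q(ℝⁿ)} ≤ C · ‖f‖_{W^{n/p,p}(ℝⁿ)} · q^{1−1/p}. -/
/-!
The proof represents `f` by a potential and uses a convolution inequality whose constant is explicit
in `q`. Put `s = n / p`, and let `h` be the Sobolev density of `f` (`sobolevDensity`): the sum of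
`|D^j f|` over `j ≤ ⌊s⌋` and, if `s` is not an integer, of the function
`y ↦ (∫ |D^k f(y) - D^k f(z)|^p / |y - z|^{n+σp} dz)^{1/p}` with `k = ⌊s⌋` and `σ = s - k`. By
Minkowski's inequality, the `L^p` norm of `h` is at most the `W^{s,p}` norm of `f`
(`sobolevDensity_lp_le`).

The core is the pointwise bound `|f(x)| ≤ C ∫_{|w|<1} h(x + w) |w|^{s-n} dw` (`pointwise_bound`).
Averaging Taylor's formula over rays gives it with `k` in place of `s` (`taylor_ball`). For
non-integer `s` the missing fractional order comes from comparing `|D^k f|` with its averages over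
balls of dyadic radii: consecutive averages differ by integrals of the Gagliardo density
(`OscControl`, `OscControl.avg_le`), and integrating against `|w|^{k-n}` composes the two Riesz
kernels into one of order `s` (`OscControl.riesz`). If `k = 0` there is no kernel to compose with,
and the averages converge to `|f(x)|` (`OscControl.point`).

Young's inequality (`young`) with `1/r = 1/q + 1 - 1/p` then bounds the `L^q` norm of `f` by
`C ‖h‖_{L^p}` times the `L^r` norm of the kernel `|w|^{s-n}` on the unit ball. As
`(s - n) r = nr/q - n`, the `r`-th power of that norm is `|B| q / r`, where `B` is the unit ball, so
that the norm is at most a constant times `q^{1/r} = q^{1/q} q^{1-1/p}`, and `q^{1/q} ≤ e`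
(`kernel_norm`). All estimates are carried out for `[0, ∞]`-valued integrals, so that integrability
is needed only at the end, to identify them with the Bochner integrals in the definition of the
Sobolev norm.
-/

open MeasureTheory Set
open scoped ContDiff

/-- The integer Sobolev norm `‖f‖_{W^{k,p}} = Σ_{j=0}^{k} ‖D^j f‖_{L^p(ℝⁿ)}`. -/
noncomputable def intSobolevNorm (n : ℕ) (p : ℝ) (k : ℕ)
    (f : EuclideanSpace ℝ (Fin n) → ℝ) : ℝ :=
  ∑ j ∈ Finset.range (k + 1), (∫ x, ‖iteratedFDeriv ℝ j f x‖ ^ p) ^ (1 / p)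

/-- The homogeneous Gagliardo (Slobodeckij) seminorm of order `k + σ`. -/
noncomputable def gagliardoSeminorm (n : ℕ) (p σ : ℝ) (k : ℕ)
    (f : EuclideanSpace ℝ (Fin n) → ℝ) : ℝ :=
  (∫ x, ∫ y, ‖iteratedFDeriv ℝ k f x - iteratedFDeriv ℝ k f y‖ ^ p
      / ‖x - y‖ ^ ((n : ℝ) + σ * p)) ^ (1 / p)

open Classical in
/-- The `W^{s,p}(ℝⁿ)` norm: for integer `s` it is the integer Sobolev norm; for
`s = k + σ` with `σ ∈ (0,1)` one adds the Gagliardo seminorm of order `s`. -/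
noncomputable def sobolevNorm (n : ℕ) (p s : ℝ)
    (f : EuclideanSpace ℝ (Fin n) → ℝ) : ℝ :=
  if (⌊s⌋₊ : ℝ) = s then intSobolevNorm n p ⌊s⌋₊ f
  else intSobolevNorm n p ⌊s⌋₊ f + gagliardoSeminorm n p (s - ⌊s⌋₊) ⌊s⌋₊ f

section
open Metric
open scoped ENNReal

local notation "EE" n => EuclideanSpace ℝ (Fin n)

/-! ### Power weights on balls and their complements -/

/-- Polar coordinates for the lower Lebesgue integral of a radial function. -/
theorem lintegral_polar (n : ℕ) (hn : 1 ≤ n) (f : ℝ → ℝ≥0∞) (hf : Measurable f) :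
    ∫⁻ x : EE n, f ‖x‖ = n * volume (ball (0 : EE n) 1) *
      ∫⁻ t in Ioi (0 : ℝ), ENNReal.ofReal (t ^ (n - 1)) * f t := by
  have : Nonempty (Fin n) := ⟨⟨0, hn⟩⟩
  have hd : Module.finrank ℝ (EE n) = n := by simp
  set μ : Measure (EE n) := volume
  calc ∫⁻ x, f ‖x‖ ∂μ = ∫⁻ x : ({(0 : EE n)}ᶜ : Set (EE n)), f ‖x.1‖ ∂(μ.comap (↑)) := by
        rw [lintegral_subtype_comap (measurableSet_singleton _).compl fun x : EE n ↦ f ‖x‖,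
          restrict_compl_singleton]
    _ = ∫⁻ x, f x.2 ∂μ.toSphere.prod (.volumeIoiPow (Module.finrank ℝ (EE n) - 1)) := by
        simpa using μ.measurePreserving_homeomorphUnitSphereProd.lintegral_comp_emb
          (Homeomorph.measurableEmbedding _)
          (f ∘ Subtype.val ∘ Prod.snd : _ → ℝ≥0∞)
    _ = μ.toSphere univ * ∫⁻ x : Ioi (0 : ℝ), f x ∂.volumeIoiPow (n - 1) := by
        rw [lintegral_prod _ (by fun_prop), hd]
        simp only [lintegral_const, mul_comm]
    _ = _ := by
        rw [μ.toSphere_apply_univ, hd]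
        congr 1
        rw [Measure.volumeIoiPow, lintegral_withDensity_eq_lintegral_mul _ (by fun_prop) (by fun_prop)]
        simp only [Pi.mul_apply]
        rw [lintegral_subtype_comap measurableSet_Ioi
          (fun t : ℝ => ENNReal.ofReal (t ^ (n - 1)) * f t)]

theorem lintegral_Ioo_rpow {a R : ℝ} (ha : 0 < a) (hR : 0 < R) :
    ∫⁻ t in Ioo 0 R, ENNReal.ofReal (t ^ (a - 1)) = ENNReal.ofReal (R ^ a / a) := by
  have hi : IntervalIntegrable (fun t : ℝ => t ^ (a - 1)) volume 0 R :=
    intervalIntegral.intervalIntegrable_rpow' (by linarith)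
  rw [← ofReal_integral_eq_lintegral_ofReal]
  · rw [← integral_Ioc_eq_integral_Ioo, ← intervalIntegral.integral_of_le hR.le,
      integral_rpow (Or.inl (by linarith))]
    congr 1
    simp [Real.zero_rpow ha.ne']
  · exact (intervalIntegrable_iff_integrableOn_Ioo_of_le hR.le).1 hi
  · filter_upwards [self_mem_ae_restrict measurableSet_Ioo] with t ht
    exact Real.rpow_nonneg ht.1.le _

theorem lintegral_Ioi_rpow {b R : ℝ} (hb : 0 < b) (hR : 0 < R) :
    ∫⁻ t in Ioi R, ENNReal.ofReal (t ^ (-b - 1)) = ENNReal.ofReal (R ^ (-b) / b) := by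
  rw [← ofReal_integral_eq_lintegral_ofReal]
  · rw [integral_Ioi_rpow_of_lt (by linarith) hR]
    congr 1
    rw [sub_add_cancel]
    field_simp
  · exact integrableOn_Ioi_rpow_of_lt (by linarith) hR
  · filter_upwards [self_mem_ae_restrict measurableSet_Ioi] with t ht
    exact Real.rpow_nonneg (hR.le.trans (le_of_lt ht)) _

theorem lintegral_radial_rpow (n : ℕ) (hn : 1 ≤ n) (a : ℝ) {S : Set ℝ} (hS : MeasurableSet S) :
    ∫⁻ w in {w : EE n | ‖w‖ ∈ S}, ‖w‖ₑ ^ (a - n)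
      = n * volume (ball (0 : EE n) 1) * ∫⁻ t in S ∩ Ioi 0, ENNReal.ofReal (t ^ (a - 1)) := by
  have hm : MeasurableSet {w : EE n | ‖w‖ ∈ S} := measurable_norm hS
  have h1 := lintegral_polar n hn (S.indicator (fun t => ENNReal.ofReal t ^ (a - n)))
    (Measurable.indicator (by fun_prop) hS)
  have h2 : ∀ w : EE n, {w : EE n | ‖w‖ ∈ S}.indicator (fun w => ‖w‖ₑ ^ (a - n)) w =
      S.indicator (fun t => ENNReal.ofReal t ^ (a - n)) ‖w‖ := by
    intro w
    simp [indicator]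
  rw [← lintegral_indicator hm]
  simp_rw [h2, h1]
  congr 1
  rw [← setLIntegral_indicator hS]
  refine setLIntegral_congr_fun measurableSet_Ioi fun t ht => ?_
  have ht' : 0 < t := ht
  by_cases h : t ∈ S
  · simp only [h, indicator_of_mem]
    rw [ENNReal.ofReal_rpow_of_pos ht', ← ENNReal.ofReal_mul (by positivity),
      ← Real.rpow_natCast, ← Real.rpow_add ht']
    congr 2
    push_cast [Nat.cast_sub hn]
    ring
  · simp [h]

theorem lintegral_ball_rpow (n : ℕ) (hn : 1 ≤ n) {a R : ℝ} (ha : 0 < a) (hR : 0 < R) :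
    ∫⁻ w in ball (0 : EE n) R, ‖w‖ₑ ^ (a - n)
      = n * volume (ball (0 : EE n) 1) * ENNReal.ofReal (R ^ a / a) := by
  have h := lintegral_radial_rpow n hn a (measurableSet_Iio (a := R))
  rw [inter_comm, Ioi_inter_Iio, lintegral_Ioo_rpow ha hR] at h
  rw [← h]
  congr 2
  ext; simp

theorem lintegral_compl_ball_rpow (n : ℕ) (hn : 1 ≤ n) {b R : ℝ} (hb : 0 < b) (hR : 0 < R) :
    ∫⁻ w in (ball (0 : EE n) R)ᶜ, ‖w‖ₑ ^ (-b - n)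
      = n * volume (ball (0 : EE n) 1) * ENNReal.ofReal (R ^ (-b) / b) := by
  have h := lintegral_radial_rpow n hn (-b) (measurableSet_Ici (a := R))
  rw [inter_eq_left.2 (Ici_subset_Ioi.2 hR), setLIntegral_congr Ioi_ae_eq_Ici.symm,
    lintegral_Ioi_rpow hb hR] at h
  rw [← h]
  congr 2
  ext; simp

/-- Rescaling of the unit ball: averages over balls of different radii are all written as integrals
over the unit ball. -/
theorem lintegral_ball_smul (n : ℕ) {t : ℝ} (ht : 0 < t) (G : (EE n) → ℝ≥0∞) :
    ∫⁻ z in ball (0 : EE n) 1, G (t • z) =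
      ENNReal.ofReal t ^ (-(n : ℝ)) * ∫⁻ w in ball (0 : EE n) t, G w := by
  have h := Measure.map_addHaar_smul (volume : Measure (EE n)) ht.ne'
  have he : MeasurableEmbedding (fun z : EE n => t • z) :=
    (Homeomorph.smulOfNeZero t ht.ne').measurableEmbedding
  have h2 := he.lintegral_map (μ := volume) ((ball (0 : EE n) t).indicator G)
  rw [h] at h2
  rw [lintegral_smul_measure, lintegral_indicator measurableSet_ball] at h2
  rw [← lintegral_indicator measurableSet_ball]
  have h3 : ∀ z : EE n, (ball (0 : EE n) 1).indicator (fun z => G (t • z)) z =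
      (ball (0 : EE n) t).indicator G (t • z) := by
    intro z
    simp [indicator, norm_smul, abs_of_pos ht, mul_lt_iff_lt_one_right ht]
  simp_rw [h3, ← h2, smul_eq_mul]
  congr 1
  rw [ENNReal.ofReal_rpow_of_pos ht, abs_of_nonneg (by positivity), Real.rpow_neg ht.le,
    Real.rpow_natCast]
  simp

/-! ### Taylor expansion averaged over rays -/

/-- One step of the fundamental theorem of calculus along the ray from `x` in direction `z`. -/
theorem taylor_step (n : ℕ) {f : (EE n) → ℝ} (hf : ContDiff ℝ ∞ f) (j : ℕ) (x z : EE n)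
    (hz : ‖z‖ ≤ 1) {t : ℝ} (ht : t ≤ 1) :
    ‖iteratedFDeriv ℝ j f (x + t • z)‖ₑ ≤ ‖iteratedFDeriv ℝ j f (x + z)‖ₑ +
      ∫⁻ u in Ioo t 1, ‖iteratedFDeriv ℝ (j + 1) f (x + u • z)‖ₑ := by
  set γ : ℝ → _ := fun u => iteratedFDeriv ℝ j f (x + u • z) with hγ
  have hD : ContDiff ℝ 1 (iteratedFDeriv ℝ j f) :=
    hf.iteratedFDeriv_right (m := 1) (by exact_mod_cast le_top)
  have hc : ContDiff ℝ 1 γ := by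
    have : ContDiff ℝ 1 (fun u : ℝ => x + u • z) := by fun_prop
    exact hD.comp this
  have h := enorm_sub_le_lintegral_deriv_of_contDiffOn_Icc hc.contDiffOn ht
  have h1 : γ 1 = iteratedFDeriv ℝ j f (x + z) := by simp [hγ]
  have h2 : γ t = γ 1 - (γ 1 - γ t) := by simp
  calc ‖γ t‖ₑ ≤ ‖γ 1‖ₑ + ‖γ 1 - γ t‖ₑ := by
        conv_lhs => rw [h2]
        exact enorm_sub_le
    _ ≤ _ := by
      rw [← h1]
      gcongr
      refine h.trans ?_
      rw [setLIntegral_congr Ioo_ae_eq_Icc.symm]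
      refine lintegral_mono fun u => ?_
      have hd : HasDerivAt γ (fderiv ℝ (iteratedFDeriv ℝ j f) (x + u • z) z) u := by
        have h3 : HasDerivAt (fun u : ℝ => x + u • z) z u := by
          simpa using ((hasDerivAt_id u).smul_const z).const_add x
        exact ((hD.differentiable (by simp)) _).hasFDerivAt.comp_hasDerivAt u h3
      rw [hd.deriv, enorm_le_iff_norm_le, ← norm_fderiv_iteratedFDeriv]
      refine (ContinuousLinearMap.le_opNorm _ _).trans ?_
      exact mul_le_of_le_one_right (norm_nonneg _) hz

theorem continuous_iter (n : ℕ) {f : (EE n) → ℝ} (hf : ContDiff ℝ ∞ f) (j : ℕ) :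
    Continuous (iteratedFDeriv ℝ j f) :=
  hf.continuous_iteratedFDeriv (m := j) (by exact_mod_cast le_top)

/-- Taylor's formula along a ray, expanded at its end point `x + z` and with integral remainder.
The factor `1/m!` of the remainder is bounded by `1`. -/
theorem taylor_ray (n : ℕ) {f : (EE n) → ℝ} (hf : ContDiff ℝ ∞ f) (m : ℕ) (x z : EE n)
    (hz : ‖z‖ ≤ 1) :
    ‖f x‖ₑ ≤ ∑ j ∈ Finset.range (m + 1), ‖iteratedFDeriv ℝ j f (x + z)‖ₑ +
      ∫⁻ u in Ioo (0 : ℝ) 1, ENNReal.ofReal u ^ m *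
        ‖iteratedFDeriv ℝ (m + 1) f (x + u • z)‖ₑ := by
  induction m with
  | zero =>
    have h := taylor_step n hf 0 x z hz zero_le_one
    have e : ∀ y, ‖iteratedFDeriv ℝ 0 f y‖ₑ = ‖f y‖ₑ := fun y => by
      rw [← ofReal_norm, norm_iteratedFDeriv_zero, ofReal_norm]
    simpa [e] using h
  | succ m ih =>
    refine ih.trans ?_
    rw [Finset.sum_range_succ _ (m + 1), add_assoc]
    gcongr
    set A := ‖iteratedFDeriv ℝ (m + 1) f (x + z)‖ₑ
    set a : ℝ → ℝ≥0∞ := fun u => ‖iteratedFDeriv ℝ (m + 1 + 1) f (x + u • z)‖ₑ with ha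
    have ham : Measurable a := by
      have := continuous_iter n hf (m + 1 + 1)
      have : Continuous a := by fun_prop
      exact this.measurable
    have hvol : volume (Ioo (0 : ℝ) 1) = 1 := by simp
    calc ∫⁻ t in Ioo (0 : ℝ) 1, ENNReal.ofReal t ^ m * ‖iteratedFDeriv ℝ (m + 1) f (x + t • z)‖ₑ
        ≤ ∫⁻ t in Ioo (0 : ℝ) 1, (A +
            ∫⁻ u in Ioo (0 : ℝ) 1, (Ioi t).indicator (fun u => ENNReal.ofReal u ^ m * a u) u) := by
          refine setLIntegral_mono_ae' measurableSet_Ioo (ae_of_all _ fun t ht => ?_)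
          have h := taylor_step n hf (m + 1) x z hz ht.2.le
          have ht1 : ENNReal.ofReal t ^ m ≤ 1 := pow_le_one' (ENNReal.ofReal_le_one.2 ht.2.le) m
          refine (mul_le_mul_right h _).trans ?_
          rw [mul_add]
          gcongr
          · exact mul_le_of_le_one_left' ht1
          · rw [setLIntegral_indicator measurableSet_Ioi, ← lintegral_const_mul _ ham]
            have : Ioi t ∩ Ioo 0 1 = Ioo t 1 := by
              ext u; simp only [mem_inter_iff, mem_Ioi, mem_Ioo]
              constructor
              · rintro ⟨h1, h2, h3⟩; exact ⟨h1, h3⟩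
              · rintro ⟨h1, h3⟩; exact ⟨h1, ht.1.trans h1, h3⟩
            rw [this]
            refine setLIntegral_mono' measurableSet_Ioo fun u hu => ?_
            gcongr
            exact hu.1.le
      _ = A + ∫⁻ t in Ioo (0 : ℝ) 1, ∫⁻ u in Ioo (0 : ℝ) 1,
            (Ioi t).indicator (fun u => ENNReal.ofReal u ^ m * a u) u := by
          rw [lintegral_add_left measurable_const]; simp
      _ = A + ∫⁻ u in Ioo (0 : ℝ) 1, ∫⁻ t in Ioo (0 : ℝ) 1,
            (Ioi t).indicator (fun u => ENNReal.ofReal u ^ m * a u) u := by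
          rw [lintegral_lintegral_swap]
          refine Measurable.aemeasurable ?_
          have : Function.uncurry (fun t u : ℝ =>
              (Ioi t).indicator (fun u => ENNReal.ofReal u ^ m * a u) u) =
              {q : ℝ × ℝ | q.1 < q.2}.indicator
                (fun q => ENNReal.ofReal q.2 ^ m * a q.2) := by
            ext q; simp [Function.uncurry, indicator]
          rw [this]
          exact Measurable.indicator (by fun_prop) (measurableSet_lt measurable_fst measurable_snd)
      _ ≤ _ := by
          gcongr A + ?_
          refine setLIntegral_mono_ae' measurableSet_Ioo (ae_of_all _ fun u hu => ?_)
          have : ∀ t : ℝ, (Ioi t).indicator (fun u => ENNReal.ofReal u ^ m * a u) u =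
              (Iio u).indicator (fun _ => ENNReal.ofReal u ^ m * a u) t := by
            intro t; simp [indicator]
          simp_rw [this]
          rw [setLIntegral_indicator measurableSet_Iio]
          have : Iio u ∩ Ioo 0 1 = Ioo 0 u := by
            ext t; simp only [mem_inter_iff, mem_Iio, mem_Ioo]
            constructor
            · rintro ⟨h1, h2, h3⟩; exact ⟨h2, h1⟩
            · rintro ⟨h1, h3⟩; exact ⟨h3, h1, h3.trans hu.2⟩
          rw [this, setLIntegral_const, Real.volume_Ioo, sub_zero, pow_succ]
          exact le_of_eq (by ring)

/-- Averaging `taylor_ray` over all directions `z` of the unit ball turns the remainder into the Riesz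
potential `∫ |D^k f(x + w)| |w|^{k-n} dw`. -/
theorem taylor_ball (n : ℕ) {f : (EE n) → ℝ} (hf : ContDiff ℝ ∞ f) (k : ℕ)
    (hk : 1 ≤ k) (hkn : k < n) (x : EE n) :
    volume (ball (0 : EE n) 1) * ‖f x‖ₑ ≤
      (∑ j ∈ Finset.range k, ∫⁻ w in ball (0 : EE n) 1, ‖iteratedFDeriv ℝ j f (x + w)‖ₑ) +
      ENNReal.ofReal (1 / ((n : ℝ) - k)) *
       ∫⁻ w in ball (0 : EE n) 1, ‖iteratedFDeriv ℝ k f (x + w)‖ₑ * ‖w‖ₑ ^ ((k : ℝ) - n) := by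
  obtain ⟨m, rfl⟩ : ∃ m, k = m + 1 := ⟨k - 1, by omega⟩
  set D : ℕ → (EE n) → ℝ≥0∞ := fun j w => ‖iteratedFDeriv ℝ j f (x + w)‖ₑ with hD
  have hDm : ∀ j, Measurable (D j) := fun j => by
    have := continuous_iter n hf j
    have : Continuous (D j) := by fun_prop
    exact this.measurable
  have hd : (0 : ℝ) < (n : ℝ) - ((m + 1 : ℕ) : ℝ) := by
    have : ((m + 1 : ℕ) : ℝ) < n := by exact_mod_cast hkn
    linarith
  calc volume (ball (0 : EE n) 1) * ‖f x‖ₑ = ∫⁻ z in ball (0 : EE n) 1, ‖f x‖ₑ := by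
        rw [setLIntegral_const, mul_comm]
    _ ≤ ∫⁻ z in ball (0 : EE n) 1, (∑ j ∈ Finset.range (m + 1), D j z +
          ∫⁻ u in Ioo (0 : ℝ) 1, ENNReal.ofReal u ^ m * D (m + 1) (u • z)) := by
        refine setLIntegral_mono_ae' measurableSet_ball (ae_of_all _ fun z hz => ?_)
        exact taylor_ray n hf m x z (by simpa using (mem_ball_zero_iff.1 hz).le)
    _ = (∑ j ∈ Finset.range (m + 1), ∫⁻ w in ball (0 : EE n) 1, D j w) +
          ∫⁻ z in ball (0 : EE n) 1,
          ∫⁻ u in Ioo (0 : ℝ) 1, ENNReal.ofReal u ^ m * D (m + 1) (u • z) := by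
        rw [lintegral_add_left (Finset.measurable_fun_sum _ fun j _ => hDm j),
          lintegral_finsetSum _ fun j _ => hDm j]
    _ ≤ _ := by
      gcongr
      -- substitute `w = u z`, then integrate out `u`, which ranges over `(‖w‖, 1)`
      rw [lintegral_lintegral_swap (by have := hDm (m + 1); fun_prop)]
      calc ∫⁻ u in Ioo (0 : ℝ) 1, ∫⁻ z in ball (0 : EE n) 1,
            ENNReal.ofReal u ^ m * D (m + 1) (u • z)
          = ∫⁻ u in Ioo (0 : ℝ) 1, ∫⁻ w in ball (0 : EE n) 1, (ball (0 : EE n) u).indicator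
            (fun w => ENNReal.ofReal (u ^ (((m + 1 : ℕ) : ℝ) - n - 1)) * D (m + 1) w) w := by
            refine setLIntegral_congr_fun measurableSet_Ioo fun u hu => ?_
            have := hDm (m + 1)
            rw [lintegral_const_mul _ (by fun_prop), lintegral_ball_smul n hu.1,
              setLIntegral_indicator measurableSet_ball,
              inter_eq_left.2 (ball_subset_ball hu.2.le), lintegral_const_mul _ this, ← mul_assoc]
            congr 1
            rw [ENNReal.ofReal_rpow_of_pos hu.1, ← ENNReal.rpow_natCast,
              ENNReal.ofReal_rpow_of_pos hu.1, ← ENNReal.ofReal_mul (by have := hu.1; positivity),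
              ← Real.rpow_add hu.1]
            congr 2
            push_cast
            ring
        _ = ∫⁻ w in ball (0 : EE n) 1, ∫⁻ u in Ioo (0 : ℝ) 1, (ball (0 : EE n) u).indicator
            (fun w => ENNReal.ofReal (u ^ (((m + 1 : ℕ) : ℝ) - n - 1)) * D (m + 1) w) w := by
            rw [lintegral_lintegral_swap]
            refine Measurable.aemeasurable ?_
            have : Function.uncurry (fun (u : ℝ) (w : EE n) => (ball (0 : EE n) u).indicator
              (fun w => ENNReal.ofReal (u ^ (((m + 1 : ℕ) : ℝ) - n - 1)) * D (m + 1) w) w) =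
                {q : ℝ × (EE n) | ‖q.2‖ < q.1}.indicator
                  (fun q => ENNReal.ofReal (q.1 ^ (((m + 1 : ℕ) : ℝ) - n - 1)) * D (m + 1) q.2) := by
              ext q; simp [Function.uncurry, indicator]
            rw [this]
            have := hDm (m + 1)
            exact Measurable.indicator (by fun_prop) (measurableSet_lt (by fun_prop) (by fun_prop))
        _ ≤ ∫⁻ w in ball (0 : EE n) 1, ENNReal.ofReal (1 / ((n : ℝ) - ((m + 1 : ℕ) : ℝ))) *
              (D (m + 1) w * ‖w‖ₑ ^ (((m + 1 : ℕ) : ℝ) - n)) := by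
            refine lintegral_mono_ae ?_
            have h0 : ∀ᵐ w : EE n ∂(volume.restrict (ball 0 1)), w ≠ 0 := by
              have : Nonempty (Fin n) := ⟨⟨0, by omega⟩⟩
              refine ae_restrict_of_ae ?_
              simp [ae_iff]
            filter_upwards [h0] with w hw
            have hw' : 0 < ‖w‖ := norm_pos_iff.2 hw
            calc ∫⁻ u in Ioo (0 : ℝ) 1, (ball (0 : EE n) u).indicator
                  (fun w => ENNReal.ofReal (u ^ (((m + 1 : ℕ) : ℝ) - n - 1)) * D (m + 1) w) w
                = ∫⁻ u in Ioo (0 : ℝ) 1, (Ioi ‖w‖).indicator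
                  (fun u => ENNReal.ofReal (u ^ (((m + 1 : ℕ) : ℝ) - n - 1)) * D (m + 1) w) u := by
                  congr 1 with u
                  simp [indicator]
              _ ≤ ∫⁻ u in Ioi ‖w‖, ENNReal.ofReal (u ^ (-((n : ℝ) - ((m + 1 : ℕ) : ℝ)) - 1))
                    * D (m + 1) w := by
                  rw [setLIntegral_indicator measurableSet_Ioi, neg_sub]
                  exact lintegral_mono_set inter_subset_left
              _ = _ := by
                  rw [lintegral_mul_const _ (by fun_prop), lintegral_Ioi_rpow hd hw', neg_sub,
                    ← ofReal_norm w, ENNReal.ofReal_rpow_of_pos hw', div_eq_mul_one_div,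
                    ENNReal.ofReal_mul (by positivity)]
                  ring
        _ = _ := by
            have := hDm (m + 1)
            rw [lintegral_const_mul _ (by fun_prop)]

/-! ### Functions with controlled oscillation -/

theorem ennreal_rpow_anti {a b : ℝ≥0∞} (h : a ≤ b) {c : ℝ} (hc : c ≤ 0) : b ^ c ≤ a ^ c := by
  rw [← ENNReal.inv_le_inv, ← ENNReal.rpow_neg, ← ENNReal.rpow_neg]
  exact ENNReal.rpow_le_rpow h (by linarith)

/-- Composition of two Riesz kernels, the second one truncated below: the parts `|w| < |v|` and
`|w| ≥ |v|` both scale like `|v|^{κ+σ-n}`. The hypothesis `κ + σ < n` makes the integral converge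
at infinity. -/
theorem lintegral_max_rpow_le (n : ℕ) (hn : 1 ≤ n) {κ σ : ℝ} (hκ : 0 < κ) (hκσ : κ + σ < n)
    {v : EE n} (hv : v ≠ 0) :
    ∫⁻ w : EE n, ‖w‖ₑ ^ (κ - n) * max ‖v‖ₑ ‖w‖ₑ ^ (σ - n) ≤
      n * volume (ball (0 : EE n) 1) * (ENNReal.ofReal (1 / κ) + ENNReal.ofReal (1 / (n - κ - σ)))
        * ‖v‖ₑ ^ (κ + σ - n) := by
  have hv' : 0 < ‖v‖ := norm_pos_iff.2 hv
  have hve : ∀ c : ℝ, ‖v‖ₑ ^ c = ENNReal.ofReal (‖v‖ ^ c) := fun c => by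
    rw [← ofReal_norm v, ENNReal.ofReal_rpow_of_pos hv']
  rw [← lintegral_add_compl _ (measurableSet_ball (x := (0 : EE n)) (ε := ‖v‖)), mul_add, add_mul]
  gcongr ?_ + ?_
  · calc ∫⁻ w in ball (0 : EE n) ‖v‖, ‖w‖ₑ ^ (κ - n) * max ‖v‖ₑ ‖w‖ₑ ^ (σ - n)
        = ∫⁻ w in ball (0 : EE n) ‖v‖, ‖w‖ₑ ^ (κ - n) * ‖v‖ₑ ^ (σ - n) := by
          refine setLIntegral_congr_fun measurableSet_ball fun w hw => ?_
          have : ‖w‖ₑ ≤ ‖v‖ₑ := enorm_le_iff_norm_le.2 (mem_ball_zero_iff.1 hw).le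
          simp only [max_eq_left this]
      _ = n * volume (ball (0 : EE n) 1) * (ENNReal.ofReal (‖v‖ ^ κ / κ) * ‖v‖ₑ ^ (σ - n)) := by
          rw [lintegral_mul_const _ (by fun_prop), lintegral_ball_rpow n hn hκ hv', mul_assoc]
      _ ≤ _ := by
          rw [mul_assoc _ _ (_ ^ _)]
          refine mul_le_mul' le_rfl ?_
          rw [hve, hve, ← ENNReal.ofReal_mul (by positivity), ← ENNReal.ofReal_mul (by positivity)]
          apply le_of_eq
          congr 1
          rw [show κ + σ - n = κ + (σ - n) by ring, Real.rpow_add hv']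
          ring
  · have hb : 0 < n - κ - σ := by linarith
    calc ∫⁻ w in (ball (0 : EE n) ‖v‖)ᶜ, ‖w‖ₑ ^ (κ - n) * max ‖v‖ₑ ‖w‖ₑ ^ (σ - n)
        = ∫⁻ w in (ball (0 : EE n) ‖v‖)ᶜ, ‖w‖ₑ ^ (-(n - κ - σ) - n) := by
          refine setLIntegral_congr_fun measurableSet_ball.compl fun w hw => ?_
          have h1 : ‖v‖ ≤ ‖w‖ := by simpa using hw
          have : ‖v‖ₑ ≤ ‖w‖ₑ := enorm_le_iff_norm_le.2 h1
          have hw0 : ‖w‖ₑ ≠ 0 := by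
            have : 0 < ‖w‖ := hv'.trans_le h1
            simpa using norm_pos_iff.1 this
          simp only [max_eq_right this]
          rw [← ENNReal.rpow_add _ _ hw0 enorm_ne_top]
          congr 1
          ring
      _ ≤ _ := by
          rw [lintegral_compl_ball_rpow n hn hb hv', mul_assoc _ _ (_ ^ _)]
          refine mul_le_mul' le_rfl ?_
          rw [hve, ← ENNReal.ofReal_mul (by positivity)]
          apply le_of_eq
          congr 1
          rw [show κ + σ - n = -(n - κ - σ) by ring]
          ring

/-- `g` controls the oscillation of `φ` at order `σ`: for `|u| ≤ ρ`, the value `φ u` exceeds the average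
of `φ` over the ball `B(0, ρ)` by at most a constant times `ρ^σ g(u)`. The inequality is multiplied
by the volume of the unit ball, so that the average becomes an integral over that ball. The centre
is `0`; other centres are reached by translating `φ` and `g`. -/
def OscControl (n : ℕ) (σ : ℝ) (A : ℝ≥0∞) (φ g : (EE n) → ℝ≥0∞) : Prop :=
  ∀ ρ : ℝ, 0 < ρ → ∀ u : EE n, ‖u‖ ≤ ρ →
    volume (ball (0 : EE n) 1) * φ u ≤
      (∫⁻ z in ball (0 : EE n) 1, φ (ρ • z)) + A * ENNReal.ofReal ρ ^ σ * g u

theorem vol_ne_zero (n : ℕ) : volume (ball (0 : EE n) 1) ≠ 0 :=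
  (measure_ball_pos volume 0 one_pos).ne'

theorem vol_ne_top (n : ℕ) : volume (ball (0 : EE n) 1) ≠ ⊤ := measure_ball_lt_top.ne

/-- Comparison of the averages at the radii `r` and `2r`, obtained by integrating the control at radius
`2r` over the ball of radius `r`. -/
theorem OscControl.step {n : ℕ} {σ : ℝ} {A : ℝ≥0∞} {φ g : (EE n) → ℝ≥0∞}
    (hg : Measurable g) (hσ : 0 < σ)
    (h : OscControl n σ A φ g) {r : ℝ} (hr : 0 < r) :
    ∫⁻ z in ball (0 : EE n) 1, φ (r • z) ≤ (∫⁻ z in ball (0 : EE n) 1, φ ((2 * r) • z)) +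
      (volume (ball (0 : EE n) 1))⁻¹ * A * 2 ^ σ * ENNReal.ofReal r ^ (σ - n) *
        ∫⁻ v in ball (0 : EE n) r, g v := by
  set Ω := volume (ball (0 : EE n) 1) with hΩ
  have hΩ0 : Ω ≠ 0 := vol_ne_zero n
  have hΩt : Ω ≠ ⊤ := vol_ne_top n
  have hr0 : ENNReal.ofReal r ≠ 0 := by simpa using hr
  rw [← ENNReal.mul_le_mul_iff_right hΩ0 hΩt]
  calc Ω * ∫⁻ z in ball (0 : EE n) 1, φ (r • z)
      = ∫⁻ z in ball (0 : EE n) 1, Ω * φ (r • z) := (lintegral_const_mul' _ _ hΩt).symm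
    _ ≤ ∫⁻ z in ball (0 : EE n) 1, ((∫⁻ z in ball (0 : EE n) 1, φ ((2 * r) • z)) +
          A * ENNReal.ofReal (2 * r) ^ σ * g (r • z)) := by
        refine setLIntegral_mono_ae' measurableSet_ball (ae_of_all _ fun z hz => ?_)
        refine h (2 * r) (by positivity) (r • z) ?_
        rw [norm_smul, Real.norm_of_nonneg hr.le]
        have : ‖z‖ < 1 := by simpa using hz
        nlinarith
    _ = _ := by
        rw [lintegral_add_left measurable_const, setLIntegral_const,
          lintegral_const_mul _ (by fun_prop), lintegral_ball_smul n hr, mul_add, mul_comm]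
        congr 1
        rw [ENNReal.ofReal_mul zero_le_two, ENNReal.mul_rpow_of_nonneg _ _ hσ.le,
          sub_eq_add_neg σ, ENNReal.rpow_add _ _ hr0 ENNReal.ofReal_ne_top]
        simp only [ENNReal.ofReal_ofNat]
        calc _ = (Ω * Ω⁻¹) * (A * (2 ^ σ * ENNReal.ofReal r ^ σ) *
              (ENNReal.ofReal r ^ (-(n : ℝ)) * ∫⁻ v in ball (0 : EE n) r, g v)) := by
              rw [ENNReal.mul_inv_cancel hΩ0 hΩt, one_mul]
          _ = _ := by ring

/-- Bound on the average at radius `r` obtained by summing `OscControl.step` over dyadic radii. The sum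
of `(2^j r)^{σ-n} 1_{|v| < 2^j r}` is dominated by its first nonzero term, of size
`max(|v|, r)^{σ-n}`; the geometric factor `1 / (1 - 2^{σ-n})` is chosen so that the induction closes. -/
theorem OscControl.avg_le {n : ℕ} {σ : ℝ} {A : ℝ≥0∞} {φ g : (EE n) → ℝ≥0∞}
    (hg : Measurable g) (hσ : 0 < σ) (hσn : σ < n)
    (h : OscControl n σ A φ g) (i : ℕ) : ∀ r : ℝ, (1 / 2) ^ (i + 1) ≤ r → r ≤ 1 →
    ∫⁻ z in ball (0 : EE n) 1, φ (r • z) ≤ 2 ^ n * (∫⁻ z in ball (0 : EE n) 1, φ z) +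
      (volume (ball (0 : EE n) 1))⁻¹ * A * 2 ^ σ * ENNReal.ofReal (1 / (1 - 2 ^ (σ - n))) *
        ∫⁻ v in ball (0 : EE n) 1, g v * max ‖v‖ₑ (ENNReal.ofReal r) ^ (σ - n) := by
  set Ω := volume (ball (0 : EE n) 1) with hΩ
  set A' := Ω⁻¹ * A * 2 ^ σ with hA'
  set τ : ℝ := 2 ^ (σ - n) with hτ
  have hτ1 : τ < 1 := Real.rpow_lt_one_of_one_lt_of_neg one_lt_two (by linarith)
  have hτ0 : 0 < τ := by positivity
  have base : ∀ r : ℝ, 1 / 2 ≤ r → r ≤ 1 → ∫⁻ z in ball (0 : EE n) 1, φ (r • z) ≤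
      2 ^ n * ∫⁻ z in ball (0 : EE n) 1, φ z := by
    intro r hr1 hr2
    have hr : 0 < r := by linarith
    rw [lintegral_ball_smul n hr]
    gcongr
    · rw [ENNReal.ofReal_rpow_of_pos hr, ← ENNReal.ofReal_ofNat 2, ← ENNReal.ofReal_pow zero_le_two]
      apply ENNReal.ofReal_le_ofReal
      rw [Real.rpow_neg hr.le, Real.rpow_natCast, ← inv_pow]
      gcongr
      rw [inv_le_comm₀ hr two_pos]
      linarith
  induction i with
  | zero =>
    intro r hr1 hr2
    exact (base r (by simpa using hr1) hr2).trans le_self_add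
  | succ i ih =>
    intro r hr1 hr2
    by_cases hr3 : 1 / 2 ≤ r
    · exact (base r hr3 hr2).trans le_self_add
    push Not at hr3
    have hr : 0 < r := lt_of_lt_of_le (by positivity) hr1
    have h1 := ih (2 * r) (by rw [pow_succ] at hr1; linarith) (by linarith)
    refine (h.step hg hσ hr).trans ?_
    refine (add_le_add_left h1 _).trans ?_
    rw [add_assoc]
    gcongr
    -- compare the integrands pointwise, separately for `|v| < r` and `|v| ≥ r`
    have e1 : A' * ENNReal.ofReal r ^ (σ - n) * ∫⁻ v in ball (0 : EE n) r, g v =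
        ∫⁻ v in ball (0 : EE n) 1, A' * ENNReal.ofReal r ^ (σ - n) *
          (ball (0 : EE n) r).indicator g v := by
      rw [lintegral_const_mul _ (hg.indicator measurableSet_ball),
        setLIntegral_indicator measurableSet_ball, inter_eq_left.2 (ball_subset_ball hr2)]
    rw [e1, ← lintegral_const_mul _ (by fun_prop), ← lintegral_const_mul _ (by fun_prop),
      ← lintegral_add_left (by fun_prop)]
    refine lintegral_mono fun v => ?_
    have hneg : -(σ - n) ≥ 0 := by linarith
    by_cases hv : v ∈ ball (0 : EE n) r
    · have hvn : ‖v‖ < r := by simpa using hv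
      have hve : ‖v‖ₑ ≤ ENNReal.ofReal r := by
        rw [← ofReal_norm]; exact ENNReal.ofReal_le_ofReal hvn.le
      have hve2 : ‖v‖ₑ ≤ ENNReal.ofReal (2 * r) :=
        hve.trans (ENNReal.ofReal_le_ofReal (by linarith))
      rw [indicator_of_mem hv, max_eq_right hve, max_eq_right hve2,
        ENNReal.ofReal_rpow_of_pos hr, ENNReal.ofReal_rpow_of_pos (by positivity),
        Real.mul_rpow zero_le_two hr.le, ← hτ, ENNReal.ofReal_mul hτ0.le]
      have h1τ : 0 < 1 - τ := by linarith
      have hc : ENNReal.ofReal (1 / (1 - τ)) * ENNReal.ofReal τ + 1 =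
          ENNReal.ofReal (1 / (1 - τ)) := by
        rw [← ENNReal.ofReal_mul (by positivity), ← ENNReal.ofReal_one,
          ← ENNReal.ofReal_add (by positivity) zero_le_one]
        congr 1
        field_simp
        ring
      conv_rhs => rw [← hc]
      apply le_of_eq
      ring
    · rw [indicator_of_notMem hv, mul_zero, add_zero]
      refine mul_le_mul' le_rfl (mul_le_mul' le_rfl (ennreal_rpow_anti ?_ (by linarith)))
      gcongr
      linarith

/-- A Riesz potential of order `κ` of `φ` is controlled by a Riesz potential of order `κ + σ` of `g`:
inserting the averages at radius `|w|` and exchanging the integrals leaves the composed kernel of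
`lintegral_max_rpow_le`. -/
theorem OscControl.riesz (n : ℕ) (hn : 1 ≤ n) {κ σ : ℝ} (hκ : 0 < κ) (hσ : 0 < σ)
    (hκσ : κ + σ < n) {A : ℝ≥0∞} (hA : A ≠ ⊤) :
    ∃ C : ℝ≥0∞, C ≠ ⊤ ∧ ∀ φ g : (EE n) → ℝ≥0∞, Measurable φ → Measurable g →
      OscControl n σ A φ g →
      ∫⁻ w in ball (0 : EE n) 1, φ w * ‖w‖ₑ ^ (κ - n) ≤
        C * ((∫⁻ w in ball (0 : EE n) 1, φ w) +
          ∫⁻ w in ball (0 : EE n) 1, g w * ‖w‖ₑ ^ (κ + σ - n)) := by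
  set Ω := volume (ball (0 : EE n) 1) with hΩ
  have hΩ0 : Ω ≠ 0 := vol_ne_zero n
  have hΩt : Ω ≠ ⊤ := vol_ne_top n
  set C₁ : ℝ≥0∞ := Ω⁻¹ * A * 2 ^ σ * ENNReal.ofReal (1 / (1 - 2 ^ (σ - n))) with hC₁
  have h2σ : (2 : ℝ≥0∞) ^ σ ≠ ⊤ := ENNReal.rpow_ne_top_of_nonneg hσ.le (by simp)
  have hΩi : Ω⁻¹ ≠ ⊤ := ENNReal.inv_ne_top.2 hΩ0
  have hC₁t : C₁ ≠ ⊤ := by finiteness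
  set C₂ : ℝ≥0∞ := n * Ω * (ENNReal.ofReal (1 / κ) + ENNReal.ofReal (1 / (n - κ - σ))) with hC₂
  have hC₂t : C₂ ≠ ⊤ := by finiteness
  set C₃ : ℝ≥0∞ := n * Ω * ENNReal.ofReal (1 ^ κ / κ) with hC₃
  have hC₃t : C₃ ≠ ⊤ := by finiteness
  have hnull : ∀ᵐ w : EE n, w ≠ 0 := by
    have : Nonempty (Fin n) := ⟨⟨0, by omega⟩⟩
    simp [ae_iff]
  refine ⟨Ω⁻¹ * (2 ^ n * C₃ + (C₁ * C₂ + A)), by finiteness, fun φ g hφ hg h => ?_⟩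
  set M := ∫⁻ w in ball (0 : EE n) 1, φ w
  set N := ∫⁻ w in ball (0 : EE n) 1, g w * ‖w‖ₑ ^ (κ + σ - n)
  have key : Ω * ∫⁻ w in ball (0 : EE n) 1, φ w * ‖w‖ₑ ^ (κ - n) ≤
      2 ^ n * C₃ * M + (C₁ * C₂ + A) * N := by
    calc Ω * ∫⁻ w in ball (0 : EE n) 1, φ w * ‖w‖ₑ ^ (κ - n)
        = ∫⁻ w in ball (0 : EE n) 1, (Ω * φ w) * ‖w‖ₑ ^ (κ - n) := by
          rw [← lintegral_const_mul' _ _ hΩt]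
          simp_rw [mul_assoc]
      _ ≤ ∫⁻ w in ball (0 : EE n) 1, (2 ^ n * M * ‖w‖ₑ ^ (κ - n) +
          (C₁ * (∫⁻ v in ball (0 : EE n) 1, g v * (‖w‖ₑ ^ (κ - n) * max ‖v‖ₑ ‖w‖ₑ ^ (σ - n))) +
            A * (g w * ‖w‖ₑ ^ (κ + σ - n)))) := by
          refine lintegral_mono_ae ?_
          filter_upwards [ae_restrict_of_ae hnull, self_mem_ae_restrict measurableSet_ball]
            with w hw hwB
          have hw1 : ‖w‖ < 1 := by simpa using hwB
          have hw' : 0 < ‖w‖ := norm_pos_iff.2 hw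
          obtain ⟨i, hi⟩ := exists_pow_lt_of_lt_one hw' (by norm_num : (1 / 2 : ℝ) < 1)
          have h1 := h.avg_le hg hσ (by linarith) i ‖w‖
            ((pow_le_pow_of_le_one (by norm_num) (by norm_num) (Nat.le_succ i)).trans hi.le) hw1.le
          have h2 := h ‖w‖ hw' w le_rfl
          rw [ofReal_norm] at h1 h2
          calc Ω * φ w * ‖w‖ₑ ^ (κ - n) ≤ (2 ^ n * M + C₁ *
                (∫⁻ v in ball (0 : EE n) 1, g v * max ‖v‖ₑ ‖w‖ₑ ^ (σ - n)) +
                A * ‖w‖ₑ ^ σ * g w) * ‖w‖ₑ ^ (κ - n) := by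
                gcongr
                exact h2.trans (by gcongr)
            _ = _ := by
                have e1 : ‖w‖ₑ ^ (κ + σ - n) = ‖w‖ₑ ^ (κ - n) * ‖w‖ₑ ^ σ := by
                  rw [← ENNReal.rpow_add _ _ (by simpa using hw) enorm_ne_top]
                  congr 1; ring
                have e2 : (∫⁻ v in ball (0 : EE n) 1, g v *
                    (‖w‖ₑ ^ (κ - n) * max ‖v‖ₑ ‖w‖ₑ ^ (σ - n))) = ‖w‖ₑ ^ (κ - n) *
                    ∫⁻ v in ball (0 : EE n) 1, g v * max ‖v‖ₑ ‖w‖ₑ ^ (σ - n) := by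
                  rw [← lintegral_const_mul _ (by fun_prop)]
                  congr 1 with v
                  ring
                rw [e1, e2]
                ring
      _ = 2 ^ n * M * C₃ + (C₁ * (∫⁻ v in ball (0 : EE n) 1, g v *
            ∫⁻ w in ball (0 : EE n) 1, ‖w‖ₑ ^ (κ - n) * max ‖v‖ₑ ‖w‖ₑ ^ (σ - n)) + A * N) := by
          have hmeas : Measurable fun q : (EE n) × (EE n) =>
              g q.2 * (‖q.1‖ₑ ^ (κ - n) * max ‖q.2‖ₑ ‖q.1‖ₑ ^ (σ - n)) := by fun_prop
          rw [lintegral_add_left (by fun_prop), lintegral_add_right _ (by fun_prop),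
            lintegral_const_mul _ (by fun_prop), lintegral_const_mul _ (by fun_prop),
            lintegral_const_mul _ (by fun_prop),
            lintegral_ball_rpow n hn hκ one_pos, lintegral_lintegral_swap hmeas.aemeasurable]
          congr 4 with v
          rw [lintegral_const_mul _ (by fun_prop)]
      _ ≤ 2 ^ n * M * C₃ + (C₁ * (∫⁻ v in ball (0 : EE n) 1, g v *
            (C₂ * ‖v‖ₑ ^ (κ + σ - n))) + A * N) := by
          refine add_le_add le_rfl (add_le_add (mul_le_mul' le_rfl (lintegral_mono_ae ?_)) le_rfl)
          filter_upwards [ae_restrict_of_ae hnull] with v hv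
          gcongr
          exact (setLIntegral_le_lintegral _ _).trans
            (lintegral_max_rpow_le n hn hκ hκσ hv)
      _ = _ := by
          have : (∫⁻ v in ball (0 : EE n) 1, g v * (C₂ * ‖v‖ₑ ^ (κ + σ - n))) = C₂ * N := by
            rw [← lintegral_const_mul _ (by fun_prop)]
            congr 1 with v
            ring
          rw [this]
          ring
  rw [← ENNReal.mul_le_mul_iff_right hΩ0 hΩt]
  refine key.trans ?_
  rw [mul_assoc Ω⁻¹, ← mul_assoc Ω Ω⁻¹, ENNReal.mul_inv_cancel hΩ0 hΩt, one_mul, mul_add]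
  exact add_le_add (mul_le_mul' le_self_add le_rfl) (mul_le_mul' le_add_self le_rfl)

/-- The case `κ = 0` of `OscControl.riesz`, in which the potential of `φ` is replaced by the value `φ 0`:
the averages of `φ` are bounded uniformly in the radius, and by continuity they reach `φ 0`. -/
theorem OscControl.point (n : ℕ) {σ : ℝ} (hσ : 0 < σ)
    (hσn : σ < n) {A : ℝ≥0∞} (hA : A ≠ ⊤) :
    ∃ C : ℝ≥0∞, C ≠ ⊤ ∧ ∀ φ g : (EE n) → ℝ≥0∞, Measurable g →
      OscControl n σ A φ g → ContinuousAt φ 0 → φ 0 ≤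
        C * ((∫⁻ w in ball (0 : EE n) 1, φ w) +
          ∫⁻ w in ball (0 : EE n) 1, g w * ‖w‖ₑ ^ (σ - n)) := by
  set Ω := volume (ball (0 : EE n) 1) with hΩ
  have hΩ0 : Ω ≠ 0 := vol_ne_zero n
  have hΩt : Ω ≠ ⊤ := vol_ne_top n
  set C₁ : ℝ≥0∞ := Ω⁻¹ * A * 2 ^ σ * ENNReal.ofReal (1 / (1 - 2 ^ (σ - n))) with hC₁
  have h2σ : (2 : ℝ≥0∞) ^ σ ≠ ⊤ := ENNReal.rpow_ne_top_of_nonneg hσ.le (by simp)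
  have hΩi : Ω⁻¹ ≠ ⊤ := ENNReal.inv_ne_top.2 hΩ0
  have hC₁t : C₁ ≠ ⊤ := by finiteness
  refine ⟨Ω⁻¹ * (2 ^ n + C₁), by finiteness, fun φ g hg h hc => ?_⟩
  set M := ∫⁻ w in ball (0 : EE n) 1, φ w
  set N := ∫⁻ w in ball (0 : EE n) 1, g w * ‖w‖ₑ ^ (σ - n)
  have havg : ∀ r : ℝ, 0 < r → r ≤ 1 →
      ∫⁻ z in ball (0 : EE n) 1, φ (r • z) ≤ 2 ^ n * M + C₁ * N := by
    intro r hr hr1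
    obtain ⟨i, hi⟩ := exists_pow_lt_of_lt_one hr (by norm_num : (1 / 2 : ℝ) < 1)
    refine (h.avg_le hg hσ hσn i r
      ((pow_le_pow_of_le_one (by norm_num) (by norm_num) (Nat.le_succ i)).trans hi.le) hr1).trans ?_
    refine add_le_add le_rfl (mul_le_mul' le_rfl (lintegral_mono fun v => ?_))
    exact mul_le_mul' le_rfl (ennreal_rpow_anti (le_max_left _ _) (by linarith))
  have key : Ω * φ 0 ≤ 2 ^ n * M + C₁ * N := by
    -- any `c' < φ 0` is a lower bound of `φ` near `0`, hence of its averages at small radii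
    refine le_of_forall_lt fun c hc' => ?_
    have h1 : c / Ω < φ 0 := by
      rw [ENNReal.div_lt_iff (Or.inl hΩ0) (Or.inl hΩt), mul_comm]; exact hc'
    obtain ⟨c', hcc', hc'φ⟩ := exists_between h1
    obtain ⟨δ, hδ, hδ'⟩ := Metric.eventually_nhds_iff_ball.1 (hc.eventually (lt_mem_nhds hc'φ))
    set r := min δ 1
    have hr : 0 < r := lt_min hδ one_pos
    refine lt_of_lt_of_le ?_ (havg r hr (min_le_right _ _))
    calc c < c' * Ω := (ENNReal.div_lt_iff (Or.inl hΩ0) (Or.inl hΩt)).1 hcc'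
      _ = ∫⁻ z in ball (0 : EE n) 1, c' := by rw [setLIntegral_const]
      _ ≤ _ := by
        refine setLIntegral_mono_ae' measurableSet_ball (ae_of_all _ fun z hz => ?_)
        refine (hδ' _ ?_).le
        have hz' : ‖z‖ < 1 := by simpa using hz
        rw [mem_ball_zero_iff, norm_smul, Real.norm_of_nonneg hr.le]
        calc r * ‖z‖ < r * 1 := by gcongr
          _ ≤ δ := by rw [mul_one]; exact min_le_left _ _
  rw [← ENNReal.mul_le_mul_iff_right hΩ0 hΩt]
  refine key.trans ?_
  rw [mul_assoc Ω⁻¹, ← mul_assoc Ω Ω⁻¹, ENNReal.mul_inv_cancel hΩ0 hΩt, one_mul, mul_add]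
  exact add_le_add (mul_le_mul' le_self_add le_rfl) (mul_le_mul' le_add_self le_rfl)

/-! ### The Gagliardo density -/

/-- The Gagliardo density of `F` at `y`, i.e. `(∫ |F y - F z|^p / |y - z|^{n+σp} dz)^{1/p}`, with values
in `[0, ∞]`. Its `L^p` norm is the Gagliardo seminorm. On the diagonal the integrand is `0 / 0 = 0`. -/
noncomputable def gagDensity {n : ℕ} {V : Type*} [NormedAddCommGroup V] (p σ : ℝ)
    (F : (EE n) → V) (y : EE n) : ℝ≥0∞ :=
  (∫⁻ z, ‖F y - F z‖ₑ ^ p / ‖y - z‖ₑ ^ ((n : ℝ) + σ * p)) ^ (1 / p)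

section
variable {n : ℕ} {V : Type*} [NormedAddCommGroup V]

theorem measurable_gag_integrand (p σ : ℝ) {F : (EE n) → V} (hF : Continuous F) :
    Measurable fun q : (EE n) × (EE n) =>
      ‖F q.1 - F q.2‖ₑ ^ p / ‖q.1 - q.2‖ₑ ^ ((n : ℝ) + σ * p) := by
  have h1 : Measurable fun q : (EE n) × (EE n) => ‖F q.1 - F q.2‖ₑ := by
    have : Continuous fun q : (EE n) × (EE n) => ‖F q.1 - F q.2‖ₑ := by fun_prop
    exact this.measurable
  fun_prop

theorem measurable_gagDensity (p σ : ℝ) {F : (EE n) → V} (hF : Continuous F) :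
    Measurable (gagDensity p σ F) :=
  (measurable_gag_integrand p σ hF).lintegral_prod_right'.pow_const _

/-- The Gagliardo density controls the oscillation of `F`: Hölder's inequality on the ball, where the
weight `|y - z|^{-(n+σp)}` is bounded below. -/
theorem oscControl_gagDensity {p σ : ℝ} (hp : 1 < p) (hσ : 0 < σ) {F : (EE n) → V}
    (hF : Continuous F) (x : EE n) :
    OscControl n σ ((2 : ℝ≥0∞) ^ (n / p + σ) * volume (ball (0 : EE n) 1) ^ (1 - 1 / p))
      (fun u => ‖F (x + u)‖ₑ) (fun u => gagDensity p σ F (x + u)) := by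
  intro ρ hρ u hu
  have hp0 : 0 < p := by linarith
  set Ω := volume (ball (0 : EE n) 1)
  set e := (n : ℝ) + σ * p with he
  have he0 : 0 < e := by positivity
  set T : (EE n) → ℝ≥0∞ := fun w => ‖F (x + u) - F (x + w)‖ₑ with hT
  have hTm : Measurable T := by
    have : Continuous T := by fun_prop
    exact this.measurable
  have hφm : Measurable fun u => ‖F (x + u)‖ₑ := by
    have : Continuous fun u => ‖F (x + u)‖ₑ := by fun_prop
    exact this.measurable
  have hρ0 : ENNReal.ofReal ρ ≠ 0 := by simpa using hρ
  have hH := ENNReal.lintegral_mul_le_Lp_mul_Lq (volume.restrict (ball (0 : EE n) 1))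
    (Real.HolderConjugate.conjExponent hp) (f := fun z => T (ρ • z)) (g := fun _ => 1)
    (by fun_prop) (by fun_prop)
  have hconj : 1 / p.conjExponent = 1 - 1 / p := by
    have := (Real.HolderConjugate.conjExponent hp).inv_add_inv_eq_one
    simp only [one_div]
    linarith
  simp only [Pi.mul_apply, mul_one, ENNReal.one_rpow, lintegral_const, Measure.restrict_apply_univ,
    one_mul, hconj] at hH
  -- on the ball of radius `ρ` the Gagliardo weight is at least `(2ρ)^{-(n+σp)}`
  have hpt : ∀ w ∈ ball (0 : EE n) ρ, T w ^ p ≤ ENNReal.ofReal (2 * ρ) ^ e *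
      (T w ^ p / ‖(x + u) - (x + w)‖ₑ ^ e) := by
    intro w hw
    by_cases h0 : u = w
    · simp [hT, h0, hp0]
    have hw' : ‖w‖ < ρ := by simpa using hw
    have hne : ‖(x + u) - (x + w)‖ₑ ≠ 0 := by simpa [sub_eq_zero] using h0
    have hle : ‖(x + u) - (x + w)‖ₑ ≤ ENNReal.ofReal (2 * ρ) := by
      rw [← ofReal_norm]
      apply ENNReal.ofReal_le_ofReal
      rw [add_sub_add_left_eq_sub]
      linarith [norm_sub_le u w]
    set d := ‖(x + u) - (x + w)‖ₑ
    have hd0 : d ^ e ≠ 0 := by simp [ENNReal.rpow_eq_zero_iff, hne, he0.le]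
    have hdt : d ^ e ≠ ⊤ := ENNReal.rpow_ne_top_of_nonneg he0.le enorm_ne_top
    calc T w ^ p = d ^ e * (T w ^ p / d ^ e) := (ENNReal.mul_div_cancel hd0 hdt).symm
      _ ≤ _ := by gcongr
  have hmain : ∫⁻ z in ball (0 : EE n) 1, T (ρ • z) ^ p ≤
      2 ^ e * ENNReal.ofReal ρ ^ (σ * p) *
        ∫⁻ z, ‖F (x + u) - F z‖ₑ ^ p / ‖(x + u) - z‖ₑ ^ e := by
    rw [lintegral_ball_smul n hρ (fun w => T w ^ p)]
    calc ENNReal.ofReal ρ ^ (-(n : ℝ)) * ∫⁻ w in ball (0 : EE n) ρ, T w ^ p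
        ≤ ENNReal.ofReal ρ ^ (-(n : ℝ)) * ∫⁻ w in ball (0 : EE n) ρ,
          ENNReal.ofReal (2 * ρ) ^ e * (T w ^ p / ‖(x + u) - (x + w)‖ₑ ^ e) := by
          exact mul_le_mul' le_rfl (setLIntegral_mono_ae' measurableSet_ball (ae_of_all _ hpt))
      _ ≤ ENNReal.ofReal ρ ^ (-(n : ℝ)) * ∫⁻ w,
          ENNReal.ofReal (2 * ρ) ^ e * (T w ^ p / ‖(x + u) - (x + w)‖ₑ ^ e) := by
          gcongr
          exact Measure.restrict_le_self
      _ = _ := by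
          rw [lintegral_const_mul _ (by fun_prop),
            lintegral_add_left_eq_self (μ := (volume : Measure (EE n)))
              (fun z => ‖F (x + u) - F z‖ₑ ^ p / ‖(x + u) - z‖ₑ ^ e) x, ← mul_assoc]
          congr 1
          rw [ENNReal.ofReal_mul zero_le_two, ENNReal.mul_rpow_of_nonneg _ _ he0.le, mul_left_comm,
            ← ENNReal.rpow_add _ _ hρ0 ENNReal.ofReal_ne_top, ENNReal.ofReal_ofNat]
          congr 2
          rw [he]; ring
  calc Ω * ‖F (x + u)‖ₑ = ∫⁻ z in ball (0 : EE n) 1, ‖F (x + u)‖ₑ := by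
        rw [setLIntegral_const, mul_comm]
    _ ≤ ∫⁻ z in ball (0 : EE n) 1, (‖F (x + ρ • z)‖ₑ + T (ρ • z)) := by
        refine lintegral_mono fun z => ?_
        calc ‖F (x + u)‖ₑ = ‖F (x + ρ • z) + (F (x + u) - F (x + ρ • z))‖ₑ := by simp
          _ ≤ _ := enorm_add_le _ _
    _ = (∫⁻ z in ball (0 : EE n) 1, ‖F (x + ρ • z)‖ₑ) +
          ∫⁻ z in ball (0 : EE n) 1, T (ρ • z) := by
        rw [lintegral_add_right _ (by fun_prop)]
    _ ≤ _ := by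
        refine add_le_add le_rfl (hH.trans ?_)
        calc _ ≤ (2 ^ e * ENNReal.ofReal ρ ^ (σ * p) *
            ∫⁻ z, ‖F (x + u) - F z‖ₑ ^ p / ‖(x + u) - z‖ₑ ^ e) ^ (1 / p) * Ω ^ (1 - 1 / p) := by
              gcongr
          _ = _ := by
            simp only [gagDensity]
            rw [ENNReal.mul_rpow_of_nonneg _ _ (by positivity),
              ENNReal.mul_rpow_of_nonneg _ _ (by positivity), ← ENNReal.rpow_mul,
              ← ENNReal.rpow_mul]
            have e1 : e * (1 / p) = n / p + σ := by rw [he]; field_simp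
            have e2 : σ * p * (1 / p) = σ := by field_simp
            rw [e1, e2]
            ring
end

/-! ### The pointwise potential bound -/

open Classical in
/-- The pointwise density of the `W^{s,p}` norm: the sum of the norms of the derivatives of order
at most `⌊s⌋`, plus, for non-integer `s`, the Gagliardo density of the top derivative. -/
noncomputable def sobolevDensity (n : ℕ) (p s : ℝ) (f : (EE n) → ℝ) (y : EE n) : ℝ≥0∞ :=
  (∑ j ∈ Finset.range (⌊s⌋₊ + 1), ‖iteratedFDeriv ℝ j f y‖ₑ) +
    if (⌊s⌋₊ : ℝ) = s then 0 else gagDensity p (s - ⌊s⌋₊) (iteratedFDeriv ℝ ⌊s⌋₊ f) y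

theorem measurable_sobolevDensity (n : ℕ) (p s : ℝ) {f : (EE n) → ℝ} (hf : ContDiff ℝ ∞ f) :
    Measurable (sobolevDensity n p s f) := by
  unfold sobolevDensity
  refine Measurable.add (Finset.measurable_sum _ fun j _ => ?_) ?_
  · exact (continuous_iter n hf j).enorm.measurable
  · split_ifs
    · exact measurable_const
    · exact measurable_gagDensity _ _ (continuous_iter n hf _)

/-- A smooth function is bounded by the truncated Riesz potential of order `s` of its Sobolev density.
For integer `s` this is `taylor_ball`. Otherwise `taylor_ball` of order `k = ⌊s⌋` leaves a potential
of order `k` of `|D^k f|`, whose order is raised to `s` by the Gagliardo density through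
`OscControl.riesz`; if `k = 0`, `OscControl.point` applies directly. -/
theorem pointwise_bound (n : ℕ) (hn : 1 ≤ n) {p s : ℝ} (hp : 1 < p) (hs : 0 < s) (hsn : s < n) :
    ∃ C : ℝ≥0∞, C ≠ ⊤ ∧ ∀ f : (EE n) → ℝ, ContDiff ℝ ∞ f → ∀ x,
      ‖f x‖ₑ ≤ C * ∫⁻ w in ball (0 : EE n) 1,
        sobolevDensity n p s f (x + w) * ‖w‖ₑ ^ (s - n) := by
  set k := ⌊s⌋₊ with hk
  have hks : (k : ℝ) ≤ s := Nat.floor_le hs.le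
  have hkn : k < n := by exact_mod_cast hks.trans_lt hsn
  set Ω := volume (ball (0 : EE n) 1) with hΩ
  have hΩ0 : Ω ≠ 0 := vol_ne_zero n
  have hΩt : Ω ≠ ⊤ := vol_ne_top n
  have hderiv : ∀ f : (EE n) → ℝ, ∀ y, ∀ j ≤ k,
      ‖iteratedFDeriv ℝ j f y‖ₑ ≤ sobolevDensity n p s f y := fun f y j hj =>
    (Finset.single_le_sum (f := fun j => ‖iteratedFDeriv ℝ j f y‖ₑ) (fun _ _ => zero_le)
      (Finset.mem_range.2 (by omega : j < k + 1))).trans le_self_add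
  have hone : ∀ w ∈ ball (0 : EE n) 1, (1 : ℝ≥0∞) ≤ ‖w‖ₑ ^ (s - n) := by
    intro w hw
    have : ‖w‖ₑ ≤ 1 := by
      rw [← ofReal_norm, ENNReal.ofReal_le_one]
      exact (by simpa using hw : ‖w‖ < 1).le
    simpa using ennreal_rpow_anti this (by linarith : s - n ≤ 0)
  have hlow : ∀ f : (EE n) → ℝ, ∀ x, ∀ j ≤ k,
      ∫⁻ w in ball (0 : EE n) 1, ‖iteratedFDeriv ℝ j f (x + w)‖ₑ ≤
      ∫⁻ w in ball (0 : EE n) 1, sobolevDensity n p s f (x + w) * ‖w‖ₑ ^ (s - n) := by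
    intro f x j hj
    refine setLIntegral_mono_ae' measurableSet_ball (ae_of_all _ fun w hw => ?_)
    calc ‖iteratedFDeriv ℝ j f (x + w)‖ₑ = ‖iteratedFDeriv ℝ j f (x + w)‖ₑ * 1 := (mul_one _).symm
      _ ≤ _ := mul_le_mul' (hderiv f _ j hj) (hone w hw)
  by_cases hinteg : (k : ℝ) = s
  · have hk1 : 1 ≤ k := by
      rcases Nat.eq_zero_or_pos k with h | h
      · rw [h] at hinteg; simp at hinteg; linarith
      · exact h
    refine ⟨(k + ENNReal.ofReal (1 / ((n : ℝ) - k))) / Ω, by finiteness, fun f hf x => ?_⟩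
    set I := ∫⁻ w in ball (0 : EE n) 1, sobolevDensity n p s f (x + w) * ‖w‖ₑ ^ (s - n)
    have h := taylor_ball n hf k hk1 hkn x
    have h2 : Ω * ‖f x‖ₑ ≤ (k + ENNReal.ofReal (1 / ((n : ℝ) - k))) * I := by
      refine h.trans ?_
      rw [add_mul]
      refine add_le_add ?_ (mul_le_mul' le_rfl ?_)
      · refine (Finset.sum_le_card_nsmul _ _ I fun j hj => hlow f x j ?_).trans (by simp)
        exact (Finset.mem_range.1 hj).le
      · rw [hinteg]
        exact lintegral_mono fun w => mul_le_mul' (hderiv f _ k le_rfl) le_rfl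
    rw [ENNReal.mul_div_right_comm.symm, ENNReal.le_div_iff_mul_le (.inl hΩ0) (.inl hΩt), mul_comm]
    exact h2
  · have hσ : 0 < s - k := sub_pos.2 (lt_of_le_of_ne hks hinteg)
    have hA : (2 : ℝ≥0∞) ^ (n / p + (s - k)) * Ω ^ (1 - 1 / p) ≠ ⊤ := by
      have : 1 / p < 1 := by rw [div_lt_one (by linarith)]; exact hp
      refine ENNReal.mul_ne_top (ENNReal.rpow_ne_top_of_nonneg (by positivity) (by simp))
        (ENNReal.rpow_ne_top_of_nonneg (by linarith) hΩt)
    have hgag : ∀ f : (EE n) → ℝ, ∀ x, ∫⁻ w in ball (0 : EE n) 1,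
        gagDensity p (s - k) (iteratedFDeriv ℝ k f) (x + w) * ‖w‖ₑ ^ (s - n) ≤
        ∫⁻ w in ball (0 : EE n) 1, sobolevDensity n p s f (x + w) * ‖w‖ₑ ^ (s - n) := by
      intro f x
      refine lintegral_mono fun w => mul_le_mul' ?_ le_rfl
      rw [sobolevDensity, if_neg hinteg]
      exact le_add_self
    rcases Nat.eq_zero_or_pos k with hk0 | hk1
    · obtain ⟨C, hC, hpoint⟩ := OscControl.point n hσ (by linarith [hks, hsn, Nat.cast_nonneg (α := ℝ) k]) hA
      refine ⟨C * 2, by finiteness, fun f hf x => ?_⟩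
      have hc := continuous_iter n hf k
      have hosc := oscControl_gagDensity hp hσ hc x
      have h := hpoint _ _ ((measurable_gagDensity p (s - k) hc).comp (measurable_const_add x)) hosc
        (by fun_prop)
      have hfx : ‖f x‖ₑ = ‖iteratedFDeriv ℝ k f x‖ₑ := by
        rw [hk0, ← ofReal_norm, ← ofReal_norm, norm_iteratedFDeriv_zero]
      have hexp : s - k - n = s - n := by simp [hk0]
      rw [hexp] at h
      simp only [add_zero] at h
      rw [hfx, mul_assoc, two_mul]
      exact h.trans (mul_le_mul' le_rfl (add_le_add (hlow f x k le_rfl) (hgag f x)))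
    · obtain ⟨C, hC, hriesz⟩ := OscControl.riesz n hn (κ := k) (by exact_mod_cast hk1) hσ
        (by linarith) hA
      set c := ENNReal.ofReal (1 / ((n : ℝ) - k)) with hc
      refine ⟨(k + c * (C * 2)) / Ω, by finiteness, fun f hf x => ?_⟩
      set I := ∫⁻ w in ball (0 : EE n) 1, sobolevDensity n p s f (x + w) * ‖w‖ₑ ^ (s - n)
      have h := taylor_ball n hf k hk1 hkn x
      have hc := continuous_iter n hf k
      have hosc := oscControl_gagDensity hp hσ hc x
      have h3 := hriesz _ _ (hc.comp (continuous_const_add x)).enorm.measurable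
        ((measurable_gagDensity p (s - k) hc).comp (measurable_const_add x)) hosc
      have hexp : (k : ℝ) + (s - k) - n = s - n := by ring
      rw [hexp] at h3
      have h2 : Ω * ‖f x‖ₑ ≤ (k + c * (C * 2)) * I := by
        refine h.trans ?_
        rw [add_mul, mul_assoc, mul_assoc, two_mul]
        refine add_le_add ?_ (mul_le_mul' le_rfl ?_)
        · refine (Finset.sum_le_card_nsmul _ _ I fun j hj => hlow f x j ?_).trans (by simp)
          exact (Finset.mem_range.1 hj).le
        · exact h3.trans (mul_le_mul' le_rfl (add_le_add (hlow f x k le_rfl) (hgag f x)))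
      rw [ENNReal.mul_div_right_comm.symm, ENNReal.le_div_iff_mul_le (.inl hΩ0) (.inl hΩt),
        mul_comm]
      exact h2

/-! ### Young's inequality and the norm of the kernel -/

/-- Young's inequality for the correlation of `h` with `K`, with constant one and general exponents
`1/r = 1/q + 1 - 1/p`. It follows from Hölder's inequality with three exponents applied to
`h K = (h^p K^r)^{1/q} (h^p)^{1/p - 1/q} (K^r)^{1 - 1/p}` and from Tonelli's theorem. -/
theorem young (n : ℕ) {p q r : ℝ} (hp : 1 < p) (hpq : p ≤ q) (hr : 1 / r = 1 / q + (1 - 1 / p))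
    {h K : (EE n) → ℝ≥0∞} (hh : Measurable h) (hK : Measurable K) :
    (∫⁻ x, (∫⁻ w, h (x + w) * K w) ^ q) ^ (1 / q) ≤
      (∫⁻ x, h x ^ p) ^ (1 / p) * (∫⁻ w, K w ^ r) ^ (1 / r) := by
  have hp0 : 0 < p := by linarith
  have hq0 : 0 < q := by linarith
  have h1p : 1 / p < 1 := by rw [div_lt_one hp0]; exact hp
  have h1p0 : 0 < 1 / p := by positivity
  have h1q : 0 < 1 / q := by positivity
  have h1r : 0 < 1 / r := by rw [hr]; linarith
  have hr0 : 0 < r := by simpa using h1r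
  have hqp : 0 ≤ 1 / p - 1 / q := sub_nonneg.2 (one_div_le_one_div_of_le hp0 hpq)
  have hp' : 0 ≤ 1 - 1 / p := by linarith
  set H := ∫⁻ x, h x ^ p with hH
  set L := ∫⁻ w, K w ^ r with hL
  have hpt : ∀ x, ∫⁻ w, h (x + w) * K w ≤
      (∫⁻ w, h (x + w) ^ p * K w ^ r) ^ (1 / q) * (H ^ (1 / p - 1 / q) * L ^ (1 - 1 / p)) := by
    intro x
    have hx : ∫⁻ w, h (x + w) ^ p = H := lintegral_add_left_eq_self (fun y => h y ^ p) x
    have := ENNReal.lintegral_prod_norm_pow_le (μ := (volume : Measure (EE n))) (Finset.univ : Finset (Fin 3))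
      (f := ![fun w => h (x + w) ^ p * K w ^ r, fun w => h (x + w) ^ p, fun w => K w ^ r])
      (p := ![1 / q, 1 / p - 1 / q, 1 - 1 / p])
      (by intro i _; fin_cases i <;> simp <;> fun_prop)
      (by simp [Fin.sum_univ_three])
      (by intro i _; fin_cases i <;> simp <;> [exact hq0.le; simpa using hqp; simpa using hp'])
    simp only [Fin.prod_univ_three, Matrix.cons_val_zero, Matrix.cons_val_one, Matrix.cons_val,
      hx, ← hL] at this
    rw [← mul_assoc]
    refine le_trans (le_of_eq ?_) this
    congr 1 with w
    rw [ENNReal.mul_rpow_of_nonneg _ _ h1q.le, ← ENNReal.rpow_mul, ← ENNReal.rpow_mul,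
      ← ENNReal.rpow_mul, ← ENNReal.rpow_mul]
    have e1 : p * (1 / q) + p * (1 / p - 1 / q) = 1 := by field_simp; ring
    have e2 : r * (1 / q) + r * (1 - 1 / p) = 1 := by
      rw [← mul_add, ← hr]; field_simp
    calc h (x + w) * K w = h (x + w) ^ (p * (1 / q) + p * (1 / p - 1 / q)) *
          K w ^ (r * (1 / q) + r * (1 - 1 / p)) := by rw [e1, e2]; simp
      _ = _ := by
        rw [ENNReal.rpow_add_of_nonneg _ _ (by positivity) (by positivity),
          ENNReal.rpow_add_of_nonneg _ _ (by positivity) (by positivity)]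
        ring
  have hmeas : Measurable fun z : (EE n) × (EE n) => h (z.1 + z.2) ^ p * K z.2 ^ r := by fun_prop
  have hinteg : ∫⁻ x, ∫⁻ w, h (x + w) ^ p * K w ^ r = H * L := by
    rw [lintegral_lintegral_swap hmeas.aemeasurable]
    have : ∀ w, ∫⁻ x, h (x + w) ^ p * K w ^ r = H * K w ^ r := fun w => by
      rw [lintegral_mul_const _ (by fun_prop), lintegral_add_right_eq_self (fun y => h y ^ p) w]
    simp_rw [this]
    rw [lintegral_const_mul _ (by fun_prop)]
  calc (∫⁻ x, (∫⁻ w, h (x + w) * K w) ^ q) ^ (1 / q)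
      ≤ (∫⁻ x, (∫⁻ w, h (x + w) ^ p * K w ^ r) *
          (H ^ (1 / p - 1 / q) * L ^ (1 - 1 / p)) ^ q) ^ (1 / q) := by
        gcongr with x
        refine (ENNReal.rpow_le_rpow (hpt x) hq0.le).trans (le_of_eq ?_)
        rw [ENNReal.mul_rpow_of_nonneg _ _ hq0.le, ← ENNReal.rpow_mul, one_div_mul_cancel hq0.ne',
          ENNReal.rpow_one]
    _ = _ := by
        rw [lintegral_mul_const _ hmeas.lintegral_prod_right', hinteg,
          ENNReal.mul_rpow_of_nonneg _ _ h1q.le, ← ENNReal.rpow_mul,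
          mul_one_div_cancel hq0.ne', ENNReal.rpow_one, ENNReal.mul_rpow_of_nonneg _ _ h1q.le,
          hr, ENNReal.rpow_add_of_nonneg _ _ h1q.le hp']
        have : H ^ (1 / p) = H ^ (1 / q) * H ^ (1 / p - 1 / q) := by
          rw [← ENNReal.rpow_add_of_nonneg _ _ h1q.le hqp]; congr 1; ring
        rw [this]
        ring

/-- The `L^r` norm of the truncated Riesz kernel `|w|^{s-n}`, `s = n/p`, where
`1/r = 1/q + 1 - 1/p`: the exponent `(s-n)r` equals `nr/q - n`, so the integral of the `r`-th power
is exactly `|B| q/r`, and its `r`-th root has size `q^{1-1/p}` because `q^{1/q}` is bounded. -/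
theorem kernel_norm (n : ℕ) (hn : 1 ≤ n) {p q r : ℝ} (hp : 1 < p) (hpq : p ≤ q)
    (hr : 1 / r = 1 / q + (1 - 1 / p)) :
    (∫⁻ w, (ball (0 : EE n) 1).indicator (fun w => ‖w‖ₑ ^ ((n : ℝ) / p - n)) w ^ r) ^ (1 / r) ≤
      (max 1 (volume (ball (0 : EE n) 1)) * ENNReal.ofReal (Real.exp 1)) *
        ENNReal.ofReal (q ^ (1 - 1 / p)) := by
  have hp0 : 0 < p := by linarith
  have hq0 : 0 < q := by linarith
  have h1p : 1 / p < 1 := by rw [div_lt_one hp0]; exact hp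
  have h1q : 0 < 1 / q := by positivity
  have h1r : 0 < 1 / r := by rw [hr]; linarith
  have hr0 : 0 < r := by simpa using h1r
  have h1r1 : 1 / r ≤ 1 := by
    rw [hr]; linarith [one_div_le_one_div_of_le hp0 hpq]
  have hr1 : 1 ≤ r := by rwa [div_le_one hr0] at h1r1
  have hn0 : (0 : ℝ) < n := by exact_mod_cast hn
  set Ω := volume (ball (0 : EE n) 1) with hΩ
  have hinteg : ∫⁻ w, (ball (0 : EE n) 1).indicator (fun w => ‖w‖ₑ ^ ((n : ℝ) / p - n)) w ^ r =
      Ω * ENNReal.ofReal (q / r) := by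
    have h1 : ∀ w, (ball (0 : EE n) 1).indicator (fun w => ‖w‖ₑ ^ ((n : ℝ) / p - n)) w ^ r =
        (ball (0 : EE n) 1).indicator (fun w => ‖w‖ₑ ^ (n * r / q - n)) w := by
      intro w
      by_cases hw : w ∈ ball (0 : EE n) 1
      · rw [indicator_of_mem hw, indicator_of_mem hw, ← ENNReal.rpow_mul]
        congr 1
        have h2 : r * (1 / q + (1 - 1 / p)) = 1 := by rw [← hr]; field_simp
        have h3 : (1 / p - 1) * r = r / q - 1 := by
          have : r / q = r * (1 / q) := by ring
          rw [this]; linarith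
        calc ((n : ℝ) / p - n) * r = n * ((1 / p - 1) * r) := by ring
          _ = _ := by rw [h3]; ring
      · rw [indicator_of_notMem hw, indicator_of_notMem hw, ENNReal.zero_rpow_of_pos hr0]
    simp_rw [h1]
    rw [lintegral_indicator measurableSet_ball,
      lintegral_ball_rpow n hn (by positivity : 0 < n * r / q) one_pos, Real.one_rpow,
      mul_comm (n : ℝ≥0∞), mul_assoc, ← ENNReal.ofReal_natCast, ← ENNReal.ofReal_mul hn0.le]
    congr 2
    field_simp
  rw [hinteg]
  have hqr : q / r ≤ q := div_le_self hq0.le hr1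
  have hq1 : 1 ≤ q := by linarith
  have hexp : q ^ (1 / q) ≤ Real.exp 1 := by
    have h1 : Real.log q * (1 / q) ≤ 1 := by
      rw [mul_one_div, div_le_one hq0]
      linarith [Real.log_le_sub_one_of_pos hq0]
    rw [Real.rpow_def_of_pos hq0]
    exact Real.exp_le_exp.2 h1
  calc (Ω * ENNReal.ofReal (q / r)) ^ (1 / r)
      ≤ (max 1 Ω * ENNReal.ofReal q) ^ (1 / r) := by
        gcongr
        exact le_max_right _ _
    _ = max 1 Ω ^ (1 / r) * ENNReal.ofReal (q ^ (1 / q) * q ^ (1 - 1 / p)) := by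
        rw [ENNReal.mul_rpow_of_nonneg _ _ h1r.le, ENNReal.ofReal_rpow_of_pos hq0, hr,
          Real.rpow_add hq0]
    _ ≤ max 1 Ω ^ (1 : ℝ) * ENNReal.ofReal (Real.exp 1 * q ^ (1 - 1 / p)) := by
        refine mul_le_mul' (ENNReal.rpow_le_rpow_of_exponent_le (le_max_left _ _) h1r1)
          (ENNReal.ofReal_le_ofReal ?_)
        gcongr
    _ = _ := by
        rw [ENNReal.rpow_one, ENNReal.ofReal_mul (by positivity), mul_assoc]

/-- The embedding with the norm expressed by the `[0, ∞]`-valued Sobolev density: Young's inequality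
applied to `pointwise_bound`. -/
theorem lq_bound (n : ℕ) (hn : 1 ≤ n) {p : ℝ} (hp : 1 < p) :
    ∃ C : ℝ≥0∞, C ≠ ⊤ ∧ ∀ f : (EE n) → ℝ, ContDiff ℝ ∞ f → ∀ q, p ≤ q →
      (∫⁻ x, ‖f x‖ₑ ^ q) ^ (1 / q) ≤
        C * (∫⁻ x, sobolevDensity n p (n / p) f x ^ p) ^ (1 / p) *
          ENNReal.ofReal (q ^ (1 - 1 / p)) := by
  have hn0 : (0 : ℝ) < n := by exact_mod_cast hn
  have hp0 : 0 < p := by linarith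
  obtain ⟨C, hC, hbound⟩ := pointwise_bound n hn hp (s := n / p) (by positivity)
    (div_lt_self hn0 hp)
  refine ⟨C * (max 1 (volume (ball (0 : EE n) 1)) * ENNReal.ofReal (Real.exp 1)), ?_,
    fun f hf q hpq => ?_⟩
  · have := vol_ne_top n
    refine ENNReal.mul_ne_top hC (ENNReal.mul_ne_top ?_ ENNReal.ofReal_ne_top)
    simp [this]
  have hq0 : 0 < q := by linarith
  have h1p : 1 / p < 1 := by rw [div_lt_one hp0]; exact hp
  have h1q : 0 < 1 / q := by positivity
  set r := 1 / (1 / q + (1 - 1 / p)) with hrdef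
  have hr : 1 / r = 1 / q + (1 - 1 / p) := by rw [hrdef, one_div_one_div]
  set h := sobolevDensity n p (n / p) f
  have hh : Measurable h := measurable_sobolevDensity n p _ hf
  set K := (ball (0 : EE n) 1).indicator fun w : EE n => ‖w‖ₑ ^ ((n : ℝ) / p - n) with hKdef
  have hK : Measurable K := (measurable_enorm.pow_const _).indicator measurableSet_ball
  have hpt : ∀ x, ‖f x‖ₑ ≤ C * ∫⁻ w, h (x + w) * K w := by
    intro x
    refine (hbound f hf x).trans (le_of_eq ?_)
    rw [← lintegral_indicator measurableSet_ball]
    congr 2 with w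
    by_cases hw : w ∈ ball (0 : EE n) 1
    · simp only [hKdef, indicator_of_mem hw]; rfl
    · simp only [hKdef, indicator_of_notMem hw, mul_zero]
  calc (∫⁻ x, ‖f x‖ₑ ^ q) ^ (1 / q)
      ≤ (∫⁻ x, C ^ q * (∫⁻ w, h (x + w) * K w) ^ q) ^ (1 / q) := by
        gcongr with x
        rw [← ENNReal.mul_rpow_of_nonneg _ _ hq0.le]
        gcongr
        exact hpt x
    _ = C * (∫⁻ x, (∫⁻ w, h (x + w) * K w) ^ q) ^ (1 / q) := by
        rw [lintegral_const_mul' _ _ (ENNReal.rpow_ne_top_of_nonneg hq0.le hC),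
          ENNReal.mul_rpow_of_nonneg _ _ h1q.le, ← ENNReal.rpow_mul, mul_one_div_cancel hq0.ne',
          ENNReal.rpow_one]
    _ ≤ C * ((∫⁻ x, h x ^ p) ^ (1 / p) *
          ((max 1 (volume (ball (0 : EE n) 1)) * ENNReal.ofReal (Real.exp 1)) *
            ENNReal.ofReal (q ^ (1 - 1 / p)))) :=
        mul_le_mul' le_rfl ((young n hp hpq hr hh hK).trans
          (mul_le_mul' le_rfl (kernel_norm n hn hp hpq hr)))
    _ = _ := by ring

/-! ### Comparison with the Bochner integrals -/

section
variable {n : ℕ} {V : Type*} [NormedAddCommGroup V]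

theorem lp_eq_ofReal {q : ℝ} (hq : 0 < q) {F : (EE n) → V} (hF : Continuous F)
    (hs : HasCompactSupport F) :
    (∫⁻ x, ‖F x‖ₑ ^ q) ^ (1 / q) = ENNReal.ofReal ((∫ x, ‖F x‖ ^ q) ^ (1 / q)) := by
  have hc : Continuous fun x => ‖F x‖ ^ q := hF.norm.rpow_const fun _ => .inr hq.le
  have hi : Integrable fun x => ‖F x‖ ^ q :=
    hc.integrable_of_hasCompactSupport
      (hs.comp_left (g := fun v => ‖v‖ ^ q) (by simp [hq.ne']))
  rw [← ENNReal.ofReal_rpow_of_nonneg (integral_nonneg fun x => by positivity) (by positivity),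
    ofReal_integral_eq_lintegral_ofReal hi (ae_of_all _ fun x => by positivity)]
  simp_rw [← ENNReal.ofReal_rpow_of_nonneg (norm_nonneg _) hq.le, ofReal_norm]

theorem ofReal_gag_integrand {p e : ℝ} (hp : 0 < p) (F : (EE n) → V) (y z : EE n) :
    ENNReal.ofReal (‖F y - F z‖ ^ p / ‖y - z‖ ^ e) = ‖F y - F z‖ₑ ^ p / ‖y - z‖ₑ ^ e := by
  by_cases h : y = z
  · simp [h, hp, hp.ne']
  have : 0 < ‖y - z‖ := norm_pos_iff.2 (sub_ne_zero.2 h)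
  rw [ENNReal.ofReal_div_of_pos (by positivity), ← ENNReal.ofReal_rpow_of_pos this,
    ← ENNReal.ofReal_rpow_of_nonneg (norm_nonneg _) hp.le, ofReal_norm, ofReal_norm]

/-- Finiteness of the Gagliardo integral of a compactly supported Lipschitz function: the increment is
`O(|v|)` for small `v`, which suffices as `σ < 1`, and bounded for large `v`, which suffices as
`0 < σ`. It guarantees that the iterated Bochner integrals below are not junk values. -/
theorem gag_finite (hn : 1 ≤ n) {p σ : ℝ} (hp : 1 < p) (hσ : 0 < σ) (hσ1 : σ < 1)
    {F : (EE n) → V} (hs : HasCompactSupport F) {L : NNReal} (hL : LipschitzWith L F) :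
    ∫⁻ y, ∫⁻ z, ‖F y - F z‖ₑ ^ p / ‖y - z‖ₑ ^ ((n : ℝ) + σ * p) ≠ ⊤ := by
  have hp0 : 0 < p := by linarith
  have hF := hL.continuous
  obtain ⟨M, hM⟩ := hF.bounded_above_of_compact_support hs
  set e := (n : ℝ) + σ * p with he
  have he0 : 0 < e := by positivity
  set S := tsupport F with hS
  have hSm : MeasurableSet S := (isClosed_tsupport F).measurableSet
  have hSt : volume S ≠ ⊤ := hs.measure_lt_top.ne
  set g : (EE n) → ℝ≥0∞ := fun v => ∫⁻ y, ‖F y - F (y + v)‖ₑ ^ p / ‖v‖ₑ ^ e with hg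
  have hswap : ∫⁻ y, ∫⁻ z, ‖F y - F z‖ₑ ^ p / ‖y - z‖ₑ ^ e = ∫⁻ v, g v := by
    have hm : Measurable fun q : (EE n) × (EE n) =>
        ‖F q.1 - F (q.1 + q.2)‖ₑ ^ p / ‖q.2‖ₑ ^ e := by
      have h1 : Measurable fun q : (EE n) × (EE n) => ‖F q.1 - F (q.1 + q.2)‖ₑ := by
        have : Continuous fun q : (EE n) × (EE n) => ‖F q.1 - F (q.1 + q.2)‖ₑ := by fun_prop
        exact this.measurable
      fun_prop
    rw [hg, ← lintegral_lintegral_swap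
      (f := fun y v : EE n => ‖F y - F (y + v)‖ₑ ^ p / ‖v‖ₑ ^ e) hm.aemeasurable]
    congr 1 with y
    rw [← lintegral_add_left_eq_self (μ := (volume : Measure (EE n)))
      (fun z => ‖F y - F z‖ₑ ^ p / ‖y - z‖ₑ ^ e) y]
    congr 1 with v
    simp
  -- the increment `F y - F (y + v)` vanishes unless `y` or `y + v` lies in the support
  have hb : ∀ v, ∀ B : ℝ≥0∞, (∀ y, ‖F y - F (y + v)‖ₑ ≤ B) →
      g v ≤ B ^ p / ‖v‖ₑ ^ e * (2 * volume S) := by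
    intro v B hB
    have hpt : ∀ y, ‖F y - F (y + v)‖ₑ ^ p / ‖v‖ₑ ^ e ≤
        B ^ p / ‖v‖ₑ ^ e * (S.indicator 1 y + S.indicator 1 (y + v)) := by
      intro y
      by_cases h : y ∈ S ∨ y + v ∈ S
      · have h1 : (1 : ℝ≥0∞) ≤ S.indicator 1 y + S.indicator 1 (y + v) := by
          rcases h with h | h <;> simp [h]
        calc _ ≤ B ^ p / ‖v‖ₑ ^ e * 1 := by
              rw [mul_one]; gcongr; exact hB y
          _ ≤ _ := mul_le_mul' le_rfl h1
      · push Not at h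
        have h1 := image_eq_zero_of_notMem_tsupport h.1
        have h2 := image_eq_zero_of_notMem_tsupport h.2
        simp [h1, h2, hp0]
    refine (lintegral_mono hpt).trans (le_of_eq ?_)
    have hSi : Measurable (S.indicator (1 : (EE n) → ℝ≥0∞)) := measurable_one.indicator hSm
    rw [lintegral_const_mul _ (by fun_prop), lintegral_add_left hSi,
      lintegral_add_right_eq_self (fun y => S.indicator (1 : (EE n) → ℝ≥0∞) y) v,
      lintegral_indicator_one hSm, two_mul]
  rw [hswap, ← lintegral_add_compl g (measurableSet_ball (x := (0 : EE n)) (ε := 1))]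
  refine ENNReal.add_ne_top.2 ⟨?_, ?_⟩
  · have h1 : ∀ v, g v ≤ ((L : ℝ≥0∞) ^ p * (2 * volume S)) * ‖v‖ₑ ^ (p * (1 - σ) - n) := by
      intro v
      refine (hb v (L * ‖v‖ₑ) fun y => ?_).trans ?_
      · have := hL y (y + v)
        rw [edist_eq_enorm_sub, edist_eq_enorm_sub] at this
        simpa using this
      · by_cases hv : v = 0
        · simp [hv, hp0]
        · have hv0 : ‖v‖ₑ ≠ 0 := by simpa using hv
          have : p * (1 - σ) - n = p - e := by rw [he]; ring
          rw [this, ENNReal.rpow_sub _ _ hv0 enorm_ne_top, ENNReal.mul_rpow_of_nonneg _ _ hp0.le,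
            mul_div_assoc]
          exact le_of_eq (by ring)
    refine ne_top_of_le_ne_top ?_ (lintegral_mono h1)
    rw [lintegral_const_mul _ (by fun_prop),
      lintegral_ball_rpow n hn (mul_pos hp0 (by linarith)) one_pos]
    have := vol_ne_top n
    finiteness
  · have h1 : ∀ v, g v ≤ (ENNReal.ofReal (2 * M) ^ p * (2 * volume S)) *
        ‖v‖ₑ ^ (-(σ * p) - n) := by
      intro v
      refine (hb v (ENNReal.ofReal (2 * M)) fun y => ?_).trans (le_of_eq ?_)
      · rw [← ofReal_norm]
        apply ENNReal.ofReal_le_ofReal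
        linarith [norm_sub_le (F y) (F (y + v)), hM y, hM (y + v)]
      · have : -(σ * p) - n = -e := by rw [he]; ring
        rw [this, ENNReal.rpow_neg, div_eq_mul_inv]
        ring
    refine ne_top_of_le_ne_top ?_ (lintegral_mono h1)
    rw [lintegral_const_mul _ (by fun_prop),
      lintegral_compl_ball_rpow n hn (by positivity) one_pos]
    have := vol_ne_top n
    finiteness

theorem gagDensity_lp_eq_ofReal (hn : 1 ≤ n) {p σ : ℝ} (hp : 1 < p) (hσ : 0 < σ) (hσ1 : σ < 1)
    {F : (EE n) → V} (hs : HasCompactSupport F) {L : NNReal} (hL : LipschitzWith L F) :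
    (∫⁻ y, gagDensity p σ F y ^ p) ^ (1 / p) = ENNReal.ofReal
      ((∫ x, ∫ y, ‖F x - F y‖ ^ p / ‖x - y‖ ^ ((n : ℝ) + σ * p)) ^ (1 / p)) := by
  have hp0 : 0 < p := by linarith
  have hm := measurable_gag_integrand p σ hL.continuous
  have hfin := gag_finite hn hp hσ hσ1 hs hL
  rw [← ENNReal.ofReal_rpow_of_nonneg
    (integral_nonneg fun x => integral_nonneg fun y => by positivity) (by positivity)]
  congr 1
  have hinner : ∀ x, ∫ y, ‖F x - F y‖ ^ p / ‖x - y‖ ^ ((n : ℝ) + σ * p) =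
      (∫⁻ y, ‖F x - F y‖ₑ ^ p / ‖x - y‖ₑ ^ ((n : ℝ) + σ * p)).toReal := by
    intro x
    have hc := hL.continuous
    rw [integral_eq_lintegral_of_nonneg_ae (ae_of_all _ fun y => by positivity)]
    · simp_rw [ofReal_gag_integrand hp0]
    · have h1 : Measurable fun y => ‖F x - F y‖ := by
        have : Continuous fun y => ‖F x - F y‖ := by fun_prop
        exact this.measurable
      exact Measurable.aestronglyMeasurable (by fun_prop)
  simp_rw [hinner, gagDensity, ← ENNReal.rpow_mul, one_div_mul_cancel hp0.ne', ENNReal.rpow_one]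
  have hm' : Measurable fun x : EE n =>
      ∫⁻ y : EE n, ‖F x - F y‖ₑ ^ p / ‖x - y‖ₑ ^ ((n : ℝ) + σ * p) := hm.lintegral_prod_right'
  rw [integral_toReal hm'.aemeasurable (ae_lt_top hm' hfin), ENNReal.ofReal_toReal hfin]
end

/-- Minkowski's inequality: the `L^p` norm of the Sobolev density is at most the Sobolev norm. -/
theorem sobolevDensity_lp_le (n : ℕ) (hn : 1 ≤ n) {p s : ℝ} (hp : 1 < p) (hs : 0 ≤ s)
    {f : (EE n) → ℝ} (hf : ContDiff ℝ ∞ f) (hfs : HasCompactSupport f) :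
    (∫⁻ x, sobolevDensity n p s f x ^ p) ^ (1 / p) ≤ ENNReal.ofReal (sobolevNorm n p s f) := by
  have hp0 : 0 < p := by linarith
  have hmj : ∀ j, Measurable fun y => ‖iteratedFDeriv ℝ j f y‖ₑ := fun j =>
    (continuous_iter n hf j).enorm.measurable
  have hsum : ∀ m : ℕ, (∫⁻ x, (∑ j ∈ Finset.range m, ‖iteratedFDeriv ℝ j f x‖ₑ) ^ p) ^ (1 / p) ≤
      ENNReal.ofReal (∑ j ∈ Finset.range m, (∫ x, ‖iteratedFDeriv ℝ j f x‖ ^ p) ^ (1 / p)) := by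
    intro m
    induction m with
    | zero => simp [hp0]
    | succ m ih =>
      simp_rw [Finset.sum_range_succ]
      rw [ENNReal.ofReal_add (Finset.sum_nonneg fun j _ => by positivity) (by positivity)]
      refine (ENNReal.lintegral_Lp_add_le
        (f := fun x => ∑ j ∈ Finset.range m, ‖iteratedFDeriv ℝ j f x‖ₑ)
        (g := fun x => ‖iteratedFDeriv ℝ m f x‖ₑ)
        (Finset.measurable_sum _ fun j _ => hmj j).aemeasurable (hmj m).aemeasurable hp.le).trans ?_
      exact add_le_add ih (lp_eq_ofReal hp0 (continuous_iter n hf m) (hfs.iteratedFDeriv m)).le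
  by_cases hinteg : (⌊s⌋₊ : ℝ) = s
  · simp only [sobolevDensity, sobolevNorm, if_pos hinteg, add_zero, intSobolevNorm]
    exact hsum _
  · simp only [sobolevDensity, sobolevNorm, if_neg hinteg, intSobolevNorm, gagliardoSeminorm]
    have hσ : 0 < s - ⌊s⌋₊ := sub_pos.2 (lt_of_le_of_ne (Nat.floor_le hs) hinteg)
    have hσ1 : s - ⌊s⌋₊ < 1 := by linarith [Nat.lt_floor_add_one s]
    have hc1 : ContDiff ℝ 1 (iteratedFDeriv ℝ ⌊s⌋₊ f) :=
      hf.iteratedFDeriv_right (by exact_mod_cast le_top)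
    obtain ⟨L, hL⟩ := hc1.lipschitzWith_of_hasCompactSupport (hfs.iteratedFDeriv _) one_ne_zero
    rw [ENNReal.ofReal_add (Finset.sum_nonneg fun j _ => by positivity)
      (Real.rpow_nonneg (integral_nonneg fun x => integral_nonneg fun y => by positivity) _)]
    refine (ENNReal.lintegral_Lp_add_le
        (f := fun x => ∑ j ∈ Finset.range (⌊s⌋₊ + 1), ‖iteratedFDeriv ℝ j f x‖ₑ)
        (g := gagDensity p (s - ⌊s⌋₊) (iteratedFDeriv ℝ ⌊s⌋₊ f))
        (Finset.measurable_sum _ fun j _ => hmj j).aemeasurable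
        (measurable_gagDensity _ _ (continuous_iter n hf _)).aemeasurable hp.le).trans ?_
    exact add_le_add (hsum _)
      (gagDensity_lp_eq_ofReal hn hp hσ hσ1 (hfs.iteratedFDeriv _) hL).le

end

/-- Critical Sobolev embedding with controlled constants: for `s = n/p`, the `L^q` norm is
bounded by `C(n,p) ‖f‖_{W^{n/p,p}} q^{1-1/p}` for all `q ∈ [p,∞)`. -/
theorem stmt0 (n : ℕ) (hn : 1 ≤ n) (p : ℝ) (hp : 1 < p) :
    ∃ C : ℝ, ∀ f : EuclideanSpace ℝ (Fin n) → ℝ,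
      ContDiff ℝ ∞ f → HasCompactSupport f →
      ∀ q : ℝ, p ≤ q →
        (∫ x, |f x| ^ q) ^ (1 / q)
          ≤ C * sobolevNorm n p ((n : ℝ) / p) f * q ^ (1 - 1 / p) := by
  have hp0 : 0 < p := by linarith
  obtain ⟨C, hC, hbound⟩ := lq_bound n hn hp
  refine ⟨C.toReal, fun f hf hfs q hpq => ?_⟩
  have hq0 : 0 < q := by linarith
  have hnorm : 0 ≤ sobolevNorm n p ((n : ℝ) / p) f := by
    unfold sobolevNorm intSobolevNorm gagliardoSeminorm
    split_ifs
    · positivity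
    · exact add_nonneg (by positivity)
        (Real.rpow_nonneg (integral_nonneg fun x => integral_nonneg fun y => by positivity) _)
  have h := (hbound f hf q hpq).trans (mul_le_mul' (mul_le_mul' le_rfl
    (sobolevDensity_lp_le n hn hp (by positivity) hf hfs)) le_rfl)
  rw [lp_eq_ofReal hq0 hf.continuous hfs] at h
  rw [← ENNReal.ofReal_toReal hC, ← ENNReal.ofReal_mul ENNReal.toReal_nonneg,
    ← ENNReal.ofReal_mul (by positivity)] at h
  exact (ENNReal.ofReal_le_ofReal_iff (by positivity)).1 h
end

section
/- Let n ≥ 1, let u : [0,1] × ℝⁿ → ℝⁿ be continuous with continuous spatial derivative, and let φ : [0,1] × ℝⁿ → ℝⁿ be continuously differentiable in both variables with continuously differentiable spatial differential D_x φ, satisfying φ(0,x) = x and ∂_t φ(t,x) = u(t, φ(t,x)) for all t, x. Then for all (t,x), ∂_t [det(D_x φ(t,x))] = (div u)(t, φ(t,x)) · det(D_x φ(t,x)), where (div u)(t,y) denotes the trace of the spatial derivative D_y u(t,y). -/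
/-!
Differentiating the flow equation `∂ₜ φ(t, x) = u(t, φ(t, x))` in `x` gives the linear variational
equation `∂ₜ Dₓφ = Du(t, φ) ∘ Dₓφ`, and Jacobi's formula turns `A' = B A` into
`(det A)' = tr B · det A`.

The first step interchanges `∂ₜ` and `Dₓ`. This is `hasFDerivAt_of_hasDerivWithinAt_fderiv`: the
mean value inequality and the continuity of `∂ₜ Dₓφ` make the `x`-derivatives of the difference
quotients in time converge locally uniformly, so the limit of the quotients, `u(t, φ(t, ·))`, has
derivative `∂ₜ Dₓφ(t, x)`; the chain rule computes the same derivative as `Du(t, φ) ∘ Dₓφ`. The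
second step is `hasDerivWithinAt_det_of_deriv_eq_comp`, which uses the multilinearity of the
determinant in the rows and hence needs no invertibility of `A`.
-/

open MeasureTheory Set

open Filter Topology in
/-- Interchange of a spatial derivative with a time derivative taken within a convex set `s` of
times: if `f` has time derivative `g` at `t`, and its spatial derivative `f'` has at every time in
`s` a time derivative `f''` which is jointly continuous at `(t, x)`, then `f'' t x` is the spatial
derivative of `g` at `x`. -/
lemma hasFDerivAt_of_hasDerivWithinAt_fderiv {E F : Type*} [NormedAddCommGroup E]
    [NormedSpace ℝ E] [NormedAddCommGroup F] [NormedSpace ℝ F] {s : Set ℝ} (hs : Convex ℝ s)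
    {f : ℝ → E → F} {f' f'' : ℝ → E → E →L[ℝ] F} {g : E → F} {t : ℝ} (ht : t ∈ s)
    (hacc : AccPt t (𝓟 s)) {x : E}
    (hf : ∀ r ∈ s, ∀ y, HasFDerivAt (f r) (f' r y) y)
    (hg : ∀ y, HasDerivWithinAt (fun r => f r y) (g y) s t)
    (hf' : ∀ y, ∀ r ∈ s, HasDerivWithinAt (fun r => f' r y) (f'' r y) s r)
    (hcont : ContinuousWithinAt (fun q : ℝ × E => f'' q.1 q.2) (s ×ˢ univ) (t, x)) :
    HasFDerivAt g (f'' t x) x := by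
  have hne : NeBot (𝓝[s \ {t}] t) := by
    simpa only [AccPt, nhdsWithin, inf_assoc, inf_principal, sdiff_eq, inter_comm] using hacc
  have hmem : ∀ᶠ r in 𝓝[s \ {t}] t, r ∈ s \ {t} := self_mem_nhdsWithin
  -- Uniform convergence is tested along `(r, y) → (t, x)`, so the limit of the derivatives may be
  -- taken to be constant in `y`.
  refine hasFDerivAt_of_tendstoUniformlyOnFilter (l := 𝓝[s \ {t}] t) (g' := fun _ => f'' t x)
    (f := fun r y => (r - t)⁻¹ • (f r y - f t y))
    (f' := fun r y => (r - t)⁻¹ • (f' r y - f' t y)) ?_ ?_ ?_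
  · rw [Metric.tendstoUniformlyOnFilter_iff]
    intro ε hε
    obtain ⟨δ, hδ, hball⟩ := Metric.continuousWithinAt_iff.1 hcont (ε / 2) (half_pos hε)
    have hnear : ∀ᶠ r in 𝓝[s \ {t}] t, dist r t < δ :=
      nhdsWithin_le_nhds (Metric.ball_mem_nhds t hδ)
    filter_upwards [(hmem.and hnear).prod_mk (Metric.ball_mem_nhds x hδ)] with q hq
    obtain ⟨r, y⟩ := q
    obtain ⟨⟨⟨hrs, hrt⟩, hrδ⟩, hy⟩ := hq
    have hpos : 0 < ‖r - t‖ := norm_pos_iff.2 (sub_ne_zero.2 hrt)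
    have key : ‖(f' r y - r • f'' t x) - (f' t y - t • f'' t x)‖ ≤ ε / 2 * ‖r - t‖ := by
      refine Convex.norm_image_sub_le_of_norm_hasDerivWithin_le (s := s ∩ Metric.ball t δ)
        (f := fun p => f' p y - p • f'' t x) (f' := fun p => f'' p y - (1 : ℝ) • f'' t x)
        (fun p hp => ?_) (fun p hp => ?_) (hs.inter (convex_ball t δ))
        ⟨ht, Metric.mem_ball_self hδ⟩ ⟨hrs, hrδ⟩
      · exact ((hf' y p hp.1).mono inter_subset_left).sub
          ((hasDerivWithinAt_id p _).smul_const (f'' t x))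
      · rw [one_smul, ← dist_eq_norm]
        refine (hball (x := (p, y)) ⟨hp.1, mem_univ _⟩ ?_).le
        rw [Prod.dist_eq]
        exact max_lt hp.2 hy
    have hrw : (r - t)⁻¹ • (f' r y - f' t y) - f'' t x
        = (r - t)⁻¹ • ((f' r y - r • f'' t x) - (f' t y - t • f'' t x)) := by
      have : (f' r y - r • f'' t x) - (f' t y - t • f'' t x)
          = (f' r y - f' t y) - (r - t) • f'' t x := by
        rw [sub_smul]; abel
      rw [this, smul_sub _ _ ((r - t) • f'' t x), inv_smul_smul₀ (norm_pos_iff.1 hpos)]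
    rw [dist_comm, dist_eq_norm]
    change ‖(r - t)⁻¹ • (f' r y - f' t y) - f'' t x‖ < ε
    rw [hrw, norm_smul, norm_inv]
    calc ‖r - t‖⁻¹ * ‖(f' r y - r • f'' t x) - (f' t y - t • f'' t x)‖
        ≤ ‖r - t‖⁻¹ * (ε / 2 * ‖r - t‖) := by gcongr
      _ = ε / 2 := by field_simp
      _ < ε := half_lt_self hε
  · filter_upwards [hmem.prod_inl (𝓝 x)] with q hq
    exact ((hf q.1 hq.1 q.2).sub (hf t ht q.2)).const_smul _
  · exact Eventually.of_forall fun y => hasDerivWithinAt_iff_tendsto_slope.1 (hg y)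

/-- Jacobi's formula for a linear equation `A' = B A`, with no invertibility assumption on `A`. -/
lemma hasDerivWithinAt_det_of_deriv_eq_comp {E : Type*} [NormedAddCommGroup E] [NormedSpace ℝ E]
    [FiniteDimensional ℝ E] {A : ℝ → E →L[ℝ] E} {B : E →L[ℝ] E} {s : Set ℝ} {t : ℝ}
    (hA : HasDerivWithinAt A (B.comp (A t)) s t) :
    HasDerivWithinAt (fun r => LinearMap.det (A r).toLinearMap)
      (LinearMap.trace ℝ E B.toLinearMap * LinearMap.det (A t).toLinearMap) s t := by
  let b := Module.finBasis ℝ E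
  let m := Fin (Module.finrank ℝ E)
  let M : (E →L[ℝ] E) →ₗ[ℝ] (m → m → ℝ) :=
    (LinearMap.toMatrix b b).toLinearMap ∘ₗ ContinuousLinearMap.coeLM ℝ
  let D : ContinuousMultilinearMap ℝ (fun _ : m => m → ℝ) ℝ :=
    { toMultilinearMap := (Matrix.detRowAlternating (R := ℝ) (n := m)).toMultilinearMap
      cont := Continuous.matrix_det continuous_id }
  have hdet : ∀ T : E →L[ℝ] E, LinearMap.det T.toLinearMap = D (M T) := fun T =>
    (LinearMap.det_toMatrix b T.toLinearMap).symm
  have hMA : HasDerivWithinAt (fun r => M (A r)) (M (B.comp (A t))) s t :=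
    M.toContinuousLinearMap.hasFDerivAt.comp_hasDerivWithinAt t hA
  have h := (D.hasFDerivAt (M (A t))).comp_hasDerivWithinAt t hMA
  simp only [hdet]
  refine h.congr_deriv ?_
  -- The `i`-th row of `B A` is a combination of the rows of `A` with coefficients `B i k`, so
  -- substituting it for the `i`-th row of `A` multiplies the determinant by `B i i`.
  have hrow : ∀ i, M (B.comp (A t)) i = ∑ k, M B i k • M (A t) k := by
    intro i
    have hmul := LinearMap.toMatrix_comp b b b B.toLinearMap (A t).toLinearMap
    ext j
    have hij := congrFun (congrFun hmul i) j
    rw [Matrix.mul_apply] at hij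
    rw [Finset.sum_apply]
    exact hij
  rw [ContinuousMultilinearMap.linearDeriv_apply, LinearMap.trace_eq_matrix_trace ℝ b,
    Matrix.trace, Finset.sum_mul]
  refine Finset.sum_congr rfl fun i _ => ?_
  rw [hrow]
  exact Matrix.det_updateRow_sum (M (A t)) i (M B i)

/-- Liouville's formula: along the flow `φ` of a time-dependent `C¹` vector field `u` on `ℝⁿ`,
the Jacobian determinant satisfies
`∂_t det(D_x φ(t,x)) = (div u)(t, φ(t,x)) · det(D_x φ(t,x))`, where `div u` is the trace of
the spatial derivative of `u`. -/
theorem stmt3 (n : ℕ) (hn : 1 ≤ n)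
    (u : ℝ → EuclideanSpace ℝ (Fin n) → EuclideanSpace ℝ (Fin n))
    (Du : ℝ → EuclideanSpace ℝ (Fin n) →
      (EuclideanSpace ℝ (Fin n) →L[ℝ] EuclideanSpace ℝ (Fin n)))
    (φ : ℝ → EuclideanSpace ℝ (Fin n) → EuclideanSpace ℝ (Fin n))
    (Dφ : ℝ → EuclideanSpace ℝ (Fin n) →
      (EuclideanSpace ℝ (Fin n) →L[ℝ] EuclideanSpace ℝ (Fin n)))
    (DtDφ : ℝ → EuclideanSpace ℝ (Fin n) →
      (EuclideanSpace ℝ (Fin n) →L[ℝ] EuclideanSpace ℝ (Fin n)))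
    (hu_cont : ContinuousOn (fun q : ℝ × EuclideanSpace ℝ (Fin n) => u q.1 q.2)
      (Icc 0 1 ×ˢ univ))
    (hDu_cont : ContinuousOn (fun q : ℝ × EuclideanSpace ℝ (Fin n) => Du q.1 q.2)
      (Icc 0 1 ×ˢ univ))
    (hDu : ∀ t ∈ Icc (0:ℝ) 1, ∀ x, HasFDerivAt (u t) (Du t x) x)
    (hφ_cont : ContinuousOn (fun q : ℝ × EuclideanSpace ℝ (Fin n) => φ q.1 q.2)
      (Icc 0 1 ×ˢ univ))
    (hDφ_cont : ContinuousOn (fun q : ℝ × EuclideanSpace ℝ (Fin n) => Dφ q.1 q.2)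
      (Icc 0 1 ×ˢ univ))
    (hDφ : ∀ t ∈ Icc (0:ℝ) 1, ∀ x, HasFDerivAt (φ t) (Dφ t x) x)
    (hφ0 : ∀ x, φ 0 x = x)
    (hφt : ∀ x, ∀ t ∈ Icc (0:ℝ) 1,
      HasDerivWithinAt (fun s => φ s x) (u t (φ t x)) (Icc 0 1) t)
    (hDφt : ∀ x, ∀ t ∈ Icc (0:ℝ) 1,
      HasDerivWithinAt (fun s => Dφ s x) (DtDφ t x) (Icc 0 1) t)
    (hDtDφ_cont : ContinuousOn (fun q : ℝ × EuclideanSpace ℝ (Fin n) => DtDφ q.1 q.2)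
      (Icc 0 1 ×ˢ univ)) :
    ∀ t ∈ Icc (0:ℝ) 1, ∀ x,
      HasDerivWithinAt (fun s => LinearMap.det (Dφ s x).toLinearMap)
        ((LinearMap.trace ℝ (EuclideanSpace ℝ (Fin n)) (Du t (φ t x)).toLinearMap)
          * LinearMap.det (Dφ t x).toLinearMap)
        (Icc 0 1) t := by
  intro t ht x
  have hacc := uniqueDiffWithinAt_iff_accPt.1 (uniqueDiffOn_Icc zero_lt_one t ht)
  have hmixed : HasFDerivAt (fun y => u t (φ t y)) (DtDφ t x) x :=
    hasFDerivAt_of_hasDerivWithinAt_fderiv (convex_Icc 0 1) ht hacc hDφ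
      (fun y => hφt y t ht) hDφt (hDtDφ_cont (t, x) ⟨ht, mem_univ x⟩)
  have hchain : HasFDerivAt (fun y => u t (φ t y)) ((Du t (φ t x)).comp (Dφ t x)) x :=
    (hDu t ht (φ t x)).comp x (hDφ t ht x)
  have hvar := hDφt x t ht
  rw [hmixed.unique hchain] at hvar
  exact hasDerivWithinAt_det_of_deriv_eq_comp hvar
end

section
/- Let n ≥ 1, let u : [0,1] × ℝⁿ → ℝⁿ be continuous with continuous spatial derivative, and let φ : [0,1] × ℝⁿ → ℝⁿ be continuously differentiable in both variables with continuously differentiable spatial differential, satisfying φ(0,x) = x and ∂_t φ(t,x) = u(t, φ(t,x)) for all t, x. Assume that the function t ↦ sup_{y∈ℝⁿ} |(div u)(t,y)| is finite and integrable on [0,1]. Then det(D_x φ(t,x)) > 0 for all t, x, and for every x ∈ ℝⁿ, log det(D_x φ(1,x)) ≤ ∫₀¹ sup_{y∈ℝⁿ} |(div u)(t,y)| dt. -/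
open MeasureTheory Set

/-!
Differentiating the integral equation `φ(t,x) = x + ∫₀ᵗ u(s, φ(s,x)) ds` in `x` under the integral
sign gives `Dφ(t,x) = 1 + ∫₀ᵗ Du(s, φ(s,x)) ∘ Dφ(s,x) ds`, hence the variational equation
`∂ₜ Dφ = Du(t, φ) ∘ Dφ` (`flow_variational_equation`); this way no interchange of mixed partial
derivatives is needed. Jacobi's formula (`hasDerivWithinAt_clm_det`) turns it into the scalar linear
equation `d' = (div u)(t, φ) d`, `d(0) = 1`, for `d(t) = det Dφ(t,x)`, whose only solution is
`d(t) = exp ∫₀ᵗ (div u)(s, φ(s,x)) ds` (`eq_exp_integral`). Positivity is then immediate, and the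
bound on `log d(1)` follows by estimating the integrand by its supremum.
-/

/-- The derivative of an indefinite integral for an integrand continuous only on `[0,1]`: one-sided
at the end points. -/
lemma hasDerivWithinAt_integral_Icc {F : Type*} [NormedAddCommGroup F] [NormedSpace ℝ F]
    [CompleteSpace F] {f : ℝ → F} (hf : ContinuousOn f (Icc 0 1)) {t : ℝ}
    (ht : t ∈ Icc (0:ℝ) 1) :
    HasDerivWithinAt (fun s => ∫ r in (0:ℝ)..s, f r) (f t) (Icc 0 1) t := by
  -- The extension of `f` that is constant outside `[0,1]` is continuous on all of `ℝ`.
  have hg : Continuous (IccExtend (zero_le_one (α := ℝ)) ((Icc (0:ℝ) 1).domRestrict f)) :=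
    (continuousOn_iff_continuous_domRestrict.1 hf).Icc_extend'
  have heq : ∀ s ∈ Icc (0:ℝ) 1,
      IccExtend (zero_le_one (α := ℝ)) ((Icc (0:ℝ) 1).domRestrict f) s = f s := fun s hs => by
    rw [IccExtend_of_mem _ _ hs, domRestrict_apply]
  have h := (intervalIntegral.integral_hasDerivAt_right (hg.intervalIntegrable 0 t)
    (hg.stronglyMeasurableAtFilter _ _) hg.continuousAt).hasDerivWithinAt (s := Icc 0 1)
  rw [heq t ht] at h
  have hint : ∀ s ∈ Icc (0:ℝ) 1, ∫ r in (0:ℝ)..s, f r =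
      ∫ r in (0:ℝ)..s, IccExtend (zero_le_one (α := ℝ)) ((Icc (0:ℝ) 1).domRestrict f) r := by
    intro s hs
    refine intervalIntegral.integral_congr fun r hr => ?_
    rw [uIcc_of_le hs.1] at hr
    exact (heq r ⟨hr.1, hr.2.trans hs.2⟩).symm
  exact h.congr hint (hint t ht)

lemma hasDerivWithinAt_matrix_det {n : ℕ} {M : ℝ → Matrix (Fin n) (Fin n) ℝ}
    {B : Matrix (Fin n) (Fin n) ℝ} {S : Set ℝ} {t : ℝ}
    (h : ∀ i j, HasDerivWithinAt (fun s => M s i j) ((B * M t) i j) S t) :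
    HasDerivWithinAt (fun s => (M s).det) (B.trace * (M t).det) S t := by
  let f : ContinuousMultilinearMap ℝ (fun _ : Fin n => Fin n → ℝ) ℝ :=
    { (Matrix.detRowAlternating (n := Fin n) (R := ℝ)).toMultilinearMap with
      cont := Continuous.matrix_det (A := fun m : Matrix (Fin n) (Fin n) ℝ => m) continuous_id }
  have hM : HasDerivWithinAt (fun s => (M s : Fin n → Fin n → ℝ)) (B * M t) S t :=
    hasDerivWithinAt_pi.2 fun i => hasDerivWithinAt_pi.2 fun j => h i j
  have key := (f.hasFDerivAt (M t)).comp_hasDerivWithinAt t hM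
  convert! key using 1
  refine Eq.trans ?_ (ContinuousMultilinearMap.linearDeriv_apply f (M t) (B * M t)).symm
  rw [Matrix.trace, Finset.sum_mul]
  refine Finset.sum_congr rfl fun i _ => ?_
  -- Row `i` of `B * M` is a combination of the rows of `M`; only its `i`-th term contributes.
  have hrow : (B * M t) i = ∑ k, B i k • M t k := by
    ext j
    simp [Matrix.mul_apply]
  have := Matrix.det_updateRow_sum (M t) i (B i)
  rw [← hrow] at this
  exact this.symm

/-- Jacobi's formula: if `A' = B ∘ A` then `(det A)' = tr B · det A`. -/
lemma hasDerivWithinAt_clm_det {n : ℕ}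
    {A : ℝ → (EuclideanSpace ℝ (Fin n) →L[ℝ] EuclideanSpace ℝ (Fin n))}
    {B : EuclideanSpace ℝ (Fin n) →L[ℝ] EuclideanSpace ℝ (Fin n)} {S : Set ℝ} {t : ℝ}
    (h : HasDerivWithinAt A (B.comp (A t)) S t) :
    HasDerivWithinAt (fun s => LinearMap.det (A s).toLinearMap)
      (LinearMap.trace ℝ _ B.toLinearMap * LinearMap.det (A t).toLinearMap) S t := by
  let b := (EuclideanSpace.basisFun (Fin n) ℝ).toBasis
  have hd := hasDerivWithinAt_matrix_det (M := fun s => LinearMap.toMatrix b b (A s).toLinearMap)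
    (B := LinearMap.toMatrix b b B.toLinearMap) (S := S) (t := t) (fun i j => by
      rw [← LinearMap.toMatrix_comp]
      have h1 := h.clm_apply (hasDerivWithinAt_const t S (b j))
      have h2 := (EuclideanSpace.proj i :
        EuclideanSpace ℝ (Fin n) →L[ℝ] ℝ).hasFDerivAt.comp_hasDerivWithinAt t h1
      convert! h2 using 1
      · ext s
        simp [LinearMap.toMatrix_apply, b]
      · simp [LinearMap.toMatrix_apply, b])
  simp only [LinearMap.det_toMatrix] at hd
  rwa [LinearMap.trace_eq_matrix_trace ℝ b]

/-- The spatial differential of a flow solves the linearised equation along each trajectory. -/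
lemma flow_variational_equation {E : Type*} [NormedAddCommGroup E] [NormedSpace ℝ E]
    [FiniteDimensional ℝ E]
    {u : ℝ → E → E} {Du : ℝ → E → (E →L[ℝ] E)} {φ : ℝ → E → E} {Dφ : ℝ → E → (E →L[ℝ] E)}
    (hu_cont : ContinuousOn (fun q : ℝ × E => u q.1 q.2) (Icc 0 1 ×ˢ univ))
    (hDu_cont : ContinuousOn (fun q : ℝ × E => Du q.1 q.2) (Icc 0 1 ×ˢ univ))
    (hDu : ∀ t ∈ Icc (0:ℝ) 1, ∀ x, HasFDerivAt (u t) (Du t x) x)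
    (hφ_cont : ContinuousOn (fun q : ℝ × E => φ q.1 q.2) (Icc 0 1 ×ˢ univ))
    (hDφ_cont : ContinuousOn (fun q : ℝ × E => Dφ q.1 q.2) (Icc 0 1 ×ˢ univ))
    (hDφ : ∀ t ∈ Icc (0:ℝ) 1, ∀ x, HasFDerivAt (φ t) (Dφ t x) x)
    (hφ0 : ∀ x, φ 0 x = x)
    (hφt : ∀ x, ∀ t ∈ Icc (0:ℝ) 1,
      HasDerivWithinAt (fun s => φ s x) (u t (φ t x)) (Icc 0 1) t)
    (x : E) {t : ℝ} (ht : t ∈ Icc (0:ℝ) 1) :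
    HasDerivWithinAt (fun s => Dφ s x) ((Du t (φ t x)).comp (Dφ t x)) (Icc 0 1) t := by
  have : CompleteSpace E := FiniteDimensional.complete ℝ E
  have hpair : ContinuousOn (fun q : ℝ × E => (q.1, φ q.1 q.2)) (Icc 0 1 ×ˢ univ) :=
    continuousOn_fst.prodMk hφ_cont
  have hmaps : MapsTo (fun q : ℝ × E => (q.1, φ q.1 q.2)) (Icc 0 1 ×ˢ univ) (Icc 0 1 ×ˢ univ) :=
    fun q hq => ⟨hq.1, mem_univ _⟩
  have hF : ContinuousOn (fun q : ℝ × E => u q.1 (φ q.1 q.2)) (Icc 0 1 ×ˢ univ) :=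
    hu_cont.comp hpair hmaps
  have hG : ContinuousOn (fun q : ℝ × E => (Du q.1 (φ q.1 q.2)).comp (Dφ q.1 q.2))
      (Icc 0 1 ×ˢ univ) := (hDu_cont.comp hpair hmaps).clm_comp hDφ_cont
  have hslice : ∀ y : E, ContinuousOn (fun s : ℝ => (s, y)) (Icc 0 1) := fun y => by fun_prop
  have hFs : ∀ y, ContinuousOn (fun s => u s (φ s y)) (Icc 0 1) := fun y =>
    hF.comp (hslice y) fun s hs => ⟨hs, mem_univ _⟩
  have hGs : ∀ y, ContinuousOn (fun s => (Du s (φ s y)).comp (Dφ s y)) (Icc 0 1) := fun y =>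
    hG.comp (hslice y) fun s hs => ⟨hs, mem_univ _⟩
  have hsub : ∀ s ∈ Icc (0:ℝ) 1, uIoc 0 s ⊆ Icc (0:ℝ) 1 := fun s hs r hr => by
    rw [uIoc_of_le hs.1] at hr
    exact ⟨hr.1.le, hr.2.trans hs.2⟩
  have hφint : ∀ s ∈ Icc (0:ℝ) 1, ∀ y, φ s y = y + ∫ r in (0:ℝ)..s, u r (φ r y) := by
    intro s hs y
    have hss : Icc (0:ℝ) s ⊆ Icc 0 1 := Icc_subset_Icc_right hs.2
    have := intervalIntegral.integral_eq_sub_of_hasDerivAt_of_le hs.1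
      (f := fun r => φ r y) (f' := fun r => u r (φ r y))
      (fun r hr => ((hφt y r (hss hr)).continuousWithinAt).mono hss)
      (fun r hr => (hφt y r (hss (Ioo_subset_Icc_self hr))).hasDerivAt
        (Icc_mem_nhds hr.1 (hr.2.trans_le hs.2)))
      (((hFs y).mono hss).intervalIntegrable_of_Icc hs.1)
    rw [this, hφ0]
    abel
  -- A bound for the integrand's spatial derivative, uniform in time and near `x`.
  obtain ⟨C, hC⟩ := (isCompact_Icc.prod (isCompact_closedBall x 1)).exists_bound_of_continuousOn
    (hG.mono (prod_mono (Subset.refl (Icc (0:ℝ) 1)) (subset_univ (Metric.closedBall x 1))))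
  have hDφint : ∀ s ∈ Icc (0:ℝ) 1, Dφ s x =
      ContinuousLinearMap.id ℝ E + ∫ r in (0:ℝ)..s, (Du r (φ r x)).comp (Dφ r x) := by
    intro s hs
    have hss : Icc (0:ℝ) s ⊆ Icc 0 1 := Icc_subset_Icc_right hs.2
    have hd := intervalIntegral.hasFDerivAt_integral_of_dominated_of_fderiv_le
      (μ := volume) (𝕜 := ℝ) (a := 0) (b := s) (x₀ := x)
      (F := fun y r => u r (φ r y)) (F' := fun y r => (Du r (φ r y)).comp (Dφ r y))
      (bound := fun _ => C) (Metric.closedBall_mem_nhds x one_pos)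
      (Filter.Eventually.of_forall fun y =>
        ((hFs y).mono (hsub s hs)).aestronglyMeasurable measurableSet_uIoc)
      (((hFs x).mono hss).intervalIntegrable_of_Icc hs.1)
      (((hGs x).mono (hsub s hs)).aestronglyMeasurable measurableSet_uIoc)
      (Filter.Eventually.of_forall fun r hr y hy => hC (r, y) ⟨hsub s hs hr, hy⟩)
      intervalIntegrable_const
      (Filter.Eventually.of_forall fun r hr y _ =>
        (hDu r (hsub s hs hr) _).comp y (hDφ r (hsub s hs hr) y))
    have h2 := (hasFDerivAt_id x).add hd
    refine (hDφ s hs x).unique (h2.congr_of_eventuallyEq ?_)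
    exact Filter.Eventually.of_forall fun y => hφint s hs y
  have h3 := (hasDerivWithinAt_integral_Icc (hGs x) ht).const_add (ContinuousLinearMap.id ℝ E)
  exact h3.congr (fun s hs => hDφint s hs) (hDφint t ht)

lemma eq_exp_integral {d c : ℝ → ℝ} (hc : ContinuousOn c (Icc 0 1))
    (hd : ∀ t ∈ Icc (0:ℝ) 1, HasDerivWithinAt d (c t * d t) (Icc 0 1) t) (h0 : d 0 = 1)
    {t : ℝ} (ht : t ∈ Icc (0:ℝ) 1) : d t = Real.exp (∫ s in (0:ℝ)..t, c s) := by
  -- The product `d · exp (-∫ c)` has zero derivative.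
  have hder : ∀ s ∈ Icc (0:ℝ) 1, HasDerivWithinAt
      (fun s => d s * Real.exp (-∫ r in (0:ℝ)..s, c r)) 0 (Icc 0 1) s := by
    intro s hs
    convert! (hd s hs).mul (hasDerivWithinAt_integral_Icc hc hs).neg.exp using 1
    ring
  have hconst := constant_of_derivWithin_zero (fun s hs => (hder s hs).differentiableWithinAt)
    (fun s hs => (hder s (Ico_subset_Icc_self hs)).derivWithin
      (uniqueDiffOn_Icc zero_lt_one s (Ico_subset_Icc_self hs))) t ht
  simp only [intervalIntegral.integral_same, h0, neg_zero, Real.exp_zero, mul_one,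
    Real.exp_neg] at hconst
  field_simp at hconst
  exact hconst

/-- Along the flow `φ` of a time-dependent `C¹` vector field `u` on `ℝⁿ`, if
`t ↦ sup_y |(div u)(t,y)|` is finite and integrable on `[0,1]`, then the Jacobian determinant
of the flow is positive and `log det(D_x φ(1,x)) ≤ ∫₀¹ sup_y |(div u)(t,y)| dt`. -/
theorem stmt4 (n : ℕ) (hn : 1 ≤ n)
    (u : ℝ → EuclideanSpace ℝ (Fin n) → EuclideanSpace ℝ (Fin n))
    (Du : ℝ → EuclideanSpace ℝ (Fin n) →
      (EuclideanSpace ℝ (Fin n) →L[ℝ] EuclideanSpace ℝ (Fin n)))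
    (φ : ℝ → EuclideanSpace ℝ (Fin n) → EuclideanSpace ℝ (Fin n))
    (Dφ : ℝ → EuclideanSpace ℝ (Fin n) →
      (EuclideanSpace ℝ (Fin n) →L[ℝ] EuclideanSpace ℝ (Fin n)))
    (DtDφ : ℝ → EuclideanSpace ℝ (Fin n) →
      (EuclideanSpace ℝ (Fin n) →L[ℝ] EuclideanSpace ℝ (Fin n)))
    (hu_cont : ContinuousOn (fun q : ℝ × EuclideanSpace ℝ (Fin n) => u q.1 q.2)
      (Icc 0 1 ×ˢ univ))
    (hDu_cont : ContinuousOn (fun q : ℝ × EuclideanSpace ℝ (Fin n) => Du q.1 q.2)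
      (Icc 0 1 ×ˢ univ))
    (hDu : ∀ t ∈ Icc (0:ℝ) 1, ∀ x, HasFDerivAt (u t) (Du t x) x)
    (hφ_cont : ContinuousOn (fun q : ℝ × EuclideanSpace ℝ (Fin n) => φ q.1 q.2)
      (Icc 0 1 ×ˢ univ))
    (hDφ_cont : ContinuousOn (fun q : ℝ × EuclideanSpace ℝ (Fin n) => Dφ q.1 q.2)
      (Icc 0 1 ×ˢ univ))
    (hDφ : ∀ t ∈ Icc (0:ℝ) 1, ∀ x, HasFDerivAt (φ t) (Dφ t x) x)
    (hφ0 : ∀ x, φ 0 x = x)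
    (hφt : ∀ x, ∀ t ∈ Icc (0:ℝ) 1,
      HasDerivWithinAt (fun s => φ s x) (u t (φ t x)) (Icc 0 1) t)
    (hDφt : ∀ x, ∀ t ∈ Icc (0:ℝ) 1,
      HasDerivWithinAt (fun s => Dφ s x) (DtDφ t x) (Icc 0 1) t)
    (hDtDφ_cont : ContinuousOn (fun q : ℝ × EuclideanSpace ℝ (Fin n) => DtDφ q.1 q.2)
      (Icc 0 1 ×ˢ univ))
    (hbdd : ∀ t ∈ Icc (0:ℝ) 1, BddAbove (Set.range fun y =>
      |LinearMap.trace ℝ (EuclideanSpace ℝ (Fin n)) (Du t y).toLinearMap|))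
    (hint : IntervalIntegrable (fun t => ⨆ y : EuclideanSpace ℝ (Fin n),
      |LinearMap.trace ℝ (EuclideanSpace ℝ (Fin n)) (Du t y).toLinearMap|) volume 0 1) :
    (∀ t ∈ Icc (0:ℝ) 1, ∀ x, 0 < LinearMap.det (Dφ t x).toLinearMap) ∧
    ∀ x, Real.log (LinearMap.det (Dφ 1 x).toLinearMap)
      ≤ ∫ t in (0:ℝ)..1, ⨆ y : EuclideanSpace ℝ (Fin n),
          |LinearMap.trace ℝ (EuclideanSpace ℝ (Fin n)) (Du t y).toLinearMap| := by
  have hdiv : ∀ x, ContinuousOn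
      (fun t => LinearMap.trace ℝ (EuclideanSpace ℝ (Fin n)) (Du t (φ t x)).toLinearMap)
      (Icc 0 1) := by
    intro x
    have h1 : ContinuousOn (fun t => (t, φ t x)) (Icc (0:ℝ) 1) :=
      continuousOn_id.prodMk fun t ht => (hφt x t ht).continuousWithinAt
    have h2 : ContinuousOn (fun t => Du t (φ t x)) (Icc (0:ℝ) 1) :=
      hDu_cont.comp h1 fun t ht => ⟨ht, mem_univ _⟩
    have h3 : Continuous (((LinearMap.trace ℝ (EuclideanSpace ℝ (Fin n))).comp
        (ContinuousLinearMap.coeLM ℝ))) := LinearMap.continuous_of_finiteDimensional _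
    exact h3.comp_continuousOn h2
  have hexp : ∀ x, ∀ t ∈ Icc (0:ℝ) 1, LinearMap.det (Dφ t x).toLinearMap =
      Real.exp (∫ s in (0:ℝ)..t,
        LinearMap.trace ℝ (EuclideanSpace ℝ (Fin n)) (Du s (φ s x)).toLinearMap) := by
    intro x t ht
    have hid : Dφ 0 x = ContinuousLinearMap.id ℝ _ := by
      have h := hDφ 0 (by simp) x
      rw [show φ 0 = id from funext hφ0] at h
      exact h.unique (hasFDerivAt_id x)
    refine eq_exp_integral (d := fun t => LinearMap.det (Dφ t x).toLinearMap) (hdiv x)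
      (fun s hs => hasDerivWithinAt_clm_det (flow_variational_equation hu_cont hDu_cont hDu hφ_cont
        hDφ_cont hDφ hφ0 hφt x hs)) ?_ ht
    simp [hid]
  refine ⟨fun t ht x => ?_, fun x => ?_⟩
  · rw [hexp x t ht]
    exact Real.exp_pos _
  · rw [hexp x 1 (by simp), Real.log_exp]
    exact intervalIntegral.integral_mono_on zero_le_one
      ((hdiv x).intervalIntegrable_of_Icc zero_le_one) hint
      fun t ht => (le_abs_self _).trans (le_ciSup (hbdd t ht) (φ t x))
end

section
/- Let q ∈ [1,∞) and let f, g : [0,1] → ℝ be continuous, strictly positive functions with ‖f‖_{L^q([0,1])} = ‖g‖_{L^q([0,1])} = q. For t ∈ [0,1] set f̃_t = (1−t)f + t g and F_t = q · f̃_t / ‖f̃_t‖_{L^q([0,1])}. Then for each t, F_t is strictly positive with ‖F_t‖_{L^q([0,1])} = q, the map t ↦ F_t(θ) is differentiable in t for each θ, and the L^q-length of the path satisfies ∫₀¹ (∫₀¹ |∂_t F_t(θ)|^q dθ)^{1/q} dt ≤ 8q. -/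
/-!
Write `h t = (1 - t) f + t g`, `u = g - f` and `N t = ‖h t‖` for the `L^q` norm on `[0,1]`.
Since `f, g > 0`, either `h t ≥ f / 2` or `h t ≥ g / 2` pointwise, so `N t ≥ q / 2` for
`t ∈ [0,1]` (`half_le_LqNorm_homotopy`). Because `h t` is bounded away from zero on the compact
interval, `N` can be differentiated under the integral sign (`hasDerivAt_LqNorm_homotopy`), and
Minkowski's inequality makes `N` Lipschitz with constant `‖u‖ ≤ 2q`, so that `|N' t| ≤ 2q`. Hence
`∂_t F = (q / N) u - (q N' / N²) h` satisfies
`‖∂_t F‖ ≤ (q / N) (‖u‖ + |N'|) ≤ (q / N) (4q) ≤ 8q`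
for every `t ∈ [0,1]`, and the length bound follows by integrating over `t`.
-/

open MeasureTheory Set

/-- The `L^q([0,1])` norm, `‖f‖_{L^q} = (∫₀¹ |f|^q)^{1/q}`. -/
noncomputable def LqNorm (q : ℝ) (f : ℝ → ℝ) : ℝ :=
  (∫ θ in (0:ℝ)..1, |f θ| ^ q) ^ (1 / q)

/-- For functions continuous on `[0,1]`, `LqNorm` is Mathlib's `lpNorm` for the restricted
Lebesgue measure. -/
lemma LqNorm_eq_lpNorm {q : ℝ} (hq : 1 ≤ q) {u : ℝ → ℝ} (hu : ContinuousOn u (Icc 0 1)) :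
    LqNorm q u = lpNorm u (ENNReal.ofReal q) (volume.restrict (Icc 0 1)) := by
  have hq0 : 0 < q := by linarith
  rw [lpNorm_eq_integral_norm_rpow_toReal (by simpa using hq0) (by simp)
    (hu.aestronglyMeasurable measurableSet_Icc), ENNReal.toReal_ofReal hq0.le, LqNorm,
    intervalIntegral.integral_of_le zero_le_one, integral_Icc_eq_integral_Ioc, one_div]
  rfl

lemma memLp_of_continuousOn_Icc {u : ℝ → ℝ} (hu : ContinuousOn u (Icc 0 1)) (p : ENNReal) :
    MemLp u p (volume.restrict (Icc (0:ℝ) 1)) := by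
  obtain ⟨C, hC⟩ := isCompact_Icc.exists_bound_of_continuousOn hu
  exact MemLp.of_bound (hu.aestronglyMeasurable measurableSet_Icc) C
    (ae_restrict_of_forall_mem measurableSet_Icc hC)

lemma LqNorm_const_mul {q : ℝ} (hq : 1 ≤ q) {u : ℝ → ℝ} (hu : ContinuousOn u (Icc 0 1)) (c : ℝ) :
    LqNorm q (fun θ => c * u θ) = |c| * LqNorm q u := by
  rw [LqNorm_eq_lpNorm hq hu, LqNorm_eq_lpNorm hq (u := fun θ => c * u θ) (continuousOn_const.mul hu)]
  exact lpNorm_const_smul c u _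

/-- Minkowski's inequality for linear combinations. -/
lemma LqNorm_lin_le {q : ℝ} (hq : 1 ≤ q) {u v : ℝ → ℝ} (hu : ContinuousOn u (Icc 0 1))
    (hv : ContinuousOn v (Icc 0 1)) (a b : ℝ) :
    LqNorm q (fun θ => a * u θ + b * v θ) ≤ |a| * LqNorm q u + |b| * LqNorm q v := by
  have ha : ContinuousOn (fun θ => a * u θ) (Icc 0 1) := continuousOn_const.mul hu
  have hb : ContinuousOn (fun θ => b * v θ) (Icc 0 1) := continuousOn_const.mul hv
  rw [← LqNorm_const_mul hq hu, ← LqNorm_const_mul hq hv, LqNorm_eq_lpNorm hq ha,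
    LqNorm_eq_lpNorm hq hb,
    LqNorm_eq_lpNorm hq (u := fun θ => a * u θ + b * v θ) (ha.add hb)]
  exact lpNorm_add_le (memLp_of_continuousOn_Icc ha _) (by simpa using hq)

lemma LqNorm_mono {q : ℝ} (hq : 1 ≤ q) {u v : ℝ → ℝ} (hu : ContinuousOn u (Icc 0 1))
    (hv : ContinuousOn v (Icc 0 1)) (h : ∀ θ ∈ Icc (0:ℝ) 1, |u θ| ≤ |v θ|) :
    LqNorm q u ≤ LqNorm q v := by
  have hq0 : 0 ≤ q := by linarith
  have key : ∀ w : ℝ → ℝ, ContinuousOn w (Icc 0 1) →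
      IntervalIntegrable (fun θ => |w θ| ^ q) volume 0 1 := fun w hw =>
    ContinuousOn.intervalIntegrable_of_Icc zero_le_one
      (hw.abs.rpow_const fun _ _ => Or.inr hq0)
  unfold LqNorm
  refine Real.rpow_le_rpow ?_ ?_ (by positivity)
  · exact intervalIntegral.integral_nonneg zero_le_one fun _ _ => by positivity
  · exact intervalIntegral.integral_mono_on zero_le_one (key u hu) (key v hv)
      fun θ hθ => Real.rpow_le_rpow (abs_nonneg _) (h θ hθ) hq0

lemma continuousOn_lin {f g : ℝ → ℝ} (hf : ContinuousOn f (Icc 0 1))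
    (hg : ContinuousOn g (Icc 0 1)) (a b : ℝ) :
    ContinuousOn (fun θ => a * f θ + b * g θ) (Icc 0 1) :=
  (continuousOn_const.mul hf).add (continuousOn_const.mul hg)

lemma half_le_LqNorm_homotopy {q : ℝ} (hq : 1 ≤ q) {f g : ℝ → ℝ}
    (hf : ContinuousOn f (Icc 0 1)) (hg : ContinuousOn g (Icc 0 1))
    (hf_pos : ∀ θ ∈ Icc (0:ℝ) 1, 0 < f θ) (hg_pos : ∀ θ ∈ Icc (0:ℝ) 1, 0 < g θ)
    (hf_norm : LqNorm q f = q) (hg_norm : LqNorm q g = q) {t : ℝ} (ht : t ∈ Icc (0:ℝ) 1) :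
    q / 2 ≤ LqNorm q (fun θ => (1 - t) * f θ + t * g θ) := by
  have key : ∀ w : ℝ → ℝ, ContinuousOn w (Icc 0 1) → LqNorm q w = q →
      (∀ θ ∈ Icc (0:ℝ) 1, 0 ≤ w θ ∧ 1 / 2 * w θ ≤ (1 - t) * f θ + t * g θ) →
      q / 2 ≤ LqNorm q (fun θ => (1 - t) * f θ + t * g θ) := by
    intro w hw hwn hle
    calc q / 2 = LqNorm q (fun θ => 1 / 2 * w θ) := by
          rw [LqNorm_const_mul hq hw, hwn, abs_of_pos (by norm_num)]; ring
      _ ≤ _ := by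
          refine LqNorm_mono hq (continuousOn_const.mul hw) (continuousOn_lin hf hg _ _)
            fun θ hθ => ?_
          obtain ⟨h0, h1⟩ := hle θ hθ
          exact abs_le_abs_of_nonneg (by positivity) h1
  obtain ⟨ht0, ht1⟩ := ht
  rcases le_total t (1 / 2) with h | h
  · refine key f hf hf_norm fun θ hθ => ⟨(hf_pos θ hθ).le, ?_⟩
    nlinarith [hf_pos θ hθ, mul_nonneg ht0 (hg_pos θ hθ).le]
  · refine key g hg hg_norm fun θ hθ => ⟨(hg_pos θ hθ).le, ?_⟩
    nlinarith [hg_pos θ hθ, mul_nonneg (sub_nonneg.2 ht1) (hf_pos θ hθ).le]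

/-- Differentiation under the integral sign. For `s` near `t` the homotopy stays positive on
`[0,1]`, since it has a positive minimum at time `t`; this avoids the point `0`, where `|x| ^ q`
is not differentiable when `q = 1`. -/
lemma hasDerivAt_LqNorm_homotopy {q : ℝ} (hq : 1 ≤ q) {f g : ℝ → ℝ}
    (hf : ContinuousOn f (Icc 0 1)) (hg : ContinuousOn g (Icc 0 1)) {t : ℝ}
    (hpos : ∀ θ ∈ Icc (0:ℝ) 1, 0 < (1 - t) * f θ + t * g θ)
    (hN : 0 < LqNorm q (fun θ => (1 - t) * f θ + t * g θ)) :
    ∃ N', HasDerivAt (fun s => LqNorm q (fun θ => (1 - s) * f θ + s * g θ)) N' t := by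
  have hq0 : 0 < q := by linarith
  have hh : ∀ s, ContinuousOn (fun θ => (1 - s) * f θ + s * g θ) (Icc 0 1) :=
    fun s => continuousOn_lin hf hg _ _
  obtain ⟨θ₀, hθ₀, hmin⟩ := isCompact_Icc.exists_isMinOn (nonempty_Icc.2 zero_le_one) (hh t)
  obtain ⟨M, hM⟩ := isCompact_Icc.exists_bound_of_continuousOn (hh t)
  obtain ⟨K, hK⟩ := isCompact_Icc.exists_bound_of_continuousOn (hg.sub hf)
  set m := (1 - t) * f θ₀ + t * g θ₀ with hm
  have hm0 : 0 < m := hpos θ₀ hθ₀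
  have hK0 : 0 ≤ K := (norm_nonneg _).trans (hK θ₀ hθ₀)
  -- This radius gives `|s - t| * |g θ - f θ| < m`.
  set ε := m / (K + 1) with hε
  have hε0 : 0 < ε := by positivity
  have hnear : ∀ θ ∈ Icc (0:ℝ) 1, ∀ s ∈ Metric.ball t ε,
      0 < (1 - s) * f θ + s * g θ ∧ (1 - s) * f θ + s * g θ ≤ M + m := by
    intro θ hθ s hs
    rw [Metric.mem_ball, Real.dist_eq] at hs
    have h1 : m ≤ (1 - t) * f θ + t * g θ := hmin hθ
    have h2 : (1 - t) * f θ + t * g θ ≤ M := (le_abs_self _).trans (hM θ hθ)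
    have h3 : |(s - t) * (g θ - f θ)| < m := by
      rw [abs_mul]
      calc |s - t| * |g θ - f θ| ≤ |s - t| * (K + 1) :=
            mul_le_mul_of_nonneg_left ((hK θ hθ).trans (by linarith)) (abs_nonneg _)
        _ < ε * (K + 1) := by gcongr
        _ = m := by rw [hε]; field_simp
    obtain ⟨h4, h5⟩ := abs_lt.1 h3
    constructor <;> linarith
  have hcont : ∀ s, ContinuousOn (fun θ => |(1 - s) * f θ + s * g θ| ^ q) (Icc 0 1) :=
    fun s => (hh s).abs.rpow_const fun _ _ => Or.inr hq0.le
  have hsub : uIoc (0:ℝ) 1 ⊆ Icc 0 1 := by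
    rw [uIoc_of_le zero_le_one]; exact Ioc_subset_Icc_self
  have hmeas : ∀ w : ℝ → ℝ, ContinuousOn w (Icc 0 1) →
      AEStronglyMeasurable w (volume.restrict (uIoc (0:ℝ) 1)) := fun w hw =>
    (hw.mono hsub).aestronglyMeasurable measurableSet_uIoc
  have hI := (intervalIntegral.hasDerivAt_integral_of_dominated_loc_of_deriv_le
    (μ := volume) (a := 0) (b := 1) (x₀ := t) (s := Metric.ball t ε)
    (F := fun s θ => |(1 - s) * f θ + s * g θ| ^ q)
    (F' := fun s θ => (g θ - f θ) * q * ((1 - s) * f θ + s * g θ) ^ (q - 1))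
    (bound := fun _ => K * q * (M + m) ^ (q - 1))
    (Metric.ball_mem_nhds t hε0)
    (Filter.Eventually.of_forall fun s => hmeas _ (hcont s))
    (ContinuousOn.intervalIntegrable_of_Icc zero_le_one (hcont t))
    (hmeas _ (((hg.sub hf).mul continuousOn_const).mul
      ((hh t).rpow_const fun _ _ => Or.inr (by linarith))))
    (Filter.Eventually.of_forall fun θ hθ s hs => ?_)
    intervalIntegrable_const
    (Filter.Eventually.of_forall fun θ hθ s hs => ?_)).2
  · -- The integral is nonzero because its `1 / q`-th power is the positive number `N t`.
    refine ⟨_, hI.rpow_const (p := 1 / q) (Or.inl fun h0 => ?_)⟩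
    rw [LqNorm, h0, Real.zero_rpow (by positivity)] at hN
    exact lt_irrefl _ hN
  · obtain ⟨h1, h2⟩ := hnear θ (hsub hθ) s hs
    have h3 : |g θ - f θ| ≤ K := hK θ (hsub hθ)
    rw [Real.norm_eq_abs, abs_mul, abs_mul, abs_of_pos hq0,
      abs_of_nonneg (Real.rpow_nonneg h1.le _)]
    have h4 := Real.rpow_le_rpow h1.le h2 (show 0 ≤ q - 1 by linarith)
    gcongr
  · obtain ⟨h1, -⟩ := hnear θ (hsub hθ) s hs
    have hd : HasDerivAt (fun s => (1 - s) * f θ + s * g θ) (g θ - f θ) s := by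
      refine ((((hasDerivAt_id s).const_sub 1).mul_const (f θ)).add
        ((hasDerivAt_id s).mul_const (g θ))).congr_deriv ?_
      ring
    refine (hd.rpow_const (p := q) (Or.inr hq)).congr_of_eventuallyEq ?_
    filter_upwards [Metric.isOpen_ball.mem_nhds hs] with r hr
    rw [abs_of_pos (hnear θ (hsub hθ) r hr).1]

/-- The normalized affine homotopy `F_t = q·((1−t)f+tg)/‖(1−t)f+tg‖_{L^q}` between two points
`f, g` of the positive `L^q`-sphere of radius `q` stays on that sphere, is differentiable in
time, and its `L^q`-length is at most `8q`. -/
theorem stmt6 (q : ℝ) (hq : 1 ≤ q) (f g : ℝ → ℝ)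
    (hf_cont : ContinuousOn f (Icc 0 1)) (hg_cont : ContinuousOn g (Icc 0 1))
    (hf_pos : ∀ θ ∈ Icc (0:ℝ) 1, 0 < f θ) (hg_pos : ∀ θ ∈ Icc (0:ℝ) 1, 0 < g θ)
    (hf_norm : LqNorm q f = q) (hg_norm : LqNorm q g = q)
    (F : ℝ → ℝ → ℝ)
    (hF : ∀ t θ, F t θ
      = q * ((1 - t) * f θ + t * g θ) / LqNorm q (fun θ' => (1 - t) * f θ' + t * g θ')) :
    (∀ t ∈ Icc (0:ℝ) 1,
      (∀ θ ∈ Icc (0:ℝ) 1, 0 < F t θ) ∧ LqNorm q (F t) = q) ∧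
    (∀ θ ∈ Icc (0:ℝ) 1, ∀ t ∈ Icc (0:ℝ) 1,
      DifferentiableWithinAt ℝ (fun s => F s θ) (Icc 0 1) t) ∧
    ∫ t in (0:ℝ)..1,
        (∫ θ in (0:ℝ)..1, |derivWithin (fun s => F s θ) (Icc 0 1) t| ^ q) ^ (1 / q)
      ≤ 8 * q := by
  have hq0 : 0 < q := by linarith
  set N : ℝ → ℝ := fun t => LqNorm q (fun θ => (1 - t) * f θ + t * g θ) with hNdef
  have hF' : ∀ t θ, F t θ = q * ((1 - t) * f θ + t * g θ) / N t := hF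
  have hh : ∀ s, ContinuousOn (fun θ => (1 - s) * f θ + s * g θ) (Icc 0 1) :=
    fun s => continuousOn_lin hf_cont hg_cont _ _
  have hpos : ∀ t ∈ Icc (0:ℝ) 1, ∀ θ ∈ Icc (0:ℝ) 1, 0 < (1 - t) * f θ + t * g θ := by
    rintro t ⟨ht0, ht1⟩ θ hθ
    rcases ht0.eq_or_lt with rfl | ht0
    · simpa using hf_pos θ hθ
    · have h1 := mul_pos ht0 (hg_pos θ hθ)
      have h2 := mul_nonneg (sub_nonneg.2 ht1) (hf_pos θ hθ).le
      linarith
  have hNlow : ∀ t ∈ Icc (0:ℝ) 1, q / 2 ≤ N t := fun t ht =>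
    half_le_LqNorm_homotopy hq hf_cont hg_cont hf_pos hg_pos hf_norm hg_norm ht
  have hNpos : ∀ t ∈ Icc (0:ℝ) 1, 0 < N t := fun t ht =>
    lt_of_lt_of_le (by positivity) (hNlow t ht)
  have hu_cont : ContinuousOn (fun θ => 1 * g θ + (-1) * f θ) (Icc 0 1) :=
    continuousOn_lin hg_cont hf_cont _ _
  set U := LqNorm q (fun θ => 1 * g θ + (-1) * f θ) with hU
  have hU2 : U ≤ 2 * q := by
    have := LqNorm_lin_le hq hg_cont hf_cont 1 (-1)
    rw [hf_norm, hg_norm, abs_neg, abs_one] at this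
    linarith
  have hU0 : 0 ≤ U := by
    rw [hU, LqNorm_eq_lpNorm hq hu_cont]; exact lpNorm_nonneg
  have hNle : ∀ s t, N s ≤ N t + |s - t| * U := by
    intro s t
    have h1 := LqNorm_lin_le hq (hh t) hu_cont 1 (s - t)
    rw [abs_one, one_mul] at h1
    exact le_trans (le_of_eq (congrArg (LqNorm q) (funext fun θ => by ring))) h1
  have hNder : ∀ t ∈ Icc (0:ℝ) 1, ∃ N', HasDerivAt N N' t ∧ |N'| ≤ U := by
    intro t ht
    obtain ⟨N', hN'⟩ := hasDerivAt_LqNorm_homotopy hq hf_cont hg_cont (hpos t ht) (hNpos t ht)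
    refine ⟨N', hN', ?_⟩
    have h := hN'.hasFDerivAt.le_of_lip' hU0 (Filter.Eventually.of_forall fun s => by
      have h1 := hNle s t
      have h2 := hNle t s
      rw [abs_sub_comm t s] at h2
      rw [Real.norm_eq_abs, Real.norm_eq_abs, abs_le]
      constructor <;> linarith)
    simpa using h
  have hFder : ∀ t ∈ Icc (0:ℝ) 1, ∀ N', HasDerivAt N N' t → ∀ θ,
      HasDerivAt (fun s => F s θ)
        (q / N t * (1 * g θ + (-1) * f θ)
          + (-(q * N' / N t ^ 2)) * ((1 - t) * f θ + t * g θ)) t := by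
    intro t ht N' hN' θ
    have hd : HasDerivAt (fun s => q * ((1 - s) * f θ + s * g θ)) (q * (g θ - f θ)) t := by
      refine (((((hasDerivAt_id t).const_sub 1).mul_const (f θ)).add
        ((hasDerivAt_id t).mul_const (g θ))).const_mul q).congr_deriv ?_
      ring
    have hne := (hNpos t ht).ne'
    have hfun : (fun s => F s θ) = fun s => q * ((1 - s) * f θ + s * g θ) / N s :=
      funext fun s => hF' s θ
    rw [hfun]
    refine (hd.div hN' hne).congr_deriv ?_
    field_simp
    ring
  refine ⟨fun t ht => ⟨fun θ hθ => ?_, ?_⟩, fun θ _ t ht => ?_, ?_⟩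
  · rw [hF']
    exact div_pos (mul_pos hq0 (hpos t ht θ hθ)) (hNpos t ht)
  · have hfun : F t = fun θ => q / N t * ((1 - t) * f θ + t * g θ) :=
      funext fun θ => by rw [hF']; ring
    rw [hfun, LqNorm_const_mul hq (hh t), abs_of_pos (div_pos hq0 (hNpos t ht))]
    exact div_mul_cancel₀ q (hNpos t ht).ne'
  · obtain ⟨N', hN', -⟩ := hNder t ht
    exact (hFder t ht N' hN' θ).differentiableAt.differentiableWithinAt
  -- The pointwise bound on the speed gives the bound on its integral even without knowing that
  -- the speed is integrable, as a non-integrable function has integral `0`.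
  · suffices h : ∀ t ∈ uIoc (0:ℝ) 1, ‖(∫ θ in (0:ℝ)..1,
        |derivWithin (fun s => F s θ) (Icc 0 1) t| ^ q) ^ (1 / q)‖ ≤ 8 * q by
      have h1 := intervalIntegral.norm_integral_le_of_norm_le_const h
      rw [sub_zero, abs_one, mul_one] at h1
      exact (le_abs_self _).trans h1
    intro t ht
    rw [uIoc_of_le zero_le_one] at ht
    replace ht : t ∈ Icc (0:ℝ) 1 := Ioc_subset_Icc_self ht
    obtain ⟨N', hN', hN'U⟩ := hNder t ht
    have hfun : (fun θ => derivWithin (fun s => F s θ) (Icc 0 1) t) = fun θ =>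
        q / N t * (1 * g θ + (-1) * f θ)
          + (-(q * N' / N t ^ 2)) * ((1 - t) * f θ + t * g θ) := funext fun θ =>
      (hFder t ht N' hN' θ).hasDerivWithinAt.derivWithin
        (uniqueDiffOn_Icc zero_lt_one t ht)
    change ‖LqNorm q (fun θ => derivWithin (fun s => F s θ) (Icc 0 1) t)‖ ≤ 8 * q
    rw [hfun, Real.norm_eq_abs, abs_of_nonneg (by
      rw [LqNorm_eq_lpNorm hq (continuousOn_lin hu_cont (hh t) _ _)]; exact lpNorm_nonneg)]
    have hNt := hNpos t ht
    calc _ ≤ |q / N t| * U + |-(q * N' / N t ^ 2)| * N t :=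
          LqNorm_lin_le hq hu_cont (hh t) _ _
      _ = q * (U + |N'|) / N t := by
          rw [abs_neg, abs_div, abs_div, abs_mul, abs_of_pos hq0, abs_of_pos hNt,
            abs_of_pos (pow_pos hNt 2)]
          field_simp
      _ ≤ 8 * q := by
          rw [div_le_iff₀ hNt]
          nlinarith [hNlow t ht]
end

section
/- Let q ∈ [1,∞) and let φ : [0,1] → [0,1] be a smooth increasing bijection of [0,1] (φ(0)=0, φ(1)=1, φ' > 0). Then there exists a smooth map Φ : [0,1] × [0,1] → [0,1] such that Φ(0,x) = x and Φ(1,x) = φ(x) for all x, for each t ∈ [0,1] the map x ↦ Φ(t,x) is a smooth increasing bijection of [0,1], and the homogeneous W^{1,q}-length of the path satisfies ∫₀¹ (∫₀¹ (∂_x Φ(t,x))^{1−q} |∂_t ∂_x Φ(t,x)|^q dx)^{1/q} dt ≤ 8q. -/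
/-!
Substituting `∂ₓΦ = g ^ q` turns the `Ẇ^{1,q}`-length into `q` times the length of `t ↦ g(t, ·)` in
`L^q`, and `g(t, ·)` runs on the unit sphere of `L^q`. On that sphere `1` and `ψ = (φ') ^ (1/q)` are
joined by normalizing the straight segment `h = (1 - τ) + τ ψ`; since `‖ψ - 1‖ ≤ 2` and
`‖h‖ ≥ max (1 - τ) τ ≥ 1/2`, and since normalizing at most doubles the speed relative to `‖h‖`, the
length is at most `q · 2 · 2 / (1/2) = 8q`.

In terms of densities, put `N(t) = ∫₀¹ h ^ q`, `f = h ^ q / N` and `Φ(t, x) = ∫₀ˣ f(t, y) dy`. Then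
`∂ₜ f = f (v - ∫₀¹ f v)` with `v = q ∂ₜh / h` (`hasDerivAt_density`), so the inner integral is
`∫ f |v - ∫ f v| ^ q`, which is at most `2 ^ q ∫ f |v| ^ q = (2q) ^ q ∫ |∂ₜh| ^ q / N` by Jensen's
inequality (`speed_le`). For the segment this is at most `(8 q τ') ^ q` (`speed_affinePath_le`), and
`∫₀¹ τ' = 1`.

The path must be smooth on all of `ℝ × ℝ`, although `φ'` is positive only near `[0,1]` and the
segment need not be positive for parameters far from `[0,1]`. Hence `φ'` is replaced by a
globally positive smooth function with the same values on `[0,1]` (`exists_pos_extension`), and the segment is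
parametrized by `τ(t) = sin² (π t / 2)`, which never leaves `[0,1]`.
-/

open MeasureTheory Set
open scoped ContDiff

/-! ### Smoothness of integrals depending on a parameter -/

theorem hasFDerivAt_param {E G : Type} [NormedAddCommGroup E] [NormedSpace ℝ E] [ProperSpace E]
    [NormedAddCommGroup G] [NormedSpace ℝ G] {F : E × ℝ → G} (hF : ContDiff ℝ 1 F) (p : E) :
    HasFDerivAt (fun p => ∫ s in (0:ℝ)..1, F (p, s))
      (∫ s in (0:ℝ)..1, (fderiv ℝ F (p, s)).comp (ContinuousLinearMap.inl ℝ E ℝ)) p := by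
  have hc : Continuous fun z : E × ℝ => (fderiv ℝ F z).comp (ContinuousLinearMap.inl ℝ E ℝ) :=
    (hF.continuous_fderiv (by norm_num)).clm_comp continuous_const
  have hFc := hF.continuous
  obtain ⟨C, hC⟩ := ((isCompact_closedBall p 1).prod
    (isCompact_Icc (a := (0:ℝ)) (b := 1))).exists_bound_of_continuousOn hc.continuousOn
  refine intervalIntegral.hasFDerivAt_integral_of_dominated_of_fderiv_le
    (F := fun p s => F (p, s)) (bound := fun _ => C)
    (F' := fun p s => (fderiv ℝ F (p, s)).comp (ContinuousLinearMap.inl ℝ E ℝ))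
    (Metric.closedBall_mem_nhds p one_pos) ?_ ?_ ?_ ?_ ?_ ?_
  · exact Filter.Eventually.of_forall fun x =>
      (hFc.comp (by fun_prop : Continuous fun s : ℝ => (x, s))).aestronglyMeasurable
  · exact (hFc.comp (by fun_prop : Continuous fun s : ℝ => (p, s))).intervalIntegrable _ _
  · exact (hc.comp (by fun_prop : Continuous fun s : ℝ => (p, s))).aestronglyMeasurable
  · refine Filter.Eventually.of_forall fun s hs x hx => hC (x, s) ⟨hx, ?_⟩
    rw [uIoc_of_le zero_le_one] at hs
    exact Ioc_subset_Icc_self hs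
  · exact intervalIntegrable_const
  · refine Filter.Eventually.of_forall fun s _ x _ => ?_
    have h1 : HasFDerivAt F (fderiv ℝ F (x, s)) (x, s) :=
      (hF.differentiable (by norm_num)).differentiableAt.hasFDerivAt
    exact h1.comp x (hasFDerivAt_prodMk_left x s)

theorem contDiff_param_nat {E : Type} [NormedAddCommGroup E] [NormedSpace ℝ E] [ProperSpace E]
    (n : ℕ) : ∀ {G : Type} [NormedAddCommGroup G] [NormedSpace ℝ G] {F : E × ℝ → G},
      ContDiff ℝ n F → ContDiff ℝ n (fun p => ∫ s in (0:ℝ)..1, F (p, s)) := by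
  induction n with
  | zero =>
    intro G _ _ F hF
    have hc := hF.continuous
    exact contDiff_zero.2 (intervalIntegral.continuous_parametric_intervalIntegral_of_continuous'
      (f := fun p s => F (p, s)) hc 0 1)
  | succ n ih =>
    intro G _ _ F hF
    have hF1 : ContDiff ℝ 1 F := hF.of_le (by exact_mod_cast Nat.le_add_left 1 n)
    push_cast at hF ⊢
    refine contDiff_succ_iff_fderiv.2
      ⟨fun p => (hasFDerivAt_param hF1 p).differentiableAt, by simp, ?_⟩
    rw [funext fun p => (hasFDerivAt_param hF1 p).fderiv]
    exact ih (F := fun z => (fderiv ℝ F z).comp (ContinuousLinearMap.inl ℝ E ℝ))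
      ((contDiff_succ_iff_fderiv.1 hF).2.2.clm_comp contDiff_const)

theorem contDiff_param {E G : Type} [NormedAddCommGroup E] [NormedSpace ℝ E] [ProperSpace E]
    [NormedAddCommGroup G] [NormedSpace ℝ G] {F : E × ℝ → G} (hF : ContDiff ℝ ∞ F) :
    ContDiff ℝ ∞ (fun p => ∫ s in (0:ℝ)..1, F (p, s)) :=
  contDiff_infty.2 fun n => contDiff_param_nat n (contDiff_infty.1 hF n)

/-- One-parameter version, with the partial derivative given pointwise. -/
theorem hasDerivAt_param {F : ℝ × ℝ → ℝ} {F' : ℝ → ℝ} (hF : ContDiff ℝ 1 F) (t : ℝ)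
    (hF' : ∀ x, HasDerivAt (fun s => F (s, x)) (F' x) t) :
    HasDerivAt (fun t => ∫ x in (0:ℝ)..1, F (t, x)) (∫ x in (0:ℝ)..1, F' x) t := by
  have h : HasDerivAt (fun t => ∫ x in (0:ℝ)..1, F (t, x)) ((∫ s in (0:ℝ)..1,
      (fderiv ℝ F (t, s)).comp (ContinuousLinearMap.inl ℝ ℝ ℝ)) 1) t :=
    (hasFDerivAt_param hF t).hasDerivAt
  have hc : Continuous fun s : ℝ =>
      (fderiv ℝ F (t, s)).comp (ContinuousLinearMap.inl ℝ ℝ ℝ) :=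
    ((hF.continuous_fderiv (by norm_num)).comp (by fun_prop)).clm_comp continuous_const
  rw [ContinuousLinearMap.intervalIntegral_apply (hc.intervalIntegrable 0 1)] at h
  convert h using 1
  refine intervalIntegral.integral_congr fun x _ => ?_
  have h1 : HasFDerivAt F (fderiv ℝ F (t, x)) (t, x) :=
      (hF.differentiable (by norm_num)).differentiableAt.hasFDerivAt
  exact (hF' x).unique (h1.comp t (hasFDerivAt_prodMk_left t x)).hasDerivAt

/-! ### Positive extension -/

/-- The extension is `χ g + (1 - χ)` for a smooth cutoff `χ` equal to `1` on `[0,1]` and to `0`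
where `g ≤ 0`. -/
theorem exists_pos_extension {g : ℝ → ℝ} (hg : ContDiff ℝ ∞ g)
    (hpos : ∀ x ∈ Icc (0:ℝ) 1, 0 < g x) :
    ∃ w : ℝ → ℝ, ContDiff ℝ ∞ w ∧ (∀ x, 0 < w x) ∧ ∀ x ∈ Icc (0:ℝ) 1, w x = g x := by
  obtain ⟨χ, h0, h1, h01⟩ := exists_contMDiffMap_zero_one_of_isClosed (n := ⊤)
    (modelWithCornersSelf ℝ ℝ) (s := {x | g x ≤ 0}) (t := Icc (0:ℝ) 1)
    (isClosed_le hg.continuous continuous_const) isClosed_Icc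
    (Set.disjoint_left.2 fun x hx hx' => (hpos x hx').not_ge hx)
  have hχ : ContDiff ℝ ∞ χ := χ.contMDiff.contDiff
  refine ⟨fun x => χ x * g x + (1 - χ x), (hχ.mul hg).add (contDiff_const.sub hχ), ?_, ?_⟩
  · intro x
    obtain ⟨ha, hb⟩ := h01 x
    rcases le_or_gt (g x) 0 with hx | hx
    · simp [h0 (show x ∈ {x | g x ≤ 0} from hx)]
    · rcases eq_or_lt_of_le hb with h | h
      · simp [h, hx]
      · have := mul_nonneg ha hx.le
        simp only; linarith
  · intro x hx
    simp [h1 hx]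

/-! ### Inequalities for powers -/

theorem abs_sub_rpow_le {q : ℝ} (hq : 1 ≤ q) (a b : ℝ) :
    |a - b| ^ q ≤ 2 ^ (q - 1) * (|a| ^ q + |b| ^ q) := by
  have h1 : |a - b| ^ q ≤ (|a| + |b|) ^ q :=
    Real.rpow_le_rpow (abs_nonneg _) (abs_sub _ _) (by linarith)
  refine h1.trans ?_
  have := NNReal.rpow_add_le_mul_rpow_add_rpow (Real.nnabs a) (Real.nnabs b) hq
  exact_mod_cast this

/-- Jensen's inequality for `|·| ^ q` and the probability density `f` on `[0,1]`. -/
theorem abs_integral_mul_rpow_le {q : ℝ} (hq : 1 ≤ q) {f v : ℝ → ℝ}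
    (hf : Continuous f) (hv : Continuous v)
    (hf0 : ∀ x, 0 ≤ f x) (hf1 : ∫ x in (0:ℝ)..1, f x = 1) :
    |∫ x in (0:ℝ)..1, f x * v x| ^ q ≤ ∫ x in (0:ℝ)..1, f x * |v x| ^ q := by
  have hq0 : 0 < q := by linarith
  have hpow : Continuous fun x => |v x| ^ q := hv.abs.rpow_const fun _ => Or.inr hq0.le
  set m := ∫ x in (0:ℝ)..1, f x * |v x| with hm
  have hm_le : |∫ x in (0:ℝ)..1, f x * v x| ≤ m := by
    refine (intervalIntegral.abs_integral_le_integral_abs zero_le_one).trans_eq ?_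
    simp_rw [abs_mul, abs_of_nonneg (hf0 _)]
    rfl
  refine (Real.rpow_le_rpow (abs_nonneg _) hm_le hq0.le).trans ?_
  have hnn : 0 ≤ ∫ x in (0:ℝ)..1, f x * |v x| ^ q :=
    intervalIntegral.integral_nonneg zero_le_one fun x _ =>
      mul_nonneg (hf0 x) (Real.rpow_nonneg (abs_nonneg _) _)
  rcases (hm_le.trans' (abs_nonneg _)).eq_or_lt with h0 | h0
  · rwa [← h0, Real.zero_rpow hq0.ne']
  -- Integrate the tangent line inequality `u ^ q ≥ m ^ q + q m ^ (q - 1) (u - m)` at `u = |v x|`.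
  have key : ∀ x, f x * (m ^ q * (1 - q)) + m ^ q * q / m * (f x * |v x|) ≤ f x * |v x| ^ q := by
    intro x
    have hB := one_add_mul_self_le_rpow_one_add (s := |v x| / m - 1)
      (by have := div_nonneg (abs_nonneg (v x)) h0.le; linarith) hq
    rw [add_sub_cancel, Real.div_rpow (abs_nonneg _) h0.le, le_div_iff₀ (by positivity)] at hB
    calc _ = f x * ((1 + q * (|v x| / m - 1)) * m ^ q) := by ring
      _ ≤ _ := mul_le_mul_of_nonneg_left hB (hf0 x)
  have hi := intervalIntegral.integral_mono_on (μ := volume) zero_le_one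
    (Continuous.intervalIntegrable (by fun_prop) 0 1)
    ((hf.mul hpow).intervalIntegrable 0 1) fun x _ => key x
  rw [intervalIntegral.integral_add (Continuous.intervalIntegrable (by fun_prop) 0 1)
    (Continuous.intervalIntegrable (by fun_prop) 0 1), intervalIntegral.integral_mul_const,
    intervalIntegral.integral_const_mul, hf1, ← hm] at hi
  refine le_trans (le_of_eq ?_) hi
  field_simp
  ring

/-- Subtracting the mean at most doubles the `L^q`-norm with respect to the density `f`. -/
theorem integral_centred_rpow_le {q : ℝ} (hq : 1 ≤ q) {f v : ℝ → ℝ}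
    (hf : Continuous f) (hv : Continuous v)
    (hf0 : ∀ x, 0 ≤ f x) (hf1 : ∫ x in (0:ℝ)..1, f x = 1) :
    ∫ x in (0:ℝ)..1, f x * |v x - ∫ y in (0:ℝ)..1, f y * v y| ^ q
      ≤ 2 ^ q * ∫ x in (0:ℝ)..1, f x * |v x| ^ q := by
  have hq0 : 0 < q := by linarith
  have hJ := abs_integral_mul_rpow_le hq hf hv hf0 hf1
  set m := ∫ y in (0:ℝ)..1, f y * v y
  have hpow : Continuous fun x => |v x| ^ q := hv.abs.rpow_const fun _ => Or.inr hq0.le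
  have hpow' : Continuous fun x => |v x - m| ^ q :=
    (hv.sub continuous_const).abs.rpow_const fun _ => Or.inr hq0.le
  have hi := intervalIntegral.integral_mono_on (μ := volume) zero_le_one
    ((hf.mul hpow').intervalIntegrable 0 1)
    (g := fun x => 2 ^ (q - 1) * (f x * |v x| ^ q + f x * |m| ^ q))
    (Continuous.intervalIntegrable (by fun_prop) 0 1)
    fun x _ => (mul_le_mul_of_nonneg_left (abs_sub_rpow_le hq (v x) m) (hf0 x)).trans_eq (by ring)
  rw [intervalIntegral.integral_const_mul, intervalIntegral.integral_add
    (Continuous.intervalIntegrable (by fun_prop) 0 1)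
    (Continuous.intervalIntegrable (by fun_prop) 0 1), intervalIntegral.integral_mul_const, hf1,
    one_mul] at hi
  refine hi.trans ?_
  have h2 : (2:ℝ) ^ q = 2 ^ (q - 1) * 2 := by
    rw [← Real.rpow_add_one (by norm_num), sub_add_cancel]
  rw [h2, mul_assoc]
  gcongr
  linarith

/-! ### The flow of normalized densities -/

/-- The total mass on `[0,1]` of the density `H(t, ·) ^ q`. -/
noncomputable def mass (q : ℝ) (H : ℝ × ℝ → ℝ) (t : ℝ) : ℝ := ∫ y in (0:ℝ)..1, H (t, y) ^ q

/-- The probability density on `[0,1]` obtained by normalizing `H(t, ·) ^ q`; for positive `H` its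
`q`-th root is the projection of `H(t, ·)` to the unit sphere of `L^q`. -/
noncomputable def density (q : ℝ) (H : ℝ × ℝ → ℝ) (t x : ℝ) : ℝ := H (t, x) ^ q / mass q H t

/-- The path of diffeomorphisms of `[0,1]` whose space derivatives are `density q H t`. -/
noncomputable def flow (q : ℝ) (H : ℝ × ℝ → ℝ) (t x : ℝ) : ℝ := ∫ y in (0:ℝ)..x, density q H t y

section
variable {q : ℝ} {H : ℝ × ℝ → ℝ}

theorem contDiff_rpow_H (hH : ContDiff ℝ ∞ H) (hpos : ∀ z, 0 < H z) :
    ContDiff ℝ ∞ (fun z => H z ^ q) :=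
  hH.rpow_const_of_ne fun z => (hpos z).ne'

theorem mass_pos (hH : ContDiff ℝ ∞ H) (hpos : ∀ z, 0 < H z) (t : ℝ) : 0 < mass q H t :=
  intervalIntegral.intervalIntegral_pos_of_pos
    (((contDiff_rpow_H (q := q) hH hpos).continuous.comp
      (by fun_prop : Continuous fun y : ℝ => (t, y))).intervalIntegrable 0 1)
    (fun y => Real.rpow_pos_of_pos (hpos (t, y)) q) one_pos

theorem density_pos (hH : ContDiff ℝ ∞ H) (hpos : ∀ z, 0 < H z) (t x : ℝ) : 0 < density q H t x :=
  div_pos (Real.rpow_pos_of_pos (hpos (t, x)) q) (mass_pos hH hpos t)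

theorem contDiff_density (hH : ContDiff ℝ ∞ H) (hpos : ∀ z, 0 < H z) :
    ContDiff ℝ ∞ (fun z : ℝ × ℝ => density q H z.1 z.2) := by
  have hG := contDiff_rpow_H (q := q) hH hpos
  have hN : ContDiff ℝ ∞ (mass q H) := contDiff_param hG
  exact hG.div (hN.comp contDiff_fst) fun z => (mass_pos hH hpos z.1).ne'

theorem continuous_density (hH : ContDiff ℝ ∞ H) (hpos : ∀ z, 0 < H z) (t : ℝ) :
    Continuous (density q H t) :=
  (contDiff_density (q := q) hH hpos).continuous.comp (by fun_prop : Continuous fun y : ℝ => (t, y))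

theorem contDiff_flow (hH : ContDiff ℝ ∞ H) (hpos : ∀ z, 0 < H z) :
    ContDiff ℝ ∞ (fun z : ℝ × ℝ => flow q H z.1 z.2) := by
  have hF : ContDiff ℝ ∞ fun w : (ℝ × ℝ) × ℝ => density q H w.1.1 (w.1.2 * w.2) :=
    (contDiff_density (q := q) hH hpos).comp
      (by fun_prop : ContDiff ℝ ∞ fun w : (ℝ × ℝ) × ℝ => (w.1.1, w.1.2 * w.2))
  -- Rescaling to a fixed interval makes `x` an ordinary parameter, also when `x ≤ 0`.
  have h : (fun z : ℝ × ℝ => flow q H z.1 z.2) =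
      fun z => z.2 * ∫ s in (0:ℝ)..1, density q H z.1 (z.2 * s) := by
    funext z
    simp [flow]
  rw [h]
  exact contDiff_snd.mul (contDiff_param hF)

theorem flow_zero (t : ℝ) : flow q H t 0 = 0 := by simp [flow]

theorem flow_one (hH : ContDiff ℝ ∞ H) (hpos : ∀ z, 0 < H z) (t : ℝ) : flow q H t 1 = 1 := by
  simp only [flow, density, intervalIntegral.integral_div]
  exact div_self (mass_pos hH hpos t).ne'

theorem hasDerivAt_flow (hH : ContDiff ℝ ∞ H) (hpos : ∀ z, 0 < H z) (t x : ℝ) :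
    HasDerivAt (flow q H t) (density q H t x) x :=
  (continuous_density hH hpos t).integral_hasStrictDerivAt 0 x |>.hasDerivAt

theorem flow_mem (hH : ContDiff ℝ ∞ H) (hpos : ∀ z, 0 < H z) (t : ℝ) {x : ℝ}
    (hx : x ∈ Icc (0:ℝ) 1) : flow q H t x ∈ Icc (0:ℝ) 1 := by
  have hm : Monotone (flow q H t) :=
    monotone_of_deriv_nonneg (fun x => (hasDerivAt_flow hH hpos t x).differentiableAt) fun x => by
      rw [(hasDerivAt_flow hH hpos t x).deriv]
      exact (density_pos hH hpos t x).le
  exact ⟨(flow_zero t).symm.trans_le (hm hx.1), (hm hx.2).trans_eq (flow_one hH hpos t)⟩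

/-- The logarithmic derivative of the density is that of `H ^ q`, minus its mean: the mean is the
logarithmic derivative of the mass. -/
theorem hasDerivAt_density (hH : ContDiff ℝ ∞ H) (hpos : ∀ z, 0 < H z) {t : ℝ} {k : ℝ → ℝ}
    (hk : ∀ x, HasDerivAt (fun s => H (s, x)) (k x) t) (x : ℝ) :
    HasDerivAt (fun s => density q H s x) (density q H t x *
      (q * k x / H (t, x) - ∫ y in (0:ℝ)..1, density q H t y * (q * k y / H (t, y)))) t := by
  have hG : ∀ x, HasDerivAt (fun s => H (s, x) ^ q)
      (H (t, x) ^ q * (q * k x / H (t, x))) t := fun x => by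
    convert (hk x).rpow_const (p := q) (Or.inl (hpos (t, x)).ne') using 1
    rw [Real.rpow_sub_one (hpos (t, x)).ne']
    ring
  have hN : HasDerivAt (mass q H) (∫ y in (0:ℝ)..1, H (t, y) ^ q * (q * k y / H (t, y))) t :=
    hasDerivAt_param (F := fun z => H z ^ q) ((contDiff_rpow_H hH hpos).of_le (by simp)) t hG
  have hm := (mass_pos (q := q) hH hpos t).ne'
  have hI : ∫ y in (0:ℝ)..1, density q H t y * (q * k y / H (t, y)) =
      (∫ y in (0:ℝ)..1, H (t, y) ^ q * (q * k y / H (t, y))) / mass q H t := by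
    rw [← intervalIntegral.integral_div]
    exact intervalIntegral.integral_congr fun y _ => by simp only [density]; ring
  refine ((hG x).div hN hm).congr_deriv ?_
  rw [hI, density]
  field_simp

/-- The `q`-th power of the `Ẇ^{1,q}`-speed of the flow is at most `(2q) ^ q` times the ratio of
`‖k‖ ^ q` to `‖H(t, ·)‖ ^ q` in `L^q`, where `k = ∂ₜH(t, ·)`. -/
theorem speed_le (hq : 1 ≤ q) (hH : ContDiff ℝ ∞ H) (hpos : ∀ z, 0 < H z) {t : ℝ} {k : ℝ → ℝ}
    (hk : ∀ x, HasDerivAt (fun s => H (s, x)) (k x) t) (hkc : Continuous k) :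
    ∫ x in (0:ℝ)..1, deriv (flow q H t) x ^ (1 - q) *
        |deriv (fun s => deriv (flow q H s) x) t| ^ q
      ≤ (2 * q) ^ q * (∫ x in (0:ℝ)..1, |k x| ^ q) / mass q H t := by
  have hq0 : 0 < q := by linarith
  set v : ℝ → ℝ := fun x => q * k x / H (t, x) with hv
  have hHt : Continuous fun x => H (t, x) := hH.continuous.comp (by fun_prop)
  have hvc : Continuous v := (continuous_const.mul hkc).div hHt fun x => (hpos (t, x)).ne'
  calc _ = ∫ x in (0:ℝ)..1, density q H t x * |v x - ∫ y in (0:ℝ)..1, density q H t y * v y| ^ q := by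
        refine intervalIntegral.integral_congr fun x _ => ?_
        have hd := density_pos (q := q) hH hpos t x
        simp only [(hasDerivAt_flow hH hpos _ x).deriv, (hasDerivAt_density hH hpos hk x).deriv]
        rw [abs_mul, abs_of_pos hd, Real.mul_rpow hd.le (abs_nonneg _), ← mul_assoc,
          ← Real.rpow_add hd, sub_add_cancel, Real.rpow_one]
    _ ≤ 2 ^ q * ∫ x in (0:ℝ)..1, density q H t x * |v x| ^ q :=
        integral_centred_rpow_le hq (continuous_density hH hpos t) hvc (fun x => (density_pos hH hpos t x).le)
          (flow_one hH hpos t)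
    _ = 2 ^ q * ∫ x in (0:ℝ)..1, q ^ q / mass q H t * |k x| ^ q := by
        congr 1
        refine intervalIntegral.integral_congr fun x _ => ?_
        have hh := hpos (t, x)
        have := (Real.rpow_pos_of_pos hh q).ne'
        simp only [density, v]
        rw [abs_div, abs_mul, abs_of_pos hh, abs_of_pos hq0, Real.div_rpow (by positivity) hh.le,
          Real.mul_rpow hq0.le (abs_nonneg _)]
        field_simp
    _ = _ := by
        rw [intervalIntegral.integral_const_mul, Real.mul_rpow zero_le_two hq0.le]
        ring
end

/-! ### The segment from `1` to `ψ` -/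

/-- A smooth time change from `0` to `1`, increasing on `[0,1]`, with values in `[0,1]` for all real
times. -/
noncomputable def clock (t : ℝ) : ℝ := Real.sin (Real.pi / 2 * t) ^ 2

/-- The segment from the constant `1` to `ψ`, traversed according to `clock`. -/
noncomputable def affinePath (ψ : ℝ → ℝ) (z : ℝ × ℝ) : ℝ := 1 - clock z.1 + clock z.1 * ψ z.2

theorem clock_mem (t : ℝ) : clock t ∈ Icc (0:ℝ) 1 := ⟨sq_nonneg _, Real.sin_sq_le_one _⟩

theorem clock_zero : clock 0 = 0 := by simp [clock]
theorem clock_one : clock 1 = 1 := by simp [clock]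

theorem contDiff_clock : ContDiff ℝ ∞ clock :=
  (Real.contDiff_sin.comp (contDiff_const.mul contDiff_id)).pow 2

theorem deriv_clock_nonneg {t : ℝ} (ht : t ∈ Icc (0:ℝ) 1) : 0 ≤ deriv clock t := by
  have h : HasDerivAt clock (2 * Real.sin (Real.pi / 2 * t) *
      (Real.cos (Real.pi / 2 * t) * (Real.pi / 2))) t := by
    have h : HasDerivAt clock _ t := (((hasDerivAt_id t).const_mul (Real.pi / 2)).sin).pow 2
    exact h.congr_deriv (by simp)
  rw [h.deriv]
  have hp := Real.pi_pos
  have h1 : 0 ≤ Real.pi / 2 * t := mul_nonneg (by positivity) ht.1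
  have h2 : Real.pi / 2 * t ≤ Real.pi / 2 := mul_le_of_le_one_right (by positivity) ht.2
  have := Real.sin_nonneg_of_nonneg_of_le_pi h1 (by linarith)
  have := Real.cos_nonneg_of_neg_pi_div_two_le_of_le (by linarith) h2
  positivity

section
variable {q : ℝ} {ψ : ℝ → ℝ}

theorem contDiff_affinePath (hψ : ContDiff ℝ ∞ ψ) : ContDiff ℝ ∞ (affinePath ψ) := by
  have h1 : ContDiff ℝ ∞ fun z : ℝ × ℝ => clock z.1 := contDiff_clock.comp contDiff_fst
  exact (contDiff_const.sub h1).add (h1.mul (hψ.comp contDiff_snd))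

theorem affinePath_pos (hpos : ∀ x, 0 < ψ x) (z : ℝ × ℝ) : 0 < affinePath ψ z := by
  obtain ⟨h0, h1⟩ := clock_mem z.1
  have := hpos z.2
  unfold affinePath
  rcases h1.eq_or_lt with h | h
  · simpa [h]
  · have := mul_nonneg h0 this.le
    linarith

theorem hasDerivAt_affinePath (t x : ℝ) :
    HasDerivAt (fun s => affinePath ψ (s, x)) (deriv clock t * (ψ x - 1)) t := by
  have h : HasDerivAt clock (deriv clock t) t :=
    (contDiff_clock.differentiable (by simp)).differentiableAt.hasDerivAt
  exact ((h.const_sub 1).add (h.mul_const (ψ x))).congr_deriv (by ring)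

theorem le_mass_affinePath (hq : 1 ≤ q) (hψ : ContDiff ℝ ∞ ψ) (hpos : ∀ x, 0 < ψ x)
    (hone : ∫ x in (0:ℝ)..1, ψ x ^ q = 1) (t : ℝ) : (1 / 2) ^ q ≤ mass q (affinePath ψ) t := by
  have hq0 : 0 ≤ q := by linarith
  obtain ⟨h0, h1⟩ := clock_mem t
  have hS : Continuous fun x => affinePath ψ (t, x) ^ q :=
    (contDiff_rpow_H (contDiff_affinePath hψ) (affinePath_pos hpos)).continuous.comp
      (by fun_prop : Continuous fun y : ℝ => (t, y))
  have hψc : Continuous fun x => ψ x ^ q := hψ.continuous.rpow_const fun x => Or.inr hq0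
  -- The path is at least `1 / 2` when `clock t ≤ 1 / 2`, and at least `ψ / 2` otherwise.
  rcases le_total (clock t) (1 / 2) with h | h
  · have := intervalIntegral.integral_mono_on (μ := volume) zero_le_one
      (intervalIntegrable_const (c := (1 / 2 : ℝ) ^ q)) (hS.intervalIntegrable 0 1) fun x _ =>
        Real.rpow_le_rpow (by norm_num) (by
          have := mul_nonneg h0 (hpos x).le
          simp only [affinePath]; linarith) hq0
    simpa [mass] using this
  · have := intervalIntegral.integral_mono_on (μ := volume) zero_le_one
      ((hψc.const_mul ((1 / 2 : ℝ) ^ q)).intervalIntegrable 0 1) (hS.intervalIntegrable 0 1)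
      fun x _ => by
        rw [← Real.mul_rpow (by norm_num) (hpos x).le]
        refine Real.rpow_le_rpow (mul_nonneg (by norm_num) (hpos x).le) ?_ hq0
        have := mul_le_mul_of_nonneg_right h (hpos x).le
        simp only [affinePath]; linarith
    rwa [intervalIntegral.integral_const_mul, hone, mul_one] at this

theorem integral_abs_sub_one_le (hq : 1 ≤ q) (hψ : Continuous ψ) (hpos : ∀ x, 0 < ψ x)
    (hone : ∫ x in (0:ℝ)..1, ψ x ^ q = 1) : ∫ x in (0:ℝ)..1, |ψ x - 1| ^ q ≤ 2 ^ q := by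
  have hq0 : 0 ≤ q := by linarith
  have hψc : Continuous fun x => ψ x ^ q := hψ.rpow_const fun x => Or.inr hq0
  have hc : Continuous fun x => |ψ x - 1| ^ q :=
    (hψ.sub continuous_const).abs.rpow_const fun _ => Or.inr hq0
  have hi := intervalIntegral.integral_mono_on (μ := volume) zero_le_one
    (hc.intervalIntegrable 0 1) (g := fun x => 2 ^ (q - 1) * (ψ x ^ q + 1))
    (Continuous.intervalIntegrable (by fun_prop) 0 1)
    fun x _ => (abs_sub_rpow_le hq (ψ x) 1).trans_eq (by simp [abs_of_pos (hpos x)])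
  rw [intervalIntegral.integral_const_mul, intervalIntegral.integral_add
    (hψc.intervalIntegrable 0 1) intervalIntegrable_const, hone] at hi
  refine hi.trans_eq ?_
  rw [Real.rpow_sub_one (by norm_num)]
  norm_num

theorem speed_affinePath_le (hq : 1 ≤ q) (hψ : ContDiff ℝ ∞ ψ) (hpos : ∀ x, 0 < ψ x)
    (hone : ∫ x in (0:ℝ)..1, ψ x ^ q = 1) {t : ℝ} (ht : t ∈ Icc (0:ℝ) 1) :
    (∫ x in (0:ℝ)..1, deriv (flow q (affinePath ψ) t) x ^ (1 - q) *
        |deriv (fun s => deriv (flow q (affinePath ψ) s) x) t| ^ q) ^ (1 / q)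
      ≤ 8 * q * deriv clock t := by
  have hq0 : 0 < q := by linarith
  have hτ := deriv_clock_nonneg ht
  have hS := contDiff_affinePath hψ
  have hSp := affinePath_pos hpos
  have h := speed_le hq hS hSp (hasDerivAt_affinePath t)
    (continuous_const.mul (hψ.continuous.sub continuous_const))
  have hM := le_mass_affinePath hq hψ hpos hone t
  have h2 := integral_abs_sub_one_le hq hψ.continuous hpos hone
  have hk : ∫ x in (0:ℝ)..1, |deriv clock t * (ψ x - 1)| ^ q =
      deriv clock t ^ q * ∫ x in (0:ℝ)..1, |ψ x - 1| ^ q := by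
    rw [← intervalIntegral.integral_const_mul]
    refine intervalIntegral.integral_congr fun x _ => ?_
    rw [abs_mul, abs_of_nonneg hτ, Real.mul_rpow hτ (abs_nonneg _)]
  have hle : (2 * q) ^ q * (∫ x in (0:ℝ)..1, |deriv clock t * (ψ x - 1)| ^ q) /
      mass q (affinePath ψ) t ≤ (8 * q * deriv clock t) ^ q := by
    calc _ ≤ (2 * q) ^ q * (deriv clock t ^ q * 2 ^ q) / (1 / 2) ^ q := by
          rw [hk]
          gcongr
      _ = _ := by
          rw [← Real.mul_rpow hτ (by norm_num), ← Real.mul_rpow (by positivity) (by positivity),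
            ← Real.div_rpow (by positivity) (by norm_num)]
          congr 1
          ring
  refine (Real.rpow_le_rpow ?_ (h.trans hle) (by positivity)).trans_eq ?_
  · refine intervalIntegral.integral_nonneg zero_le_one fun x _ =>
      mul_nonneg (Real.rpow_nonneg ?_ _) (Real.rpow_nonneg (abs_nonneg _) _)
    rw [(hasDerivAt_flow hS hSp t x).deriv]
    exact (density_pos hS hSp t x).le
  · rw [one_div, Real.rpow_rpow_inv (by positivity) hq0.ne']

end

/-! ### The length bound -/

/-- Every smooth increasing bijection `φ` of `[0,1]` can be joined to the identity by a smooth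
path of smooth increasing bijections of `[0,1]` whose length with respect to the right-invariant
homogeneous `Ẇ^{1,q}`-metric, `∫₀¹ (∫₀¹ (∂ₓΦ)^{1−q} |∂_t∂ₓΦ|^q dx)^{1/q} dt`, is at most `8q`. -/
theorem stmt8 (q : ℝ) (hq : 1 ≤ q) (φ : ℝ → ℝ) (hφ : ContDiff ℝ ∞ φ)
    (hφ0 : φ 0 = 0) (hφ1 : φ 1 = 1) (hφ' : ∀ x ∈ Icc (0:ℝ) 1, 0 < deriv φ x) :
    ∃ Φ : ℝ → ℝ → ℝ,
      ContDiff ℝ ∞ (fun p : ℝ × ℝ => Φ p.1 p.2) ∧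
      (∀ x ∈ Icc (0:ℝ) 1, Φ 0 x = x ∧ Φ 1 x = φ x) ∧
      (∀ t ∈ Icc (0:ℝ) 1, Φ t 0 = 0 ∧ Φ t 1 = 1 ∧
        ∀ x ∈ Icc (0:ℝ) 1, Φ t x ∈ Icc (0:ℝ) 1 ∧ 0 < deriv (Φ t) x) ∧
      ∫ t in (0:ℝ)..1,
          (∫ x in (0:ℝ)..1,
            (deriv (Φ t) x) ^ (1 - q) * |deriv (fun s => deriv (Φ s) x) t| ^ q) ^ (1 / q)
        ≤ 8 * q := by
  have hq0 : 0 < q := by linarith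
  have hdφ : ContDiff ℝ ∞ (deriv φ) := (contDiff_infty_iff_deriv.1 hφ).2
  obtain ⟨w, hw, hwpos, hwφ⟩ := exists_pos_extension hdφ hφ'
  set ψ : ℝ → ℝ := fun x => w x ^ (1 / q) with hψdef
  have hψ : ContDiff ℝ ∞ ψ := hw.rpow_const_of_ne fun x => (hwpos x).ne'
  have hψpos : ∀ x, 0 < ψ x := fun x => Real.rpow_pos_of_pos (hwpos x) _
  have hψq : ∀ x, ψ x ^ q = w x := fun x => by
    simp only [hψdef, one_div]
    exact Real.rpow_inv_rpow (hwpos x).le hq0.ne'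
  have hint : ∀ x ∈ Icc (0:ℝ) 1, ∫ y in (0:ℝ)..x, ψ y ^ q = φ x := fun x hx => by
    have : ∫ y in (0:ℝ)..x, ψ y ^ q = ∫ y in (0:ℝ)..x, deriv φ y := by
      refine intervalIntegral.integral_congr fun y hy => ?_
      rw [uIcc_of_le hx.1] at hy
      simp only [hψq, hwφ y ⟨hy.1, hy.2.trans hx.2⟩]
    rw [this, intervalIntegral.integral_deriv_eq_sub
      (fun y _ => (hφ.differentiable (by simp)).differentiableAt)
      (hdφ.continuous.intervalIntegrable _ _), hφ0, sub_zero]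
  have hone : ∫ y in (0:ℝ)..1, ψ y ^ q = 1 := by rw [hint 1 (by simp), hφ1]
  have hS := contDiff_affinePath hψ
  have hSp := affinePath_pos hψpos
  refine ⟨flow q (affinePath ψ), contDiff_flow hS hSp, fun x hx => ⟨?_, ?_⟩, fun t _ =>
    ⟨flow_zero t, flow_one hS hSp t, fun x hx => ⟨flow_mem hS hSp t hx, ?_⟩⟩, ?_⟩
  · simp [flow, density, mass, affinePath, clock_zero]
  · simp [flow, density, mass, affinePath, clock_one, hone, hint x hx]
  · rw [(hasDerivAt_flow hS hSp t x).deriv]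
    exact density_pos hS hSp t x
  · have hdc : Continuous (deriv clock) := contDiff_clock.continuous_deriv (by simp)
    have hI : ∫ t in (0:ℝ)..1, 8 * q * deriv clock t = 8 * q := by
      rw [intervalIntegral.integral_const_mul, intervalIntegral.integral_deriv_eq_sub
        (fun y _ => (contDiff_clock.differentiable (by simp)).differentiableAt)
        (hdc.intervalIntegrable _ _), clock_one, clock_zero]
      ring
    refine le_trans ?_ hI.le
    -- This comparison needs only nonnegativity of the speed, not its integrability in `t`.
    rw [intervalIntegral.integral_of_le zero_le_one, intervalIntegral.integral_of_le zero_le_one]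
    refine integral_mono_of_nonneg (Filter.Eventually.of_forall fun t => ?_)
      ((intervalIntegrable_iff_integrableOn_Ioc_of_le zero_le_one).1
        ((hdc.const_mul (8 * q)).intervalIntegrable 0 1)) ?_
    · refine Real.rpow_nonneg (intervalIntegral.integral_nonneg zero_le_one fun x _ =>
        mul_nonneg (Real.rpow_nonneg ?_ _) (Real.rpow_nonneg (abs_nonneg _) _)) _
      rw [(hasDerivAt_flow hS hSp t x).deriv]
      exact (density_pos hS hSp t x).le
    · refine (ae_restrict_iff' measurableSet_Ioc).2 (Filter.Eventually.of_forall fun t ht => ?_)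
      exact speed_affinePath_le hq hψ hψpos hone (Ioc_subset_Icc_self ht)
end

section
/- Let q ∈ [1,∞), let φ₀, φ₁ be smooth increasing bijections of [0,1] (φᵢ(0)=0, φᵢ(1)=1, φᵢ' > 0), and let Φ : [0,1] × [0,1] → [0,1] be a smooth map with Φ(0,·) = φ₀, Φ(1,·) = φ₁, such that x ↦ Φ(t,x) is a smooth increasing bijection of [0,1] for each t. Then ∫₀¹ (∫₀¹ (∂_x Φ(t,x))^{1−q} |∂_t ∂_x Φ(t,x)|^q dx)^{1/q} dt ≥ q · (∫₀¹ |(φ₁'(x))^{1/q} − (φ₀'(x))^{1/q}|^q dx)^{1/q}. -/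
open MeasureTheory Set
open scoped ContDiff

/-!
The map `φ ↦ q (φ')^{1/q}` sends a path of diffeomorphisms to a path in the flat space `L^q[0,1]`,
and the integrand on the right-hand side is the `L^q`-norm of the velocity of the image path:
`∂ₜ (q (∂ₓΦ)^{1/q}) = (∂ₓΦ)^{1/q-1} ∂ₜ∂ₓΦ`, and the `q`-th power of its absolute value
is `(∂ₓΦ)^{1-q} |∂ₜ∂ₓΦ|^q` (`abs_velocity_rpow`). By the fundamental theorem of calculus the velocity
integrates to `q ((φ₁')^{1/q} - (φ₀')^{1/q})`, so the claim is Minkowski's integral inequality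
`‖∫ g(t,·) dt‖_q ≤ ∫ ‖g(t,·)‖_q dt` (`minkowski_integral`). For continuous `g` this is the triangle
inequality for the Bochner integral in `L^q`; the integral is first formed in `C([0,1])`, where
evaluation at a point commutes with integration, and then pushed to `L^q` by the continuous
inclusion.
-/

/-- The norm of a continuous function in `L^q[0,1]`, as an interval integral. The function `v`
extends `u` to `ℝ`, since interval integrals do not take functions on the subtype. -/
lemma norm_toLp_unitInterval (q : ℝ) (hq : 1 ≤ q) [Fact (1 ≤ ENNReal.ofReal q)]
    (u : C(unitInterval, ℝ)) (v : ℝ → ℝ) (huv : ∀ x : unitInterval, u x = v x) :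
    ‖ContinuousMap.toLp (E := ℝ) (ENNReal.ofReal q) (volume : Measure unitInterval) ℝ u‖
      = (∫ x in (0:ℝ)..1, |v x| ^ q) ^ (1/q) := by
  have hq0 : 0 < q := by linarith
  rw [Lp.norm_def, eLpNorm_congr_ae (ContinuousMap.coeFn_toLp _ _),
    MemLp.eLpNorm_eq_integral_rpow_norm (by simpa using hq0) ENNReal.ofReal_ne_top
      ((Lp.memLp _).ae_eq (ContinuousMap.coeFn_toLp (𝕜 := ℝ) volume u)),
    ENNReal.toReal_ofReal hq0.le, ENNReal.toReal_ofReal (by positivity), one_div]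
  congr 1
  rw [intervalIntegral.integral_of_le zero_le_one, ← integral_Icc_eq_integral_Ioc,
    ← integral_subtype_comap measurableSet_Icc]
  refine integral_congr_ae (Filter.Eventually.of_forall fun x => ?_)
  simp [huv]

/-- Minkowski's integral inequality on the unit square, for continuous functions. -/
lemma minkowski_integral (q : ℝ) (hq : 1 ≤ q) (g : ℝ → ℝ → ℝ)
    (hg : ContinuousOn (fun p : ℝ × ℝ => g p.1 p.2) (Icc 0 1 ×ˢ Icc 0 1)) :
    (∫ x in (0:ℝ)..1, |∫ t in (0:ℝ)..1, g t x| ^ q) ^ (1/q)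
      ≤ ∫ t in (0:ℝ)..1, (∫ x in (0:ℝ)..1, |g t x| ^ q) ^ (1/q) := by
  have : Fact (1 ≤ ENNReal.ofReal q) := ⟨by simpa using hq⟩
  -- Projecting `t` to `[0,1]` makes `t ↦ g(t,·)` continuous on all of `ℝ`.
  let P : ℝ → unitInterval := projIcc 0 1 zero_le_one
  have hP : Continuous P := continuous_projIcc
  have hPt : ∀ t ∈ Icc (0:ℝ) 1, (P t : ℝ) = t := fun t ht => by
    simp only [P, projIcc_of_mem zero_le_one ht]
  let H : C(ℝ × unitInterval, ℝ) := ⟨fun p => g (P p.1) p.2, by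
    refine hg.comp_continuous (f := fun p : ℝ × unitInterval => ((P p.1 : ℝ), (p.2 : ℝ)))
      (by fun_prop) fun p => ⟨(P p.1).2, p.2.2⟩⟩
  let G : C(ℝ, C(unitInterval, ℝ)) := H.curry
  have hG : ∀ t x, G t x = g (P t) x := fun t x => rfl
  let T := ContinuousMap.toLp (E := ℝ) (ENNReal.ofReal q) (volume : Measure unitInterval) ℝ
  have hGi : IntervalIntegrable G volume 0 1 := G.continuous.intervalIntegrable _ _
  have hint : ∀ x : unitInterval, (∫ t in (0:ℝ)..1, G t) x = ∫ t in (0:ℝ)..1, g t x := by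
    intro x
    have := (ContinuousMap.evalCLM ℝ x : C(unitInterval, ℝ) →L[ℝ] ℝ).intervalIntegral_comp_comm hGi
    rw [← ContinuousMap.evalCLM_apply ℝ x, ← this]
    refine intervalIntegral.integral_congr fun t ht => ?_
    rw [uIcc_of_le zero_le_one] at ht
    simp [hG, hPt t ht]
  have key := intervalIntegral.norm_integral_le_integral_norm (μ := volume)
    (f := fun t => T (G t)) (zero_le_one (α := ℝ))
  rw [T.intervalIntegral_comp_comm hGi, norm_toLp_unitInterval q hq _ (fun x => ∫ t in (0:ℝ)..1, g t x) hint] at key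
  refine key.trans_eq (intervalIntegral.integral_congr fun t ht => ?_)
  rw [uIcc_of_le zero_le_one] at ht
  exact norm_toLp_unitInterval q hq (G t) (g t) fun x => by rw [hG, hPt t ht]

lemma abs_velocity_rpow {q : ℝ} (hq : 1 ≤ q) {a : ℝ} (ha : 0 < a) (b : ℝ) :
    |a ^ (1/q - 1) * b| ^ q = a ^ (1 - q) * |b| ^ q := by
  have hq0 : q ≠ 0 := by linarith
  rw [abs_mul, abs_of_pos (Real.rpow_pos_of_pos ha _),
    Real.mul_rpow (Real.rpow_nonneg ha.le _) (abs_nonneg b), ← Real.rpow_mul ha.le]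
  congr 2
  field_simp

/-- The one-variable derivative `∂ₓΦ` is jointly smooth: it is the total derivative of `Φ` applied
to the constant vector `(0, 1)`. -/
lemma contDiff_deriv_snd {Φ : ℝ → ℝ → ℝ} (hΦ : ContDiff ℝ ∞ (fun p : ℝ × ℝ => Φ p.1 p.2)) :
    ContDiff ℝ ∞ (fun p : ℝ × ℝ => deriv (Φ p.1) p.2) := by
  have h : (fun p : ℝ × ℝ => deriv (Φ p.1) p.2)
      = fun p => fderiv ℝ (fun p : ℝ × ℝ => Φ p.1 p.2) p (0, 1) := by
    funext p
    have h1 : HasFDerivAt (fun p : ℝ × ℝ => Φ p.1 p.2) _ (p.1, p.2) :=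
      (hΦ.differentiable (by simp) p).hasFDerivAt
    exact (h1.comp_hasDerivAt p.2
      ((hasDerivAt_const p.2 p.1).prodMk (hasDerivAt_id p.2))).deriv
  rw [h]
  exact (hΦ.fderiv_right (m := ∞) (by simp)).clm_apply contDiff_const

lemma contDiff_deriv_fst {Φ : ℝ → ℝ → ℝ} (hΦ : ContDiff ℝ ∞ (fun p : ℝ × ℝ => Φ p.1 p.2)) :
    ContDiff ℝ ∞ (fun p : ℝ × ℝ => deriv (fun s => Φ s p.2) p.1) :=
  (contDiff_deriv_snd (Φ := fun x t => Φ t x) (hΦ.comp (contDiff_snd.prodMk contDiff_fst))).comp (contDiff_snd.prodMk contDiff_fst)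

/-- Lower bound for path lengths in the right-invariant homogeneous `Ẇ^{1,q}`-metric on
diffeomorphisms of the interval: any smooth path `Φ` of smooth increasing bijections of `[0,1]`
joining `φ₀` to `φ₁` has length at least
`q·(∫₀¹ |(φ₁')^{1/q} − (φ₀')^{1/q}|^q)^{1/q}`. -/
theorem stmt9 (q : ℝ) (hq : 1 ≤ q) (φ₀ φ₁ : ℝ → ℝ)
    (hφ₀ : ContDiff ℝ ∞ φ₀) (hφ₁ : ContDiff ℝ ∞ φ₁)
    (h00 : φ₀ 0 = 0) (h01 : φ₀ 1 = 1) (h10 : φ₁ 0 = 0) (h11 : φ₁ 1 = 1)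
    (h0' : ∀ x ∈ Icc (0:ℝ) 1, 0 < deriv φ₀ x) (h1' : ∀ x ∈ Icc (0:ℝ) 1, 0 < deriv φ₁ x)
    (Φ : ℝ → ℝ → ℝ) (hΦ : ContDiff ℝ ∞ (fun p : ℝ × ℝ => Φ p.1 p.2))
    (hΦ0 : ∀ x ∈ Icc (0:ℝ) 1, Φ 0 x = φ₀ x) (hΦ1 : ∀ x ∈ Icc (0:ℝ) 1, Φ 1 x = φ₁ x)
    (hΦt : ∀ t ∈ Icc (0:ℝ) 1, Φ t 0 = 0 ∧ Φ t 1 = 1 ∧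
      ∀ x ∈ Icc (0:ℝ) 1, 0 < deriv (Φ t) x) :
    q * (∫ x in (0:ℝ)..1, |(deriv φ₁ x) ^ (1/q) - (deriv φ₀ x) ^ (1/q)| ^ q) ^ (1/q)
      ≤ ∫ t in (0:ℝ)..1,
          (∫ x in (0:ℝ)..1,
            (deriv (Φ t) x) ^ (1 - q) * |deriv (fun s => deriv (Φ s) x) t| ^ q) ^ (1/q) := by
  have hq0 : 0 < q := by linarith
  have hψ := contDiff_deriv_snd hΦ
  have hψt := contDiff_deriv_fst (Φ := fun t x => deriv (Φ t) x) hψ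
  have hpos : ∀ t ∈ Icc (0:ℝ) 1, ∀ x ∈ Icc (0:ℝ) 1, 0 < deriv (Φ t) x :=
    fun t ht => (hΦt t ht).2.2
  set g : ℝ → ℝ → ℝ := fun t x =>
    (deriv (Φ t) x) ^ (1/q - 1) * deriv (fun s => deriv (Φ s) x) t with hgdef
  have hg : ContinuousOn (fun p : ℝ × ℝ => g p.1 p.2) (Icc 0 1 ×ˢ Icc 0 1) :=
    (hψ.continuous.continuousOn.rpow_const
      fun p hp => Or.inl (hpos p.1 hp.1 p.2 hp.2).ne').mul hψt.continuous.continuousOn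
  have hFTC : ∀ x ∈ Icc (0:ℝ) 1, ∫ t in (0:ℝ)..1, g t x
      = q * ((deriv (Φ 1) x) ^ (1/q) - (deriv (Φ 0) x) ^ (1/q)) := by
    intro x hx
    have hd : ∀ t ∈ uIcc (0:ℝ) 1,
        HasDerivAt (fun t => q * (deriv (Φ t) x) ^ (1/q)) (g t x) t := by
      intro t ht
      rw [uIcc_of_le zero_le_one] at ht
      have hc : ContDiff ℝ ∞ (fun s => deriv (Φ s) x) :=
        hψ.comp (contDiff_id.prodMk contDiff_const)
      have h1 : HasDerivAt (fun s => deriv (Φ s) x) _ t :=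
        (hc.differentiable (by simp) t).hasDerivAt
      have h2 := (h1.rpow_const (p := 1/q) (Or.inl (hpos t ht x hx).ne')).const_mul q
      refine h2.congr_deriv ?_
      simp only [hgdef]
      field_simp
    have hc : ContinuousOn (fun t => g t x) (uIcc (0:ℝ) 1) := by
      rw [uIcc_of_le zero_le_one]
      exact hg.comp (f := fun t : ℝ => (t, x)) (by fun_prop) fun t ht => ⟨ht, hx⟩
    rw [intervalIntegral.integral_eq_sub_of_hasDerivAt hd hc.intervalIntegrable, mul_sub]
  -- `Φ i` and `φᵢ` agree only on `[0,1]`, so their derivatives are compared in the interior.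
  have hderiv : ∀ {a b : ℝ → ℝ}, (∀ x ∈ Icc (0:ℝ) 1, a x = b x) →
      ∀ x ∈ Ioo (0:ℝ) 1, deriv a x = deriv b x := by
    intro a b hab x hx
    refine Filter.EventuallyEq.deriv_eq ?_
    filter_upwards [Icc_mem_nhds hx.1 hx.2] with y hy using hab y hy
  have hL : ∫ x in (0:ℝ)..1, |∫ t in (0:ℝ)..1, g t x| ^ q
      = q ^ q * ∫ x in (0:ℝ)..1, |(deriv φ₁ x) ^ (1/q) - (deriv φ₀ x) ^ (1/q)| ^ q := by
    rw [← intervalIntegral.integral_const_mul, intervalIntegral.integral_of_le zero_le_one,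
      intervalIntegral.integral_of_le zero_le_one, integral_Ioc_eq_integral_Ioo,
      integral_Ioc_eq_integral_Ioo]
    refine setIntegral_congr_fun measurableSet_Ioo fun x hx => ?_
    rw [hFTC x (Ioo_subset_Icc_self hx), hderiv hΦ0 x hx, hderiv hΦ1 x hx, abs_mul,
      abs_of_pos hq0, Real.mul_rpow hq0.le (abs_nonneg _)]
  have hR : ∀ t ∈ Icc (0:ℝ) 1, ∫ x in (0:ℝ)..1, |g t x| ^ q = ∫ x in (0:ℝ)..1,
      (deriv (Φ t) x) ^ (1 - q) * |deriv (fun s => deriv (Φ s) x) t| ^ q := by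
    intro t ht
    refine intervalIntegral.integral_congr fun x hx => ?_
    rw [uIcc_of_le zero_le_one] at hx
    exact abs_velocity_rpow hq (hpos t ht x hx) _
  have key := minkowski_integral q hq g hg
  rw [hL, Real.mul_rpow (by positivity)
    (intervalIntegral.integral_nonneg zero_le_one fun x _ => by positivity),
    ← Real.rpow_mul hq0.le, mul_one_div_cancel hq0.ne', Real.rpow_one] at key
  refine key.trans_eq (intervalIntegral.integral_congr fun t ht => ?_)
  rw [uIcc_of_le zero_le_one] at ht
  simp only [hR t ht]
end
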